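/- arXiv:2406.08339 — 2 statements merged into one kernel-verified Lean document; each statement's English description precedes it below -/
import Mathlib

section
/- There is a constant C > 0 such that for every ε ∈ (0,1/2) and every δ ∈ (0,1) there exists a spin field u ∈ S₀(ε) with E_{ε,δ}(u) ≤ C · min{δ², ε·δ^{3/2}·(|ln(ε/δ^{1/2})| + 1), ε·δ^{1/2}} (upper bound of the scaling law for the minimal energy, Theorem 2.2(i)/Proposition 5.1). -/
open Real Finset

noncomputable section

/-- `Kof ε` is the largest integer `K` with `K * ε < 1`. -/
def Kof (ε : ℝ) : ℤ := ⌈1 / ε⌉ - 1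

/-- Index set of the lattice `[0,1)² ∩ εℤ²`. -/
def Idx (ε : ℝ) : Finset (ℤ × ℤ) :=
  Finset.Icc 0 (Kof ε) ×ˢ Finset.Icc 0 (Kof ε)

/-- Indices `(i,j)` with `i + 2 ≤ K`. -/
def IdxH (ε : ℝ) : Finset (ℤ × ℤ) :=
  Finset.Icc 0 (Kof ε - 2) ×ˢ Finset.Icc 0 (Kof ε)

/-- Indices `(i,j)` with `j + 2 ≤ K`. -/
def IdxV (ε : ℝ) : Finset (ℤ × ℤ) :=
  Finset.Icc 0 (Kof ε) ×ˢ Finset.Icc 0 (Kof ε - 2)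

/-- Squared Euclidean norm on `ℝ × ℝ`. -/
def sqnorm (v : ℝ × ℝ) : ℝ := v.1 ^ 2 + v.2 ^ 2

/-- Euclidean scalar product on `ℝ × ℝ`. -/
def dotp (a b : ℝ × ℝ) : ℝ := a.1 * b.1 + a.2 * b.2

/-- Cross product `a × b = a₁b₂ − a₂b₁`. -/
def crossp (a b : ℝ × ℝ) : ℝ := a.1 * b.2 - a.2 * b.1

/-- sign with convention `sign 0 = -1`. -/
def sgn (x : ℝ) : ℝ := if 0 < x then 1 else -1

/-- A spin field: unit vectors on the lattice. -/
def IsSpin (ε : ℝ) (u : ℤ × ℤ → ℝ × ℝ) : Prop :=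
  ∀ p ∈ Idx ε, sqnorm (u p) = 1

/-- Spin fields with ferromagnetic Dirichlet boundary condition on the left boundary. -/
def InS0 (ε : ℝ) (u : ℤ × ℤ → ℝ × ℝ) : Prop :=
  IsSpin ε u ∧ ∀ j ∈ Finset.Icc (0 : ℤ) (Kof ε), u (0, j) = (0, 1)

/-- Horizontal part of the energy. -/
def Ehor (ε δ : ℝ) (u : ℤ × ℤ → ℝ × ℝ) : ℝ :=
  ε ^ 2 / 2 * ∑ p ∈ IdxH ε,
    sqnorm (u p - (2 * (1 - δ)) • u (p.1 + 1, p.2) + u (p.1 + 2, p.2))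

/-- Vertical part of the energy. -/
def Ever (ε δ : ℝ) (u : ℤ × ℤ → ℝ × ℝ) : ℝ :=
  ε ^ 2 / 2 * ∑ p ∈ IdxV ε,
    sqnorm (u p - (2 * (1 - δ)) • u (p.1, p.2 + 1) + u (p.1, p.2 + 2))

/-- The total energy `E_{ε,δ}`. -/
def E (ε δ : ℝ) (u : ℤ × ℤ → ℝ × ℝ) : ℝ := Ehor ε δ u + Ever ε δ u

/-- The scaling function `s(ε,δ)`. -/
def sfun (ε δ : ℝ) : ℝ :=
  min (δ ^ 2)
    (min (ε * (δ * Real.sqrt δ) * (|Real.log (ε / Real.sqrt δ)| + 1)) (ε * Real.sqrt δ))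

/-- Horizontal angular velocity of a spin field. -/
def thetaH (u : ℤ × ℤ → ℝ × ℝ) (p : ℤ × ℤ) : ℝ :=
  sgn (crossp (u p) (u (p.1 + 1, p.2))) * Real.arccos (dotp (u p) (u (p.1 + 1, p.2)))

/-- Vertical angular velocity of a spin field. -/
def thetaV (u : ℤ × ℤ → ℝ × ℝ) (p : ℤ × ℤ) : ℝ :=
  sgn (crossp (u p) (u (p.1, p.2 + 1))) * Real.arccos (dotp (u p) (u (p.1, p.2 + 1)))

/-- The function `p` of Lemma 3.1. -/
def pfun (θ₁ θ₂ : ℝ) : ℝ :=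
  if θ₁ = θ₂ then 1
  else (Real.sin θ₁ ^ 2 + Real.sin θ₂ ^ 2 - (1 - Real.cos (θ₁ + θ₂))) /
    (2 * (Real.sin (θ₂ / 2) - Real.sin (θ₁ / 2)) ^ 2)

end

/-! ### Common part -/

/-- The spin field attached to a complex-valued field. -/
def toField (w : ℤ → ℤ → ℂ) : ℤ × ℤ → ℝ × ℝ := fun p => ((w p.1 p.2).im, (w p.1 p.2).re)

lemma sqnorm_toField (a b c : ℂ) (t : ℝ) :
    sqnorm ((a.im, a.re) - t • (b.im, b.re) + (c.im, c.re)) = ‖a - (t : ℂ) * b + c‖ ^ 2 := by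
  rw [← Complex.normSq_eq_norm_sq, Complex.normSq_apply]
  simp [sqnorm]
  ring

lemma Kof_facts {ε : ℝ} (h0 : 0 < ε) (h1 : ε < 1 / 2) :
    2 ≤ Kof ε ∧ (Kof ε : ℝ) * ε < 1 ∧ ((Kof ε : ℝ) + 1) * ε ≤ 3 / 2 := by
  have hc : (Kof ε : ℝ) < 1 / ε := by
    have := Int.ceil_lt_add_one (1 / ε)
    simp only [Kof]; push_cast; linarith
  have hk : (Kof ε : ℝ) * ε < 1 := by rwa [lt_div_iff₀ h0] at hc
  refine ⟨?_, hk, by nlinarith⟩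
  have h2 : (2 : ℝ) < 1 / ε := by rw [lt_div_iff₀ h0]; linarith
  have h3 : (2 : ℤ) < ⌈1 / ε⌉ := by rw [Int.lt_ceil]; exact_mod_cast h2
  simp only [Kof]; omega

lemma E_le (ε δ : ℝ) (w : ℤ → ℤ → ℂ) (g : ℤ → ℤ → ℝ) (hg : ∀ i j, 0 ≤ g i j)
    (hH : ∀ i j, 1 ≤ i → i + 1 ≤ Kof ε → 0 ≤ j → j ≤ Kof ε →
      ‖w (i - 1) j - ((2 * (1 - δ) : ℝ) : ℂ) * w i j + w (i + 1) j‖ ^ 2 ≤ g i j)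
    (hV : ∀ i j, 0 ≤ i → i ≤ Kof ε → 1 ≤ j → j + 1 ≤ Kof ε →
      ‖w i (j - 1) - ((2 * (1 - δ) : ℝ) : ℂ) * w i j + w i (j + 1)‖ ^ 2 ≤ g i j) :
    E ε δ (toField w) ≤ ε ^ 2 * ∑ i ∈ Finset.Icc 0 (Kof ε), ∑ j ∈ Finset.Icc 0 (Kof ε), g i j := by
  set S := ∑ i ∈ Finset.Icc 0 (Kof ε), ∑ j ∈ Finset.Icc 0 (Kof ε), g i j with hS
  have hS' : S = ∑ p ∈ Finset.Icc 0 (Kof ε) ×ˢ Finset.Icc 0 (Kof ε), g p.1 p.2 := by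
    rw [hS, Finset.sum_product]
  have h1 : ∑ p ∈ IdxH ε, sqnorm (toField w p - (2 * (1 - δ)) • toField w (p.1 + 1, p.2)
      + toField w (p.1 + 2, p.2)) ≤ S := by
    rw [hS']
    calc _ ≤ ∑ p ∈ IdxH ε, g (p.1 + 1) p.2 := by
          refine Finset.sum_le_sum fun p hp => ?_
          simp only [IdxH, Finset.mem_product, Finset.mem_Icc] at hp
          have := hH (p.1 + 1) p.2 (by omega) (by omega) (by omega) (by omega)
          simp only [toField]
          rw [sqnorm_toField]
          rwa [show p.1 + 1 - 1 = p.1 by ring, show p.1 + 1 + 1 = p.1 + 2 by ring] at this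
      _ = ∑ p ∈ (IdxH ε).map ⟨fun p : ℤ × ℤ => (p.1 + 1, p.2), fun a b h => by
            simp at h; exact Prod.ext h.1 h.2⟩, g p.1 p.2 := by
          rw [Finset.sum_map]; rfl
      _ ≤ _ := by
          refine Finset.sum_le_sum_of_subset_of_nonneg ?_ (fun _ _ _ => hg _ _)
          intro p hp
          simp only [IdxH, Finset.mem_map, Finset.mem_product, Finset.mem_Icc] at hp ⊢
          obtain ⟨q, hq, rfl⟩ := hp
          change (0 ≤ q.1 + 1 ∧ q.1 + 1 ≤ Kof ε) ∧ (0 ≤ q.2 ∧ q.2 ≤ Kof ε)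
          omega
  have h2 : ∑ p ∈ IdxV ε, sqnorm (toField w p - (2 * (1 - δ)) • toField w (p.1, p.2 + 1)
      + toField w (p.1, p.2 + 2)) ≤ S := by
    rw [hS']
    calc _ ≤ ∑ p ∈ IdxV ε, g p.1 (p.2 + 1) := by
          refine Finset.sum_le_sum fun p hp => ?_
          simp only [IdxV, Finset.mem_product, Finset.mem_Icc] at hp
          have := hV p.1 (p.2 + 1) (by omega) (by omega) (by omega) (by omega)
          simp only [toField]
          rw [sqnorm_toField]
          rwa [show p.2 + 1 - 1 = p.2 by ring, show p.2 + 1 + 1 = p.2 + 2 by ring] at this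
      _ = ∑ p ∈ (IdxV ε).map ⟨fun p : ℤ × ℤ => (p.1, p.2 + 1), fun a b h => by
            simp at h; exact Prod.ext h.1 h.2⟩, g p.1 p.2 := by
          rw [Finset.sum_map]; rfl
      _ ≤ _ := by
          refine Finset.sum_le_sum_of_subset_of_nonneg ?_ (fun _ _ _ => hg _ _)
          intro p hp
          simp only [IdxV, Finset.mem_map, Finset.mem_product, Finset.mem_Icc] at hp ⊢
          obtain ⟨q, hq, rfl⟩ := hp
          change (0 ≤ q.1 ∧ q.1 ≤ Kof ε) ∧ (0 ≤ q.2 + 1 ∧ q.2 + 1 ≤ Kof ε)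
          omega
  simp only [E, Ehor, Ever]
  have := sq_nonneg ε
  nlinarith

lemma inS0_toField (ε : ℝ) (w : ℤ → ℤ → ℂ) (h1 : ∀ i j, ‖w i j‖ = 1) (h0 : ∀ j, w 0 j = 1) :
    InS0 ε (toField w) := by
  refine ⟨fun p _ => ?_, fun j _ => ?_⟩
  · have := h1 p.1 p.2
    have h2 : Complex.normSq (w p.1 p.2) = 1 := by rw [Complex.normSq_eq_norm_sq, this]; norm_num
    rw [Complex.normSq_apply] at h2
    simp only [toField, sqnorm]; linarith
  · simp [toField, h0]

lemma card_Icc_Kof {ε : ℝ} (hK : 2 ≤ Kof ε) :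
    ((Finset.Icc 0 (Kof ε)).card : ℝ) = (Kof ε : ℝ) + 1 := by
  rw [Int.card_Icc]
  have : (((Kof ε + 1 - 0).toNat : ℕ) : ℤ) = Kof ε + 1 := by omega
  exact_mod_cast this

/-- Ferromagnetic bound. -/
lemma partA {ε δ : ℝ} (h0 : 0 < ε) (h1 : ε < 1 / 2) :
    ∃ u, InS0 ε u ∧ E ε δ u ≤ 9 * δ ^ 2 := by
  refine ⟨toField fun _ _ => 1, inS0_toField _ _ (by simp) (by simp), ?_⟩
  obtain ⟨hK, hK1, hK2⟩ := Kof_facts h0 h1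
  have key : ‖(1 : ℂ) - ((2 * (1 - δ) : ℝ) : ℂ) * 1 + 1‖ ^ 2 ≤ 4 * δ ^ 2 := by
    rw [show (1 : ℂ) - ((2 * (1 - δ) : ℝ) : ℂ) * 1 + 1 = ((2 * δ : ℝ) : ℂ) by push_cast; ring,
      Complex.norm_real, Real.norm_eq_abs, sq_abs]
    apply le_of_eq; ring
  have hE := E_le ε δ (fun _ _ => 1) (fun _ _ => 4 * δ ^ 2) (fun _ _ => by positivity)
    (fun _ _ _ _ _ _ => key) (fun _ _ _ _ _ _ => key)
  refine hE.trans ?_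
  simp only [Finset.sum_const, nsmul_eq_mul]
  rw [card_Icc_Kof hK]
  have hk0 : (0 : ℝ) ≤ Kof ε := by
    have : (0 : ℤ) ≤ Kof ε := by omega
    exact_mod_cast this
  have h3 : (((Kof ε : ℝ) + 1) * ε) ^ 2 ≤ (3 / 2) ^ 2 :=
    pow_le_pow_left₀ (by positivity) hK2 2
  calc _ = (((Kof ε : ℝ) + 1) * ε) ^ 2 * (4 * δ ^ 2) := by ring
    _ ≤ (3 / 2) ^ 2 * (4 * δ ^ 2) := by gcongr
    _ = _ := by ring

/-- Facts about the optimal angle. -/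
lemma theta_facts {δ : ℝ} (h0 : 0 < δ) (h1 : δ < 1) : ∃ θ : ℝ, 0 < θ ∧ θ < 1.6 ∧
    Real.cos θ = 1 - δ ∧ δ ≤ θ ^ 2 / 2 ∧ θ ^ 2 ≤ 5 * δ := by
  refine ⟨Real.arccos (1 - δ), ?_, ?_, ?_, ?_, ?_⟩
  · rw [Real.arccos_pos]; linarith
  · have : Real.arccos (1 - δ) ≤ π / 2 := by rw [Real.arccos_le_pi_div_two]; linarith
    have := Real.pi_lt_d2; linarith
  · exact Real.cos_arccos (by linarith) (by linarith)
  · have := Real.one_sub_sq_div_two_le_cos (x := Real.arccos (1 - δ))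
    rw [Real.cos_arccos (by linarith) (by linarith)] at this
    linarith
  · have hx : Real.arccos (1 - δ) ≤ π / 2 := by rw [Real.arccos_le_pi_div_two]; linarith
    have hx0 := Real.arccos_nonneg (1 - δ)
    set x := Real.arccos (1 - δ) with hxd
    have hc : Real.cos x = 1 - δ := Real.cos_arccos (by linarith) (by linarith)
    have h2 : Real.cos x = 1 - 2 * Real.sin (x / 2) ^ 2 := by
      have := Real.cos_sq' (x / 2)
      have h3 := Real.cos_two_mul (x / 2)
      rw [show 2 * (x / 2) = x by ring] at h3
      rw [h3, this]; ring
    have h4 := Real.mul_le_sin (x := x / 2) (by linarith) (by linarith)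
    have hp := Real.pi_pos
    have h5 : x / π ≤ Real.sin (x / 2) := by
      calc x / π = 2 / π * (x / 2) := by ring
        _ ≤ _ := h4
    have h6 : (x / π) ^ 2 ≤ Real.sin (x / 2) ^ 2 := pow_le_pow_left₀ (by positivity) h5 2
    have h7 : x ^ 2 ≤ π ^ 2 * Real.sin (x / 2) ^ 2 := by
      rw [div_pow, div_le_iff₀ (by positivity)] at h6; linarith
    have h8 : π ^ 2 ≤ 10 := by have := Real.pi_lt_d2; nlinarith
    nlinarith [sq_nonneg (Real.sin (x / 2))]

/-! ### The vortex construction -/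

lemma sum_inv_sq : ∃ C : ℝ, 0 < C ∧ ∀ (S : Finset ℤ) (c : ℝ),
    ∑ j ∈ S, 1 / (1 + ((j : ℝ) - c) ^ 2) ≤ C := by
  have hs : Summable (fun k : ℤ => 1 / (1 + (k : ℝ) ^ 2)) := by
    have h1 : Summable (fun k : ℤ => 1 / (k : ℝ) ^ 2) :=
      Real.summable_one_div_int_pow.2 (by norm_num)
    have h2 : Summable (fun k : ℤ => if k = 0 then (1 : ℝ) else 0) :=
      (hasSum_ite_eq (0 : ℤ) (1 : ℝ)).summable
    refine Summable.of_nonneg_of_le (fun k => by positivity) (fun k => ?_) (h1.add h2)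
    by_cases hk : k = 0
    · simp [hk]
    · have : 0 < (k : ℝ) ^ 2 := by
        have : (k : ℝ) ≠ 0 := by exact_mod_cast hk
        positivity
      simp only [hk, if_false, add_zero]
      exact one_div_le_one_div_of_le this (by linarith)
  refine ⟨3 * ∑' k : ℤ, 1 / (1 + (k : ℝ) ^ 2) + 1, ?_, fun S c => ?_⟩
  · have : 0 ≤ ∑' k : ℤ, 1 / (1 + (k : ℝ) ^ 2) := tsum_nonneg (fun k => by positivity)
    linarith
  · have h1 : ∀ j ∈ S, 1 / (1 + ((j : ℝ) - c) ^ 2) ≤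
        3 * (1 / (1 + (((j - ⌊c⌋ : ℤ)) : ℝ) ^ 2)) := by
      intro j _
      push_cast
      have hf0 := Int.floor_le c
      have hf1 := (Int.lt_floor_add_one c).le
      rw [mul_one_div, div_le_div_iff₀ (by positivity) (by positivity)]
      set a := (j : ℝ) - c with ha
      have : (j : ℝ) - ⌊c⌋ = a + (c - ⌊c⌋) := by rw [ha]; ring
      rw [this]
      set f := c - (⌊c⌋ : ℝ) with hf
      have h0 : 0 ≤ f := by linarith
      have h1 : f ≤ 1 := by linarith
      nlinarith [sq_nonneg (a - f)]
    refine (Finset.sum_le_sum h1).trans ?_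
    rw [← Finset.mul_sum]
    have h2 : ∑ j ∈ S, 1 / (1 + (((j - ⌊c⌋ : ℤ)) : ℝ) ^ 2) =
        ∑ k ∈ S.map (Equiv.subRight ⌊c⌋).toEmbedding, 1 / (1 + (k : ℝ) ^ 2) := by
      rw [Finset.sum_map]; rfl
    rw [h2]
    have := hs.sum_le_tsum (S.map (Equiv.subRight ⌊c⌋).toEmbedding) (fun k _ => by positivity)
    linarith

/-- Normalisation of a complex number. -/
noncomputable def nrm (z : ℂ) : ℂ := if z = 0 then 1 else z / (‖z‖ : ℂ)

lemma norm_nrm (z : ℂ) : ‖nrm z‖ = 1 := by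
  unfold nrm
  split_ifs with h
  · simp
  · simp [h]

lemma nrm_mul (z : ℂ) : nrm z * (‖z‖ : ℂ) = z := by
  unfold nrm
  split_ifs with h
  · simp [h]
  · have : (‖z‖ : ℂ) ≠ 0 := by exact_mod_cast norm_ne_zero_iff.2 h
    field_simp

lemma nrm_of_unit {z : ℂ} (h : ‖z‖ = 1) : nrm z = z := by
  have := nrm_mul z
  rwa [h, Complex.ofReal_one, mul_one] at this

lemma nrm_sub (f g : ℂ) : ‖g‖ * ‖nrm f - nrm g‖ ≤ 2 * ‖f - g‖ := by
  have h1 : (‖g‖ : ℂ) * (nrm f - nrm g) = nrm f * ((‖g‖ - ‖f‖ : ℝ) : ℂ) + (f - g) := by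
    have hf := nrm_mul f
    have hg := nrm_mul g
    push_cast
    linear_combination hf - hg
  have h2 : ‖(‖g‖ : ℂ) * (nrm f - nrm g)‖ = ‖g‖ * ‖nrm f - nrm g‖ := by
    rw [norm_mul, Complex.norm_real, norm_norm]
  rw [← h2, h1]
  refine (norm_add_le _ _).trans ?_
  rw [norm_mul, norm_nrm, one_mul, Complex.norm_real, Real.norm_eq_abs]
  have := abs_norm_sub_norm_le g f
  rw [norm_sub_rev] at this
  linarith

lemma nrm_D2 (f0 f1 f2 : ℂ) (M D : ℝ) (h0 : ‖f0 - f1‖ ≤ M) (h2 : ‖f2 - f1‖ ≤ M)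
    (hD : ‖f0 - 2 * f1 + f2‖ ≤ D) (h1 : ‖f1‖ ≤ 1) :
    ‖f1‖ ^ 2 * ‖nrm f0 - 2 * nrm f1 + nrm f2‖ ≤ 2 * D + 5 * M ^ 2 := by
  have hM : 0 ≤ M := (norm_nonneg _).trans h0
  have hD0 : 0 ≤ D := (norm_nonneg _).trans hD
  set ρ := ‖f1‖ with hρ
  have hρ0 : 0 ≤ ρ := norm_nonneg _
  rcases hρ0.eq_or_lt with hz | hpos
  · rw [← hz]; simp; positivity
  set a := ‖f0‖ with ha
  set b := ‖f2‖ with hb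
  have e0 := nrm_mul f0
  have e1 := nrm_mul f1
  have e2 := nrm_mul f2
  rw [← ha] at e0
  rw [← hρ] at e1
  rw [← hb] at e2
  have id : (ρ : ℂ) * (nrm f0 - 2 * nrm f1 + nrm f2) =
      (f0 - 2 * f1 + f2) + (nrm f0 - nrm f1) * ((ρ - a : ℝ) : ℂ)
        + (nrm f2 - nrm f1) * ((ρ - b : ℝ) : ℂ) + nrm f1 * ((2 * ρ - a - b : ℝ) : ℂ) := by
    push_cast
    linear_combination e0 - 2 * e1 + e2
  have hra : |ρ - a| ≤ M := by
    have := abs_norm_sub_norm_le f1 f0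
    rw [norm_sub_rev] at this; linarith
  have hrb : |ρ - b| ≤ M := by
    have := abs_norm_sub_norm_le f1 f2
    rw [norm_sub_rev] at this; linarith
  have n0 : ρ * ‖nrm f0 - nrm f1‖ ≤ 2 * M := (nrm_sub f0 f1).trans (by linarith)
  have n2 : ρ * ‖nrm f2 - nrm f1‖ ≤ 2 * M := (nrm_sub f2 f1).trans (by linarith)
  -- the second difference of the moduli
  have hlow : 2 * ρ - a - b ≤ D := by
    have t1 : ‖2 * f1‖ ≤ ‖f0 - 2 * f1 + f2‖ + ‖f0‖ + ‖f2‖ := by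
      have : 2 * f1 = -(f0 - 2 * f1 + f2) + f0 + f2 := by ring
      calc ‖2 * f1‖ = ‖-(f0 - 2 * f1 + f2) + f0 + f2‖ := by rw [← this]
        _ ≤ _ := by
          refine (norm_add_le _ _).trans ?_
          refine add_le_add ((norm_add_le _ _).trans ?_) le_rfl
          rw [norm_neg]
    rw [norm_mul, Complex.norm_two] at t1
    linarith
  have hup : ρ * (a + b - 2 * ρ) ≤ ρ * D + M ^ 2 := by
    have q : a ^ 2 + b ^ 2 - 2 * ρ ^ 2 = 2 * (inner ℝ f1 (f0 - 2 * f1 + f2))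
        + ‖f0 - f1‖ ^ 2 + ‖f2 - f1‖ ^ 2 := by
      rw [ha, hb, hρ, ← Complex.normSq_eq_norm_sq, ← Complex.normSq_eq_norm_sq,
        ← Complex.normSq_eq_norm_sq, ← Complex.normSq_eq_norm_sq, ← Complex.normSq_eq_norm_sq,
        Complex.inner]
      simp [Complex.normSq_apply]
      ring
    have q2 : inner ℝ f1 (f0 - 2 * f1 + f2) ≤ ρ * D :=
      (real_inner_le_norm _ _).trans (by gcongr)
    have q3 : ‖f0 - f1‖ ^ 2 ≤ M ^ 2 := pow_le_pow_left₀ (norm_nonneg _) h0 2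
    have q4 : ‖f2 - f1‖ ^ 2 ≤ M ^ 2 := pow_le_pow_left₀ (norm_nonneg _) h2 2
    nlinarith [sq_nonneg (a - ρ), sq_nonneg (b - ρ)]
  have hmid : ρ * |2 * ρ - a - b| ≤ ρ * D + M ^ 2 := by
    rcases abs_cases (2 * ρ - a - b) with ⟨h, _⟩ | ⟨h, _⟩ <;> rw [h]
    · nlinarith [sq_nonneg M]
    · linarith
  have hn : ρ * ‖nrm f0 - 2 * nrm f1 + nrm f2‖ ≤ D + ‖nrm f0 - nrm f1‖ * M
      + ‖nrm f2 - nrm f1‖ * M + |2 * ρ - a - b| := by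
    have : ρ * ‖nrm f0 - 2 * nrm f1 + nrm f2‖ = ‖(ρ : ℂ) * (nrm f0 - 2 * nrm f1 + nrm f2)‖ := by
      rw [norm_mul, Complex.norm_real, Real.norm_eq_abs, abs_of_nonneg hρ0]
    rw [this, id]
    refine (norm_add_le _ _).trans (add_le_add ((norm_add_le _ _).trans (add_le_add
      ((norm_add_le _ _).trans (add_le_add hD ?_)) ?_)) ?_)
    · rw [norm_mul, Complex.norm_real, Real.norm_eq_abs]; gcongr
    · rw [norm_mul, Complex.norm_real, Real.norm_eq_abs]; gcongr
    · rw [norm_mul, norm_nrm, one_mul, Complex.norm_real, Real.norm_eq_abs]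
  calc ρ ^ 2 * ‖nrm f0 - 2 * nrm f1 + nrm f2‖ = ρ * (ρ * ‖nrm f0 - 2 * nrm f1 + nrm f2‖) := by ring
    _ ≤ ρ * (D + ‖nrm f0 - nrm f1‖ * M + ‖nrm f2 - nrm f1‖ * M + |2 * ρ - a - b|) := by gcongr
    _ = ρ * D + (ρ * ‖nrm f0 - nrm f1‖) * M + (ρ * ‖nrm f2 - nrm f1‖) * M
        + ρ * |2 * ρ - a - b| := by ring
    _ ≤ ρ * D + (2 * M) * M + (2 * M) * M + (ρ * D + M ^ 2) := by gcongr
    _ ≤ 2 * D + 5 * M ^ 2 := by nlinarith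


/-- The point of the unit circle with angle `t`. -/
noncomputable def ex (t : ℝ) : ℂ := Complex.exp ((t : ℂ) * Complex.I)

lemma norm_ex (t : ℝ) : ‖ex t‖ = 1 := Complex.norm_exp_ofReal_mul_I t

lemma ex_re (t : ℝ) : (ex t).re = Real.cos t := Complex.exp_ofReal_mul_I_re t

lemma ex_im (t : ℝ) : (ex t).im = Real.sin t := Complex.exp_ofReal_mul_I_im t

lemma ex_zero : ex 0 = 1 := by simp [ex]

lemma ex_add_ex (t θ : ℝ) : ex (t - θ) + ex (t + θ) = ((2 * Real.cos θ : ℝ) : ℂ) * ex t := by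
  apply Complex.ext
  · rw [Complex.add_re, Complex.re_ofReal_mul, ex_re, ex_re, ex_re, Real.cos_add, Real.cos_sub]; ring
  · rw [Complex.add_im, Complex.im_ofReal_mul, ex_im, ex_im, ex_im, Real.sin_add, Real.sin_sub]; ring

lemma ex_sub_le (s t : ℝ) : ‖ex s - ex t‖ ≤ |s - t| := by
  have h : ‖ex s - ex t‖ ^ 2 ≤ |s - t| ^ 2 := by
    rw [← Complex.normSq_eq_norm_sq, Complex.normSq_apply, sq_abs]
    simp only [Complex.sub_re, Complex.sub_im, ex_re, ex_im]
    have h1 := Real.one_sub_sq_div_two_le_cos (x := s - t)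
    rw [Real.cos_sub] at h1
    nlinarith [Real.sin_sq_add_cos_sq s, Real.sin_sq_add_cos_sq t]
  exact le_of_sq_le_sq h (abs_nonneg _)

lemma ex_D2 (t θ : ℝ) : ‖ex (t - θ) - 2 * ex t + ex (t + θ)‖ ≤ θ ^ 2 := by
  have : ex (t - θ) - 2 * ex t + ex (t + θ) = ((2 * Real.cos θ - 2 : ℝ) : ℂ) * ex t := by
    have := ex_add_ex t θ
    push_cast at this ⊢
    linear_combination this
  rw [this, norm_mul, norm_ex, mul_one, Complex.norm_real, Real.norm_eq_abs, abs_le]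
  have h1 := Real.one_sub_sq_div_two_le_cos (x := θ)
  have h2 := Real.cos_le_one θ
  constructor <;> nlinarith [sq_nonneg θ]

/-- interpolation parameter -/
noncomputable def av (N : ℕ) (i : ℤ) : ℝ := min 1 ((i : ℝ) / N)

/-- unnormalised vortex field -/
noncomputable def fv (θ : ℝ) (N : ℕ) (i j : ℤ) : ℂ :=
  1 + (av N i : ℂ) * (ex (θ * (i + j)) - 1)

lemma av_of_le {N : ℕ} (hN : 0 < N) {i : ℤ} (h : i ≤ N) : av N i = (i : ℝ) / N := by
  apply min_eq_right
  rw [div_le_one (by exact_mod_cast hN)]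
  exact_mod_cast h

lemma av_of_ge {N : ℕ} (hN : 0 < N) {i : ℤ} (h : (N : ℤ) ≤ i) : av N i = 1 := by
  apply min_eq_left
  rw [one_le_div (by exact_mod_cast hN)]
  exact_mod_cast h

lemma av_nonneg {N : ℕ} {i : ℤ} (h : 0 ≤ i) : 0 ≤ av N i := by
  apply le_min zero_le_one
  have : (0 : ℝ) ≤ i := by exact_mod_cast h
  positivity

lemma av_le_one {N : ℕ} {i : ℤ} : av N i ≤ 1 := min_le_left _ _

lemma fv_of_ge {θ : ℝ} {N : ℕ} (hN : 0 < N) {i j : ℤ} (h : (N : ℤ) ≤ i) :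
    fv θ N i j = ex (θ * (i + j)) := by
  simp [fv, av_of_ge hN h]

lemma fv_normSq (θ : ℝ) (N : ℕ) (i j : ℤ) : ‖fv θ N i j‖ ^ 2 =
    (1 - 2 * av N i) ^ 2 + (1 - (1 - 2 * av N i) ^ 2) * (1 + Real.cos (θ * (i + j))) / 2 := by
  rw [← Complex.normSq_eq_norm_sq, Complex.normSq_apply]
  simp only [fv, Complex.add_re, Complex.add_im, Complex.mul_re, Complex.mul_im, Complex.sub_re,
    Complex.sub_im, Complex.one_re, Complex.one_im, Complex.ofReal_re, Complex.ofReal_im, ex_re,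
    ex_im]
  have := Real.sin_sq_add_cos_sq (θ * (i + j))
  linear_combination (av N i) ^ 2 * this

lemma fv_lower (θ : ℝ) (N : ℕ) {i j : ℤ} (hi : 0 ≤ i) :
    (1 - 2 * av N i) ^ 2 / 2 + (1 + Real.cos (θ * (i + j))) / 4 ≤ ‖fv θ N i j‖ ^ 2 := by
  rw [fv_normSq]
  have h0 := av_nonneg (N := N) hi
  have h1 := av_le_one (N := N) (i := i)
  have hc0 := Real.neg_one_le_cos (θ * (i + j))
  have hc1 := Real.cos_le_one (θ * (i + j))
  set z := (1 - 2 * av N i) ^ 2 with hz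
  have hz0 : 0 ≤ z := sq_nonneg _
  have hz1 : z ≤ 1 := by rw [hz]; nlinarith
  set c := Real.cos (θ * (i + j))
  nlinarith [mul_nonneg hz0 (by linarith : 0 ≤ 1 - c), mul_nonneg (by linarith : 0 ≤ 1 - z) (by linarith : 0 ≤ 1 + c)]

lemma fv_le_one (θ : ℝ) (N : ℕ) {i j : ℤ} (hi : 0 ≤ i) : ‖fv θ N i j‖ ≤ 1 := by
  have h : ‖fv θ N i j‖ ^ 2 ≤ 1 ^ 2 := by
    rw [fv_normSq]
    have h0 := av_nonneg (N := N) hi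
    have h1 := av_le_one (N := N) (i := i)
    have hc1 := Real.cos_le_one (θ * (i + j))
    have hz1 : (1 - 2 * av N i) ^ 2 ≤ 1 := by nlinarith
    nlinarith
  exact le_of_sq_le_sq h zero_le_one

lemma fv_diffV {θ : ℝ} (hθ : 0 ≤ θ) (N : ℕ) {i : ℤ} (hi : 0 ≤ i) (j k : ℤ) (hk : |(k : ℝ) - j| = 1) :
    ‖fv θ N i k - fv θ N i j‖ ≤ 3 * θ := by
  have : fv θ N i k - fv θ N i j = (av N i : ℂ) * (ex (θ * (i + k)) - ex (θ * (i + j))) := by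
    simp only [fv]; ring
  rw [this, norm_mul, Complex.norm_real, Real.norm_eq_abs, abs_of_nonneg (av_nonneg hi)]
  have h1 := ex_sub_le (θ * (i + k)) (θ * (i + j))
  rw [show θ * ((i : ℝ) + k) - θ * (i + j) = θ * (k - j) by ring, abs_mul, hk,
    abs_of_nonneg hθ] at h1
  have := av_le_one (N := N) (i := i)
  nlinarith [av_nonneg (N := N) hi, norm_nonneg (ex (θ * (i + k)) - ex (θ * (i + j)))]

lemma av_diff {N : ℕ} (i k : ℤ) (hk : |(k : ℝ) - i| = 1) :
    |av N k - av N i| ≤ 1 / N := by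
  have := abs_min_sub_min_le_max (1 : ℝ) ((k : ℝ) / N) 1 ((i : ℝ) / N)
  refine this.trans (max_le (by simp) ?_)
  rw [← sub_div, abs_div, hk, Nat.abs_cast]

lemma fv_diffH {θ : ℝ} (hθ : 0 ≤ θ) {N : ℕ} (hN : 1 / (N : ℝ) ≤ θ) {i : ℤ} (hi : 0 ≤ i) (j k : ℤ)
    (hk : |(k : ℝ) - i| = 1) :
    ‖fv θ N k j - fv θ N i j‖ ≤ 3 * θ := by
  have : fv θ N k j - fv θ N i j = (av N i : ℂ) * (ex (θ * (k + j)) - ex (θ * (i + j)))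
      + ((av N k - av N i : ℝ) : ℂ) * (ex (θ * (k + j)) - 1) := by
    simp only [fv]; push_cast; ring
  rw [this]
  refine (norm_add_le _ _).trans ?_
  rw [norm_mul, norm_mul, Complex.norm_real, Real.norm_eq_abs, abs_of_nonneg (av_nonneg hi),
    Complex.norm_real, Real.norm_eq_abs]
  have h1 := ex_sub_le (θ * (k + j)) (θ * (i + j))
  rw [show θ * ((k : ℝ) + j) - θ * (i + j) = θ * (k - i) by ring, abs_mul, hk,
    abs_of_nonneg hθ] at h1
  have h2 := av_le_one (N := N) (i := i)
  have h3 := av_diff (N := N) i k hk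
  have h4 : ‖ex (θ * (k + j)) - 1‖ ≤ 2 := by
    refine (norm_sub_le _ _).trans ?_
    rw [norm_ex]; norm_num
  have h5 : |av N k - av N i| * ‖ex (θ * (k + j)) - 1‖ ≤ θ * 2 :=
    mul_le_mul (h3.trans hN) h4 (norm_nonneg _) hθ
  nlinarith [av_nonneg (N := N) hi, norm_nonneg (ex (θ * (k + j)) - ex (θ * (i + j)))]

lemma fv_D2V {θ : ℝ} (N : ℕ) {i : ℤ} (hi : 0 ≤ i) (j : ℤ) :
    ‖fv θ N i (j - 1) - 2 * fv θ N i j + fv θ N i (j + 1)‖ ≤ 3 * θ ^ 2 := by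
  have : fv θ N i (j - 1) - 2 * fv θ N i j + fv θ N i (j + 1) = (av N i : ℂ) *
      (ex (θ * (i + j) - θ) - 2 * ex (θ * (i + j)) + ex (θ * (i + j) + θ)) := by
    simp only [fv]
    rw [show θ * ((i : ℝ) + ((j - 1 : ℤ) : ℝ)) = θ * (i + j) - θ by push_cast; ring,
      show θ * ((i : ℝ) + ((j + 1 : ℤ) : ℝ)) = θ * (i + j) + θ by push_cast; ring]
    ring
  rw [this, norm_mul, Complex.norm_real, Real.norm_eq_abs, abs_of_nonneg (av_nonneg hi)]
  have h1 := ex_D2 (θ * (i + j)) θ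
  have := av_le_one (N := N) (i := i)
  nlinarith [av_nonneg (N := N) hi, norm_nonneg (ex (θ * (i + j) - θ) - 2 * ex (θ * (i + j))
    + ex (θ * (i + j) + θ))]

lemma fv_D2H {θ : ℝ} (hθ : 0 ≤ θ) {N : ℕ} (hN0 : 0 < N) (hN : 1 / (N : ℝ) ≤ θ) {i : ℤ} (hi : 1 ≤ i)
    (hi2 : i + 1 ≤ N) (j : ℤ) :
    ‖fv θ N (i - 1) j - 2 * fv θ N i j + fv θ N (i + 1) j‖ ≤ 3 * θ ^ 2 := by
  have ha1 := av_of_le hN0 (i := i - 1) (by omega)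
  have ha2 := av_of_le hN0 (i := i) (by omega)
  have ha3 := av_of_le hN0 (i := i + 1) (by omega)
  have e1 : av N (i - 1) = av N i - 1 / N := by rw [ha1, ha2]; push_cast; ring
  have e3 : av N (i + 1) = av N i + 1 / N := by rw [ha3, ha2]; push_cast; ring
  have : fv θ N (i - 1) j - 2 * fv θ N i j + fv θ N (i + 1) j = (av N i : ℂ) *
      (ex (θ * (i + j) - θ) - 2 * ex (θ * (i + j)) + ex (θ * (i + j) + θ))
      + ((1 / N : ℝ) : ℂ) * (ex (θ * (i + j) + θ) - ex (θ * (i + j) - θ)) := by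
    simp only [fv, e1, e3]
    rw [show θ * (((i - 1 : ℤ) : ℝ) + j) = θ * (i + j) - θ by push_cast; ring,
      show θ * (((i + 1 : ℤ) : ℝ) + j) = θ * (i + j) + θ by push_cast; ring]
    push_cast
    ring
  rw [this]
  refine (norm_add_le _ _).trans ?_
  rw [norm_mul, norm_mul, Complex.norm_real, Real.norm_eq_abs, abs_of_nonneg (av_nonneg (by omega)),
    Complex.norm_real, Real.norm_eq_abs, abs_of_nonneg (by positivity)]
  have h1 := ex_D2 (θ * (i + j)) θ
  have h2 := ex_sub_le (θ * (i + j) + θ) (θ * (i + j) - θ)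
  rw [show θ * ((i : ℝ) + j) + θ - (θ * (i + j) - θ) = 2 * θ by ring,
    abs_of_nonneg (by linarith)] at h2
  have h3 := av_le_one (N := N) (i := i)
  have h4 : 1 / (N : ℝ) * ‖ex (θ * (i + j) + θ) - ex (θ * (i + j) - θ)‖ ≤ θ * (2 * θ) :=
    mul_le_mul hN h2 (norm_nonneg _) hθ
  nlinarith [av_nonneg (N := N) (i := i) (by omega), norm_nonneg (ex (θ * (i + j) - θ) -
    2 * ex (θ * (i + j)) + ex (θ * (i + j) + θ))]

lemma energy_split (a b c : ℂ) (hb : ‖b‖ = 1) (δ : ℝ) :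
    ‖a - ((2 * (1 - δ) : ℝ) : ℂ) * b + c‖ ^ 2 ≤ 2 * ‖a - 2 * b + c‖ ^ 2 + 8 * δ ^ 2 := by
  have h : a - ((2 * (1 - δ) : ℝ) : ℂ) * b + c = (a - 2 * b + c) + ((2 * δ : ℝ) : ℂ) * b := by
    push_cast; ring
  have h1 := norm_add_le (a - 2 * b + c) (((2 * δ : ℝ) : ℂ) * b)
  rw [← h, norm_mul, hb, mul_one, Complex.norm_real, Real.norm_eq_abs] at h1
  have h2 : |2 * δ| ^ 2 = 4 * δ ^ 2 := by rw [sq_abs]; ring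
  have h3 := norm_nonneg (a - ((2 * (1 - δ) : ℝ) : ℂ) * b + c)
  nlinarith [sq_nonneg (‖a - 2 * b + c‖ - |2 * δ|)]

/-- product weight -/
noncomputable def wt1 (N : ℕ) (i : ℤ) : ℝ := 18 * (1 / (1 + ((i : ℝ) - N / 2) ^ 2))

noncomputable def wt2 (θ : ℝ) (Q : ℤ) (i j : ℤ) : ℝ :=
  ∑ q ∈ Finset.Icc (-1) Q, 20 * (1 / (1 + ((j : ℝ) - ((π + 2 * π * q) / θ - i)) ^ 2))

lemma wt1_bound {θ : ℝ} (hθ : 0 < θ) {N : ℕ} (hN0 : 0 < N) (hN : N * θ ≤ 3) {i : ℤ} (hi : i ≤ N) :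
    θ ^ 2 / (θ ^ 2 + (1 - 2 * av N i) ^ 2 / 2) ≤ wt1 N i := by
  rw [av_of_le hN0 hi, wt1, mul_one_div, div_le_div_iff₀ (by positivity) (by positivity)]
  have hNr : (0 : ℝ) < N := by exact_mod_cast hN0
  have h1 : (1 - 2 * ((i : ℝ) / N)) * N = -2 * (i - N / 2) := by field_simp; ring
  set z := 1 - 2 * ((i : ℝ) / N) with hz
  have h2 : (N * θ) ^ 2 ≤ 9 := by nlinarith [mul_pos hNr hθ]
  have h3 : θ ^ 2 * ((i : ℝ) - N / 2) ^ 2 = (N * θ) ^ 2 * z ^ 2 / 4 := by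
    have : ((i : ℝ) - N / 2) = - (z * N) / 2 := by rw [h1]; ring
    rw [this]; ring
  nlinarith [sq_nonneg z, sq_nonneg θ]

lemma wt2_bound {θ : ℝ} (hθ : 0 < θ) {Q : ℤ} {i j : ℤ} (hi : 0 ≤ i) (hj : 0 ≤ j)
    (hQ : θ * (i + j) ≤ 2 * π * Q) :
    θ ^ 2 / (θ ^ 2 + (1 + Real.cos (θ * (i + j))) / 4) ≤ wt2 θ Q i j := by
  have hp := Real.pi_pos
  have hir : (0 : ℝ) ≤ i := by exact_mod_cast hi
  have hjr : (0 : ℝ) ≤ j := by exact_mod_cast hj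
  set ψ := θ * ((i : ℝ) + j) with hψ
  have hψ0 : 0 ≤ ψ := by positivity
  set q := round ((ψ - π) / (2 * π)) with hq
  have hr := abs_sub_round ((ψ - π) / (2 * π))
  rw [← hq] at hr
  set r := ψ - π - 2 * π * q with hrr
  have hrq : (ψ - π) / (2 * π) - q = r / (2 * π) := by rw [hrr]; field_simp
  rw [hrq, abs_div, abs_of_pos (by positivity : 0 < 2 * π), div_le_iff₀ (by positivity)] at hr
  have hrpi : |r| ≤ π := by linarith
  have hr1 := (abs_le.1 hrpi).1
  have hr2 := (abs_le.1 hrpi).2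
  have hqm : q ∈ Finset.Icc (-1) Q := by
    rw [Finset.mem_Icc]
    constructor
    · by_contra hlt
      have : q ≤ -2 := by omega
      have : (q : ℝ) ≤ -2 := by exact_mod_cast this
      nlinarith
    · by_contra hlt
      have : Q + 1 ≤ q := by omega
      have : (Q : ℝ) + 1 ≤ q := by exact_mod_cast this
      nlinarith
  have hle : 20 * (1 / (1 + ((j : ℝ) - ((π + 2 * π * q) / θ - i)) ^ 2)) ≤ wt2 θ Q i j := by
    unfold wt2
    exact Finset.single_le_sum (f := fun q : ℤ => 20 * (1 / (1 + ((j : ℝ) - ((π + 2 * π * q) / θ - i)) ^ 2)))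
      (fun q _ => by positivity) hqm
  refine le_trans ?_ hle
  have hc : 1 + Real.cos ψ = 2 * Real.sin (r / 2) ^ 2 := by
    have h1 : ψ = r + π + q * (2 * π) := by rw [hrr]; ring
    rw [h1, Real.cos_add_int_mul_two_pi, Real.cos_add_pi]
    have h3 := Real.cos_two_mul (r / 2)
    rw [show 2 * (r / 2) = r by ring] at h3
    have := Real.cos_sq' (r / 2)
    rw [h3, this]; ring
  have hsin : r ^ 2 ≤ 10 * Real.sin (r / 2) ^ 2 := by
    have h5 : |r| / π ≤ |Real.sin (r / 2)| := by
      have := Real.mul_abs_le_abs_sin (x := r / 2) (by rw [abs_div, abs_two]; linarith)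
      rw [abs_div, abs_two] at this
      calc |r| / π = 2 / π * (|r| / 2) := by ring
        _ ≤ _ := this
    have h6 : (|r| / π) ^ 2 ≤ Real.sin (r / 2) ^ 2 := by
      rw [← sq_abs (Real.sin (r / 2))]
      exact pow_le_pow_left₀ (by positivity) h5 2
    rw [div_pow, div_le_iff₀ (by positivity), sq_abs] at h6
    have h8 : π ^ 2 ≤ 10 := by have := Real.pi_lt_d2; nlinarith
    nlinarith [sq_nonneg (Real.sin (r / 2))]
  have hj2 : (j : ℝ) - ((π + 2 * π * q) / θ - i) = r / θ := by
    rw [hrr, hψ]; field_simp; ring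
  rw [hj2, hc, mul_one_div, div_le_div_iff₀ (by positivity) (by positivity), div_pow]
  have : θ ^ 2 * (1 + r ^ 2 / θ ^ 2) = θ ^ 2 + r ^ 2 := by field_simp
  rw [this]
  nlinarith [sq_nonneg θ]


lemma nrm_D2_weight {θ : ℝ} (hθ : 0 < θ) (f0 f1 f2 : ℂ) (h0 : ‖f0 - f1‖ ≤ 3 * θ)
    (h2 : ‖f2 - f1‖ ≤ 3 * θ) (hD : ‖f0 - 2 * f1 + f2‖ ≤ 3 * θ ^ 2) (h1 : ‖f1‖ ≤ 1) :
    ‖nrm f0 - 2 * nrm f1 + nrm f2‖ ^ 2 ≤ 3025 * (θ ^ 2 / (θ ^ 2 + ‖f1‖ ^ 2)) ^ 2 := by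
  have k1 := nrm_D2 f0 f1 f2 _ _ h0 h2 hD h1
  have k2 : ‖nrm f0 - 2 * nrm f1 + nrm f2‖ ≤ 4 := by
    refine (norm_add_le _ _).trans ?_
    have := norm_sub_le (nrm f0) (2 * nrm f1)
    rw [norm_mul, Complex.norm_two, norm_nrm, norm_nrm] at this
    rw [norm_nrm]; linarith
  have k3 : ‖nrm f0 - 2 * nrm f1 + nrm f2‖ ≤ 55 * (θ ^ 2 / (θ ^ 2 + ‖f1‖ ^ 2)) := by
    rw [mul_div_assoc', le_div_iff₀ (by positivity)]
    nlinarith [sq_nonneg θ]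
  calc _ ≤ (55 * (θ ^ 2 / (θ ^ 2 + ‖f1‖ ^ 2))) ^ 2 := pow_le_pow_left₀ (norm_nonneg _) k3 2
    _ = _ := by ring

lemma weight_prod {θ A B R : ℝ} (hθ : 0 < θ) (hA : 0 ≤ A) (hB : 0 ≤ B) (h : A + B ≤ R) :
    (θ ^ 2 / (θ ^ 2 + R)) ^ 2 ≤ (θ ^ 2 / (θ ^ 2 + A)) * (θ ^ 2 / (θ ^ 2 + B)) := by
  rw [sq]
  have hR : 0 ≤ R := by linarith
  gcongr <;> linarith

set_option maxHeartbeats 4000000 in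
lemma partC : ∃ C : ℝ, 0 < C ∧ ∀ ε δ : ℝ, 0 < ε → ε < 1 / 2 → 0 < δ → δ < 1 → ε < Real.sqrt δ →
    ∃ u, InS0 ε u ∧ E ε δ u ≤ C * (ε * Real.sqrt δ) := by
  obtain ⟨C0, hC0, hsum⟩ := sum_inv_sq
  refine ⟨3 * (15246000 * C0 ^ 2 + 900), by positivity, fun ε δ hε hε2 hδ hδ1 hεδ => ?_⟩
  obtain ⟨θ, hθ, hθ2, hcos, hδθ, hθδ⟩ := theta_facts hδ hδ1
  obtain ⟨hK, hK1, hK2⟩ := Kof_facts hε hε2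
  set K := Kof ε with hKdef
  have hs0 : 0 < Real.sqrt δ := Real.sqrt_pos.2 hδ
  have hss : Real.sqrt δ ^ 2 = δ := Real.sq_sqrt hδ.le
  have hsθ : Real.sqrt δ ≤ θ := by
    apply le_of_sq_le_sq _ hθ.le
    nlinarith
  have hθs : θ ≤ 3 * Real.sqrt δ := by
    apply le_of_sq_le_sq _ (by positivity)
    nlinarith
  set L := θ / ε with hL
  have hL1 : 1 ≤ L := by rw [hL, one_le_div hε]; linarith
  have hεL : ε * L = θ := by rw [hL]; field_simp
  set N : ℕ := ⌈1 / θ⌉₊ with hN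
  have hN0 : 0 < N := Nat.ceil_pos.2 (by positivity)
  have hN1 : 1 / θ ≤ N := Nat.le_ceil _
  have hN2 : (N : ℝ) < 1 / θ + 1 := Nat.ceil_lt_add_one (by positivity)
  have hNr : (0 : ℝ) < N := by exact_mod_cast hN0
  have hNθ : (N : ℝ) * θ ≤ 2.6 := by
    have : (1 / θ + 1) * θ = 1 + θ := by field_simp
    nlinarith
  have hNi : 1 / (N : ℝ) ≤ θ := by
    rw [div_le_iff₀ hθ] at hN1
    rw [div_le_iff₀ hNr]; linarith
  have hKr : (2 : ℝ) ≤ K := by exact_mod_cast hK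
  have hKθ : K * θ ≤ L := by
    rw [hL, le_div_iff₀ hε]; nlinarith
  set Q : ℤ := ⌈L⌉ + 3 with hQ
  have hQ1 : L + 3 ≤ Q := by rw [hQ]; push_cast; linarith [Int.le_ceil L]
  have hQ2 : (Q : ℝ) ≤ L + 4 := by rw [hQ]; push_cast; linarith [Int.ceil_lt_add_one L]
  have hQpos : 0 ≤ Q := by
    have : (0 : ℝ) ≤ Q := by linarith
    exact_mod_cast this
  let w : ℤ → ℤ → ℂ := fun i j => nrm (fv θ N i j)
  have hw1 : ∀ i j, ‖w i j‖ = 1 := fun i j => norm_nrm _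
  have hw0 : ∀ j, w 0 j = 1 := by
    intro j
    have : fv θ N 0 j = 1 := by
      simp [fv, av_of_le hN0 (i := 0) (by omega)]
    simp only [w, this]
    exact nrm_of_unit (by simp)
  refine ⟨toField w, inS0_toField _ _ hw1 hw0, ?_⟩
  have hwt2 : ∀ i j, 0 ≤ wt2 θ Q i j := fun i j =>
    Finset.sum_nonneg fun q _ => by positivity
  have hwt1 : ∀ i, 0 ≤ wt1 N i := fun i => by unfold wt1; positivity
  let g : ℤ → ℤ → ℝ := fun i j => 6050 * (wt1 N i * wt2 θ Q i j)
    + ((if i ≤ N then 8 * δ ^ 2 else 0) + (if i = N then 288 * θ ^ 2 else 0))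
  have hg : ∀ i j, 0 ≤ g i j := by
    intro i j
    have := mul_nonneg (hwt1 i) (hwt2 i j)
    simp only [g]
    split_ifs <;> positivity
  -- inner weight bound
  have hin : ∀ i j : ℤ, 0 ≤ i → i + 1 ≤ N → 0 ≤ j → j ≤ K → ∀ f0 f2 : ℂ,
      ‖f0 - fv θ N i j‖ ≤ 3 * θ → ‖f2 - fv θ N i j‖ ≤ 3 * θ →
      ‖f0 - 2 * fv θ N i j + f2‖ ≤ 3 * θ ^ 2 →
      ‖nrm f0 - ((2 * (1 - δ) : ℝ) : ℂ) * w i j + nrm f2‖ ^ 2 ≤ g i j := by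
    intro i j hi hiN hj hjK f0 f2 h0 h2 hD
    have e1 := energy_split (nrm f0) (w i j) (nrm f2) (hw1 i j) δ
    have e2 := nrm_D2_weight hθ f0 (fv θ N i j) f2 h0 h2 hD (fv_le_one θ N hi)
    have hc0 := Real.neg_one_le_cos (θ * (i + j))
    have e3 := weight_prod hθ (by positivity : 0 ≤ (1 - 2 * av N i) ^ 2 / 2)
      (by linarith : 0 ≤ (1 + Real.cos (θ * (i + j))) / 4) (fv_lower θ N (j := j) hi)
    have hir0 : i ≤ (N : ℤ) := by omega
    have hir : (i : ℝ) ≤ N := by exact_mod_cast hir0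
    have hjr : (j : ℝ) ≤ K := by exact_mod_cast hjK
    have e4 := wt1_bound hθ hN0 (by linarith) (i := i) (by omega)
    have e5 := wt2_bound hθ (Q := Q) hi hj (by
      have : θ * (i + j) ≤ L + 3 := by nlinarith
      have hp := Real.pi_gt_three
      have hQr : (0 : ℝ) ≤ Q := by linarith
      nlinarith)
    have e6 : (θ ^ 2 / (θ ^ 2 + (1 - 2 * av N i) ^ 2 / 2)) *
        (θ ^ 2 / (θ ^ 2 + (1 + Real.cos (θ * (i + j))) / 4)) ≤ wt1 N i * wt2 θ Q i j :=
      mul_le_mul e4 e5 (by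
        have : 0 ≤ (1 + Real.cos (θ * (i + j))) / 4 := by linarith
        positivity) (hwt1 i)
    have e7 : i ≤ (N : ℤ) := by omega
    have e8 : i ≠ (N : ℤ) := by omega
    simp only [g, e7, e8, if_true, if_false, add_zero]
    have : w i j = nrm (fv θ N i j) := rfl
    rw [← this] at e2
    linarith
  -- outer region
  have hout : ∀ i j : ℤ, (N : ℤ) ≤ i → w i j = ex (θ * (i + j)) := by
    intro i j h
    simp only [w, fv_of_ge hN0 h]
    exact nrm_of_unit (norm_ex _)
  have hzero : ∀ t : ℝ, ‖ex (t - θ) - ((2 * (1 - δ) : ℝ) : ℂ) * ex t + ex (t + θ)‖ ^ 2 = 0 := by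
    intro t
    have h := ex_add_ex t θ
    rw [hcos] at h
    have : ex (t - θ) - ((2 * (1 - δ) : ℝ) : ℂ) * ex t + ex (t + θ) = 0 := by
      linear_combination h
    rw [this]; simp
  have hE := E_le ε δ w g hg ?_ ?_
  · refine hE.trans ?_
    rw [← hKdef]
    have hcard := card_Icc_Kof (ε := ε) hK
    rw [← hKdef] at hcard
    have s1 : ∑ i ∈ Finset.Icc 0 K, ∑ j ∈ Finset.Icc 0 K, wt1 N i * wt2 θ Q i j
        ≤ (18 * C0) * ((L + 6) * (20 * C0)) := by
      have t2 : ∀ i, ∑ j ∈ Finset.Icc 0 K, wt2 θ Q i j ≤ (L + 6) * (20 * C0) := by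
        intro i
        unfold wt2
        rw [Finset.sum_comm]
        calc _ ≤ ∑ q ∈ Finset.Icc (-1) Q, 20 * C0 := by
              refine Finset.sum_le_sum fun q _ => ?_
              rw [← Finset.mul_sum]
              exact mul_le_mul_of_nonneg_left (hsum _ _) (by norm_num)
          _ = ((Finset.Icc (-1) Q).card : ℝ) * (20 * C0) := by
              rw [Finset.sum_const, nsmul_eq_mul]
          _ ≤ _ := by
              have : ((Finset.Icc (-1) Q).card : ℝ) = Q + 2 := by
                rw [Int.card_Icc]
                have : (((Q + 1 - -1).toNat : ℕ) : ℤ) = Q + 2 := by omega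
                exact_mod_cast this
              rw [this]
              exact mul_le_mul_of_nonneg_right (by linarith) (by positivity)
      calc _ = ∑ i ∈ Finset.Icc 0 K, wt1 N i * ∑ j ∈ Finset.Icc 0 K, wt2 θ Q i j := by
            simp only [Finset.mul_sum]
        _ ≤ ∑ i ∈ Finset.Icc 0 K, wt1 N i * ((L + 6) * (20 * C0)) :=
            Finset.sum_le_sum fun i _ => mul_le_mul_of_nonneg_left (t2 i) (hwt1 i)
        _ = (∑ i ∈ Finset.Icc 0 K, wt1 N i) * ((L + 6) * (20 * C0)) := by rw [Finset.sum_mul]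
        _ ≤ _ := by
            have : ∑ i ∈ Finset.Icc 0 K, wt1 N i ≤ 18 * C0 := by
              unfold wt1
              rw [← Finset.mul_sum]
              exact mul_le_mul_of_nonneg_left (hsum _ _) (by norm_num)
            gcongr
    have s2 : ∑ i ∈ Finset.Icc 0 K, ((if i ≤ (N : ℤ) then 8 * δ ^ 2 else 0) +
        (if i = (N : ℤ) then 288 * θ ^ 2 else 0)) ≤ (N + 1) * (8 * δ ^ 2) + 288 * θ ^ 2 := by
      rw [Finset.sum_add_distrib]
      refine add_le_add ?_ ?_
      · rw [← Finset.sum_filter, Finset.sum_const, nsmul_eq_mul]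
        have hc : ((Finset.Icc 0 K).filter (fun i => i ≤ (N : ℤ))).card ≤ N + 1 := by
          calc _ ≤ (Finset.Icc (0 : ℤ) N).card := by
                apply Finset.card_le_card
                intro i hi
                simp only [Finset.mem_filter, Finset.mem_Icc] at hi ⊢
                omega
            _ = N + 1 := by rw [Int.card_Icc]; omega
        have : ((((Finset.Icc 0 K).filter (fun i => i ≤ (N : ℤ))).card : ℕ) : ℝ) ≤ N + 1 := by
          exact_mod_cast hc
        gcongr
      · rw [Finset.sum_ite_eq']
        split_ifs
        · exact le_rfl
        · positivity
    have s3 : ∑ i ∈ Finset.Icc 0 K, ∑ j ∈ Finset.Icc 0 K, g i j ≤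
        6050 * ((18 * C0) * ((L + 6) * (20 * C0)))
          + ((K : ℝ) + 1) * ((N + 1) * (8 * δ ^ 2) + 288 * θ ^ 2) := by
      have hr : ∀ i, ∑ j ∈ Finset.Icc 0 K, g i j =
          6050 * (∑ j ∈ Finset.Icc 0 K, wt1 N i * wt2 θ Q i j) + ((K : ℝ) + 1) *
          ((if i ≤ (N : ℤ) then 8 * δ ^ 2 else 0) + (if i = (N : ℤ) then 288 * θ ^ 2 else 0)) := by
        intro i
        simp only [g]
        rw [Finset.sum_add_distrib, ← Finset.mul_sum, Finset.sum_const, nsmul_eq_mul, hcard]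
      rw [Finset.sum_congr rfl fun i _ => hr i, Finset.sum_add_distrib, ← Finset.mul_sum,
        ← Finset.mul_sum]
      have hk1 : (0 : ℝ) ≤ K + 1 := by linarith
      exact add_le_add (mul_le_mul_of_nonneg_left s1 (by norm_num))
        (mul_le_mul_of_nonneg_left s2 hk1)
    have hd : (N + 1) * (8 * δ ^ 2) ≤ 20 * θ ^ 2 := by
      have d1 : (N + 1) * θ ^ 2 ≤ 7 * θ := by nlinarith
      have d2 : δ ^ 2 ≤ (θ ^ 2 / 2) ^ 2 := pow_le_pow_left₀ hδ.le hδθ 2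
      have d3 : (N + 1) * (8 * δ ^ 2) ≤ (N + 1) * (8 * (θ ^ 2 / 2) ^ 2) := by gcongr
      have d4 : (N + 1) * (8 * (θ ^ 2 / 2) ^ 2) = 2 * ((N + 1) * θ ^ 2) * θ ^ 2 := by ring
      have d5 : (N + 1) * θ ^ 2 ≤ 10 := by nlinarith
      nlinarith [sq_nonneg θ]
    have hfin : ε ^ 2 * (6050 * ((18 * C0) * ((L + 6) * (20 * C0)))
          + ((K : ℝ) + 1) * ((N + 1) * (8 * δ ^ 2) + 288 * θ ^ 2)) ≤
        (15246000 * C0 ^ 2 + 900) * (ε * θ) := by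
      have f1 : ε ^ 2 * (6050 * ((18 * C0) * ((L + 6) * (20 * C0)))) ≤
          15246000 * C0 ^ 2 * (ε * θ) := by
        have : L + 6 ≤ 7 * L := by linarith
        calc _ ≤ ε ^ 2 * (6050 * ((18 * C0) * ((7 * L) * (20 * C0)))) := by gcongr
          _ = 15246000 * C0 ^ 2 * (ε * (ε * L)) := by ring
          _ = _ := by rw [hεL]
      have f2 : ε ^ 2 * (((K : ℝ) + 1) * ((N + 1) * (8 * δ ^ 2) + 288 * θ ^ 2)) ≤
          900 * (ε * θ) := by
        calc _ = ε * (((K : ℝ) + 1) * ε) * ((N + 1) * (8 * δ ^ 2) + 288 * θ ^ 2) := by ring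
          _ ≤ ε * (3 / 2) * (20 * θ ^ 2 + 288 * θ ^ 2) := by gcongr
          _ = 462 * θ * (ε * θ) := by ring
          _ ≤ 900 * (ε * θ) := by
            have : 462 * θ ≤ 900 := by linarith
            gcongr
      linarith
    calc _ ≤ _ := mul_le_mul_of_nonneg_left s3 (sq_nonneg ε)
      _ ≤ _ := hfin
      _ ≤ (15246000 * C0 ^ 2 + 900) * (ε * (3 * Real.sqrt δ)) := by gcongr
      _ = _ := by ring
  · intro i j h1 hi2 hj hjK
    rcases lt_trichotomy i (N : ℤ) with h | h | h
    · exact hin i j (by omega) (by omega) hj hjK _ _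
        (fv_diffH hθ.le hNi (by omega) j _ (by push_cast; norm_num))
        (fv_diffH hθ.le hNi (by omega) j _ (by push_cast; norm_num))
        (fv_D2H hθ.le hN0 hNi h1 (by omega) j)
    · have e1 := energy_split (w (i - 1) j) (w i j) (w (i + 1) j) (hw1 i j) δ
      have hf1 : ‖fv θ N i j‖ = 1 := by rw [fv_of_ge hN0 (by omega), norm_ex]
      have e2 := nrm_sub (fv θ N (i - 1) j) (fv θ N i j)
      have e3 := nrm_sub (fv θ N (i + 1) j) (fv θ N i j)
      have e4 := fv_diffH hθ.le hNi (i := i) (by omega) j (i - 1) (by push_cast; norm_num)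
      have e5 := fv_diffH hθ.le hNi (i := i) (by omega) j (i + 1) (by push_cast; norm_num)
      rw [hf1, one_mul] at e2 e3
      have e6 : ‖w (i - 1) j - 2 * w i j + w (i + 1) j‖ ≤ 12 * θ := by
        have : w (i - 1) j - 2 * w i j + w (i + 1) j =
          (w (i - 1) j - w i j) + (w (i + 1) j - w i j) := by ring
        rw [this]
        refine (norm_add_le _ _).trans ?_
        simp only [w]
        linarith
      have e7 : ‖w (i - 1) j - 2 * w i j + w (i + 1) j‖ ^ 2 ≤ (12 * θ) ^ 2 :=
        pow_le_pow_left₀ (norm_nonneg _) e6 2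
      have := mul_nonneg (hwt1 i) (hwt2 i j)
      have e8 : i ≤ (N : ℤ) := by omega
      simp only [g, e8, if_true]
      rw [if_pos h]
      nlinarith
    · rw [hout i j (by omega), hout (i - 1) j (by omega), hout (i + 1) j (by omega)]
      have := hzero (θ * (i + j))
      rw [show θ * (((i - 1 : ℤ) : ℝ) + j) = θ * (i + j) - θ by push_cast; ring,
        show θ * (((i + 1 : ℤ) : ℝ) + j) = θ * (i + j) + θ by push_cast; ring, this]
      exact hg i j
  · intro i j h1 hi2 hj hjK
    rcases lt_or_ge i (N : ℤ) with h | h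
    · exact hin i j (by omega) (by omega) (by omega) (by omega) _ _
        (fv_diffV hθ.le N h1 j _ (by push_cast; norm_num))
        (fv_diffV hθ.le N h1 j _ (by push_cast; norm_num))
        (fv_D2V N h1 j)
    · rw [hout i j (by omega), hout i (j - 1) (by omega), hout i (j + 1) (by omega)]
      have := hzero (θ * (i + j))
      rw [show θ * ((i : ℝ) + ((j - 1 : ℤ) : ℝ)) = θ * (i + j) - θ by push_cast; ring,
        show θ * ((i : ℝ) + ((j + 1 : ℤ) : ℝ)) = θ * (i + j) + θ by push_cast; ring, this]
      exact hg i j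


noncomputable def Hh (t : ℝ) : ℝ := if |t| ≤ 1 then (t ^ 2 + 1) / 2 else |t|

lemma Hh_cases (t : ℝ) : (1 ≤ t ∧ Hh t = t) ∨ (t ≤ -1 ∧ Hh t = -t) ∨
    (-1 ≤ t ∧ t ≤ 1 ∧ Hh t = (t ^ 2 + 1) / 2) := by
  unfold Hh
  split_ifs with h
  · rw [abs_le] at h; exact Or.inr (Or.inr ⟨h.1, h.2, rfl⟩)
  · rw [not_le, lt_abs] at h
    rcases h with h | h
    · left; exact ⟨h.le, abs_of_pos (by linarith)⟩
    · right; left; exact ⟨by linarith, abs_of_neg (by linarith)⟩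

lemma Hh_of_ge {t : ℝ} (h : 1 ≤ t) : Hh t = t := by
  rcases Hh_cases t with ⟨_, e⟩ | ⟨a, e⟩ | ⟨a, b, e⟩
  · exact e
  · linarith
  · have : t = 1 := by linarith
    rw [e, this]; norm_num

lemma Hh_of_le {t : ℝ} (h : t ≤ -1) : Hh t = -t := by
  rcases Hh_cases t with ⟨_, e⟩ | ⟨a, e⟩ | ⟨a, b, e⟩
  · linarith
  · exact e
  · have : t = -1 := by linarith
    rw [e, this]; norm_num

lemma Hh_nonneg (t : ℝ) : 0 ≤ Hh t := by
  rcases Hh_cases t with ⟨_, e⟩ | ⟨a, e⟩ | ⟨a, b, e⟩ <;> rw [e]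
  · linarith
  · linarith
  · positivity

lemma Hh_neg (t : ℝ) : Hh (-t) = Hh t := by
  unfold Hh; simp

lemma Hh_le {t B : ℝ} (hB : 1 ≤ B) (h1 : t ≤ B) (h2 : -B ≤ t) : Hh t ≤ B := by
  rcases Hh_cases t with ⟨_, e⟩ | ⟨a, e⟩ | ⟨a, b, e⟩ <;> rw [e]
  · linarith
  · linarith
  · nlinarith

lemma Hh_taylor (a : ℝ) : ∃ k : ℝ, |k| ≤ 1 ∧ ∀ b, |Hh b - Hh a - k * (b - a)| ≤ (b - a) ^ 2 / 2 := by
  rcases Hh_cases a with ⟨h1, e⟩ | ⟨h1, e⟩ | ⟨h1, h2, e⟩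
  · refine ⟨1, by norm_num, fun b => ?_⟩
    rcases Hh_cases b with ⟨g1, f⟩ | ⟨g1, f⟩ | ⟨g1, g2, f⟩ <;> rw [e, f, abs_le] <;>
      constructor <;> nlinarith
  · refine ⟨-1, by norm_num, fun b => ?_⟩
    rcases Hh_cases b with ⟨g1, f⟩ | ⟨g1, f⟩ | ⟨g1, g2, f⟩ <;> rw [e, f, abs_le] <;>
      constructor <;> nlinarith
  · refine ⟨a, abs_le.2 ⟨h1, h2⟩, fun b => ?_⟩
    rcases Hh_cases b with ⟨g1, f⟩ | ⟨g1, f⟩ | ⟨g1, g2, f⟩ <;> rw [e, f, abs_le] <;>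
      constructor <;> nlinarith

lemma Hh_lip (a b : ℝ) : |Hh b - Hh a| ≤ |b - a| := by
  wlog h : a ≤ b generalizing a b
  · rw [abs_sub_comm, abs_sub_comm b]; exact this b a (by linarith)
  rw [abs_of_nonneg (by linarith : 0 ≤ b - a), abs_le]
  rcases Hh_cases a with ⟨h1, e⟩ | ⟨h1, e⟩ | ⟨h1, h2, e⟩ <;>
  rcases Hh_cases b with ⟨g1, f⟩ | ⟨g1, f⟩ | ⟨g1, g2, f⟩ <;> rw [e, f] <;>
      constructor <;> nlinarith

lemma Hh_D2 (b0 b1 b2 : ℝ) : |Hh b0 - 2 * Hh b1 + Hh b2| ≤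
    |b0 - 2 * b1 + b2| + ((b0 - b1) ^ 2 + (b2 - b1) ^ 2) / 2 := by
  obtain ⟨k, hk, h⟩ := Hh_taylor b1
  have h0 := h b0
  have h2 := h b2
  have h3 : |k * (b0 - 2 * b1 + b2)| ≤ |b0 - 2 * b1 + b2| := by
    rw [abs_mul]
    exact mul_le_of_le_one_left (abs_nonneg _) hk
  have e : Hh b0 - 2 * Hh b1 + Hh b2 = (Hh b0 - Hh b1 - k * (b0 - b1)) +
    (Hh b2 - Hh b1 - k * (b2 - b1)) + k * (b0 - 2 * b1 + b2) := by ring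
  rw [e]
  refine (abs_add_le _ _).trans ?_
  have := abs_add_le (Hh b0 - Hh b1 - k * (b0 - b1)) (Hh b2 - Hh b1 - k * (b2 - b1))
  linarith

noncomputable def ramp (A B x : ℝ) : ℝ := (x - A + Hh (x - A)) / 2 - (x - B + Hh (x - B)) / 2

lemma ramp_zero {A B x : ℝ} (hAB : A ≤ B) (h : x ≤ A - 1) : ramp A B x = 0 := by
  unfold ramp
  rw [Hh_of_le (by linarith), Hh_of_le (by linarith)]; ring

lemma ramp_mid {A B x : ℝ} (h : A + 1 ≤ x) (h2 : x ≤ B - 1) : ramp A B x = x - A := by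
  unfold ramp
  rw [Hh_of_ge (by linarith), Hh_of_le (by linarith)]; ring

lemma ramp_one {A B x : ℝ} (hAB : A ≤ B) (h : B + 1 ≤ x) : ramp A B x = B - A := by
  unfold ramp
  rw [Hh_of_ge (by linarith), Hh_of_ge (by linarith)]; ring

lemma ramp_nonneg {A B : ℝ} (x : ℝ) (hAB : A ≤ B) : 0 ≤ ramp A B x := by
  have := Hh_lip (x - A) (x - B)
  rw [show x - B - (x - A) = -(B - A) by ring, abs_neg, abs_of_nonneg (by linarith : 0 ≤ B - A),
    abs_le] at this
  unfold ramp; linarith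

lemma ramp_le {A B : ℝ} (x : ℝ) (hAB : A ≤ B) : ramp A B x ≤ B - A := by
  have := Hh_lip (x - A) (x - B)
  rw [show x - B - (x - A) = -(B - A) by ring, abs_neg, abs_of_nonneg (by linarith : 0 ≤ B - A),
    abs_le] at this
  unfold ramp; linarith

lemma ramp_lip (A B x y : ℝ) : |ramp A B y - ramp A B x| ≤ |y - x| := by
  have h1 := Hh_lip (x - A) (y - A)
  have h2 := Hh_lip (x - B) (y - B)
  rw [show y - A - (x - A) = y - x by ring] at h1
  rw [show y - B - (x - B) = y - x by ring] at h2
  rw [abs_le] at h1 h2 ⊢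
  unfold ramp
  constructor <;> linarith

lemma ramp_D2 (A B x h : ℝ) : |ramp A B (x - h) - 2 * ramp A B x + ramp A B (x + h)| ≤ h ^ 2 := by
  have h1 := Hh_D2 (x - h - A) (x - A) (x + h - A)
  have h2 := Hh_D2 (x - h - B) (x - B) (x + h - B)
  rw [show x - h - A - 2 * (x - A) + (x + h - A) = 0 by ring, abs_zero,
    show x - h - A - (x - A) = -h by ring, show x + h - A - (x - A) = h by ring, abs_le] at h1
  rw [show x - h - B - 2 * (x - B) + (x + h - B) = 0 by ring, abs_zero,
    show x - h - B - (x - B) = -h by ring, show x + h - B - (x - B) = h by ring, abs_le] at h2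
  rw [abs_le]
  unfold ramp
  constructor <;> nlinarith

lemma en_zero {θ δ : ℝ} (hcos : Real.cos θ = 1 - δ) (p0 p1 p2 τ : ℝ) (hτ : τ = 1 ∨ τ = -1)
    (h0 : p0 = p1 - τ * θ) (h2 : p2 = p1 + τ * θ) :
    ‖ex p0 - ((2 * (1 - δ) : ℝ) : ℂ) * ex p1 + ex p2‖ ^ 2 = 0 := by
  have h := ex_add_ex p1 θ
  rw [hcos] at h
  have : ex p0 - ((2 * (1 - δ) : ℝ) : ℂ) * ex p1 + ex p2 = 0 := by
    rcases hτ with rfl | rfl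
    · rw [h0, h2, one_mul]; linear_combination h
    · rw [h0, h2, neg_one_mul, sub_neg_eq_add, ← sub_eq_add_neg]; linear_combination h
  rw [this]; simp

lemma en_bound {θ δ : ℝ} (hδ : 0 < δ) (hδθ : δ ≤ θ ^ 2 / 2) (p0 p1 p2 : ℝ)
    (h0 : |p1 - p0| ≤ 16 * θ) (hD : |p0 - 2 * p1 + p2| ≤ 16 * θ ^ 2) :
    ‖ex p0 - ((2 * (1 - δ) : ℝ) : ℂ) * ex p1 + ex p2‖ ^ 2 ≤ 150000 * θ ^ 4 := by
  have e1 := energy_split (ex p0) (ex p1) (ex p2) (norm_ex _) δ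
  have e2 := ex_D2 p1 (p1 - p0)
  have e3 := ex_sub_le p2 (p1 + (p1 - p0))
  rw [show p2 - (p1 + (p1 - p0)) = p0 - 2 * p1 + p2 by ring] at e3
  rw [show p1 - (p1 - p0) = p0 by ring] at e2
  have e4 : ‖ex p0 - 2 * ex p1 + ex p2‖ ≤ 272 * θ ^ 2 := by
    have : ex p0 - 2 * ex p1 + ex p2 = (ex p0 - 2 * ex p1 + ex (p1 + (p1 - p0)))
      + (ex p2 - ex (p1 + (p1 - p0))) := by ring
    rw [this]
    refine (norm_add_le _ _).trans ?_
    have : (p1 - p0) ^ 2 ≤ (16 * θ) ^ 2 := by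
      rw [← sq_abs]; exact pow_le_pow_left₀ (abs_nonneg _) h0 2
    linarith
  have e5 := pow_le_pow_left₀ (norm_nonneg _) e4 2
  have e6 := pow_le_pow_left₀ hδ.le hδθ 2
  have : 0 ≤ θ ^ 4 := by positivity
  nlinarith

noncomputable def cc (n m : ℕ) : ℝ := 16 * 2 ^ n / 2 ^ m

lemma cc_succ (n m : ℕ) : cc n m = 2 * cc n (m + 1) := by
  unfold cc; rw [pow_succ]; field_simp

lemma cc_pos (n m : ℕ) : 0 < cc n m := by unfold cc; positivity

lemma cc_ge {n m : ℕ} (h : m ≤ n) : 16 ≤ cc n m := by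
  unfold cc
  rw [le_div_iff₀ (by positivity)]
  have : (2 : ℝ) ^ m ≤ 2 ^ n := pow_le_pow_right₀ (by norm_num) h
  linarith

lemma cc_le (n m : ℕ) : cc n m ≤ cc n 0 := by
  unfold cc
  rw [pow_zero, div_one]
  exact div_le_self (by positivity) (one_le_pow₀ (by norm_num))

noncomputable def fld (n : ℕ) (s : ℕ → ℝ) : ℕ → ℝ → ℝ
  | 0, y => y
  | m + 1, y => cc n m - Hh (fld n s m y - cc n m - s m)

noncomputable def gg (n m : ℕ) (y : ℝ) : ℝ := fld n (fun _ => 0) m y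

lemma gg_succ (n m : ℕ) (y : ℝ) : gg n (m + 1) y = cc n m - Hh (gg n m y - cc n m) := by
  simp [gg, fld]

lemma fld_le (n : ℕ) (s : ℕ → ℝ) (m : ℕ) {y : ℝ} (hy : y ≤ 2 * cc n 0) :
    fld n s m y ≤ 2 * cc n m := by
  cases m with
  | zero => exact hy
  | succ m =>
    rw [← cc_succ]
    have := Hh_nonneg (fld n s m y - cc n m - s m)
    simp only [fld]; linarith

lemma gg_nonneg {n m : ℕ} (hm : m ≤ n + 1) {y : ℝ} (h0 : 0 ≤ y) (hy : y ≤ 2 * cc n 0) :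
    0 ≤ gg n m y := by
  induction m with
  | zero => exact h0
  | succ m ih =>
    have h1 := ih (by omega)
    have h2 : gg n m y ≤ 2 * cc n m := fld_le n _ m hy
    have h3 := cc_ge (n := n) (m := m) (by omega)
    have := Hh_le (t := gg n m y - cc n m) (B := cc n m) (by linarith) (by linarith) (by linarith)
    rw [gg_succ]; linarith

lemma gg_lip (n m : ℕ) (y z : ℝ) : |gg n m z - gg n m y| ≤ |z - y| := by
  induction m with
  | zero => exact le_rfl
  | succ m ih =>
    rw [gg_succ, gg_succ]
    have := Hh_lip (gg n m y - cc n m) (gg n m z - cc n m)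
    rw [show gg n m z - cc n m - (gg n m y - cc n m) = gg n m z - gg n m y by ring] at this
    rw [show cc n m - Hh (gg n m z - cc n m) - (cc n m - Hh (gg n m y - cc n m)) =
      -(Hh (gg n m z - cc n m) - Hh (gg n m y - cc n m)) by ring, abs_neg]
    linarith

lemma gg_form (n m : ℕ) (hm : m ≤ n + 1) (y : ℝ) :
    (∃ σ : ℤ, (σ = 1 ∨ σ = -1) ∧ ∃ q : ℤ, ∀ t, |t - y| ≤ 4 → gg n m t = σ * t + 2 * cc n m * q) ∨
    (∃ q : ℤ, |y - 2 * cc n m * q| ≤ 5 ∧ ((∀ t, |t - y| ≤ 4 → gg n m t = Hh (t - 2 * cc n m * q)) ∨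
      (∀ t, |t - y| ≤ 4 → gg n m t = 2 * cc n m - Hh (t - 2 * cc n m * q)))) := by
  induction m with
  | zero =>
    left
    exact ⟨1, Or.inl rfl, 0, fun t _ => by simp [gg, fld]⟩
  | succ m ih =>
    have hc := cc_ge (n := n) (m := m) (by omega)
    rw [← cc_succ]
    simp only [gg_succ]
    set c := cc n m with hcdef
    rcases ih (by omega) with ⟨σ, hσ, q, h⟩ | ⟨q, hy, h⟩
    · have hσr : (σ : ℝ) = 1 ∨ (σ : ℝ) = -1 := by
        rcases hσ with rfl | rfl
        · left; norm_num
        · right; norm_num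
      have hst : ∀ t, |t - y| ≤ 4 → |(σ : ℝ) * t - σ * y| ≤ 4 := by
        intro t ht
        rcases hσr with e | e <;> rw [e]
        · simpa using ht
        · rw [show (-1 : ℝ) * t - -1 * y = -(t - y) by ring, abs_neg]; exact ht
      rcases le_or_gt 5 (σ * y + 2 * c * q - c) with hv | hv
      · left
        refine ⟨-σ, by omega, 2 - 2 * q, fun t ht => ?_⟩
        have := (abs_le.1 (hst t ht)).1
        rw [h t ht, Hh_of_ge (by linarith)]
        push_cast; ring
      · rcases le_or_gt (σ * y + 2 * c * q - c) (-5) with hv2 | hv2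
        · left
          refine ⟨σ, hσ, 2 * q, fun t ht => ?_⟩
          have := (abs_le.1 (hst t ht)).2
          rw [h t ht, Hh_of_le (by linarith)]
          push_cast; ring
        · right
          refine ⟨σ * (1 - 2 * q), ?_, Or.inr fun t ht => ?_⟩
          · push_cast
            rw [abs_le]
            rcases hσr with e | e <;> rw [e] at hv hv2 ⊢ <;> constructor <;> nlinarith
          · rw [h t ht]
            push_cast
            rcases hσr with e | e <;> rw [e]
            · rw [show (1 : ℝ) * t + 2 * c * q - c = t - c * (1 * (1 - 2 * q)) by ring]
            · rw [show (-1 : ℝ) * t + 2 * c * q - c = -(t - c * (-1 * (1 - 2 * q))) by ring, Hh_neg]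
    · right
      have hb : ∀ t, |t - y| ≤ 4 → Hh (t - 2 * c * q) ≤ 9 := by
        intro t ht
        rw [abs_le] at ht hy
        exact Hh_le (by norm_num) (by linarith) (by linarith)
      have e : (c : ℝ) * ((2 * q : ℤ) : ℝ) = 2 * c * q := by push_cast; ring
      refine ⟨2 * q, by rw [e]; exact hy, Or.inl fun t ht => ?_⟩
      have := hb t ht
      rw [e]
      rcases h with h | h
      · rw [h t ht, Hh_of_le (by linarith)]; ring
      · rw [h t ht, Hh_of_ge (by linarith)]; ring

lemma gg_D2 {n m : ℕ} (hm : m ≤ n + 1) (y h : ℝ) (hh : |h| ≤ 4) :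
    |gg n m (y - h) - 2 * gg n m y + gg n m (y + h)| ≤ h ^ 2 := by
  have t0 : |y - h - y| ≤ 4 := by rw [show y - h - y = -h by ring, abs_neg]; exact hh
  have t1 : |y - y| ≤ 4 := by simp
  have t2 : |y + h - y| ≤ 4 := by rw [show y + h - y = h by ring]; exact hh
  rcases gg_form n m hm y with ⟨σ, hσ, q, H⟩ | ⟨q, hy, H⟩
  · rw [H _ t0, H _ t1, H _ t2]
    ring_nf; simp; positivity
  · have D := Hh_D2 (y - h - 2 * cc n m * q) (y - 2 * cc n m * q) (y + h - 2 * cc n m * q)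
    rw [show y - h - 2 * cc n m * q - 2 * (y - 2 * cc n m * q) + (y + h - 2 * cc n m * q) = 0 by ring,
      abs_zero] at D
    rcases H with H | H <;> rw [H _ t0, H _ t1, H _ t2]
    · nlinarith
    · rw [abs_le] at D ⊢
      constructor <;> nlinarith

noncomputable def XX (n m : ℕ) : ℝ := 2 + cc n m + 14 * ((n : ℝ) - m)

lemma XX_succ (n m : ℕ) : XX n m = XX n (m + 1) + cc n (m + 1) + 14 := by
  unfold XX; rw [cc_succ]; push_cast; ring

lemma XX_lt {n m k : ℕ} (h : m < k) : XX n k + cc n k + 14 ≤ XX n m := by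
  induction k, h using Nat.le_induction with
  | base => exact (XX_succ n m).ge
  | succ k hk ih =>
    have := XX_succ n k
    have := cc_pos n k
    linarith

lemma XX_self (n : ℕ) : XX n n = 18 := by
  unfold XX cc
  have : (16 : ℝ) * 2 ^ n / 2 ^ n = 16 := by field_simp
  rw [this]; ring

noncomputable def ss (n m : ℕ) (x : ℝ) : ℝ := ramp (XX n m + 6) (XX n m + 6 + cc n m + 1) x

noncomputable def ff (n : ℕ) (x y : ℝ) : ℝ := fld n (fun m => ss n m x) (n + 1) y

lemma fld_eq_gg (n : ℕ) (s : ℕ → ℝ) (m : ℕ) (y : ℝ) (h : ∀ k < m, s k = 0) :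
    fld n s m y = gg n m y := by
  induction m with
  | zero => rfl
  | succ m ih =>
    rw [gg_succ]
    simp only [fld]
    rw [ih fun k hk => h k (by omega), h m (by omega), sub_zero]

lemma fld_tail (n : ℕ) (s : ℕ → ℝ) (m M : ℕ) (hmM : m ≤ M) {y : ℝ} (hy : y ≤ 2 * cc n 0)
    (h : ∀ k, m ≤ k → k < M → s k = cc n k + 1) :
    fld n s M y = fld n s m y - ∑ k ∈ Finset.Ico m M, (cc n k + 1) := by
  induction M, hmM using Nat.le_induction with
  | base => simp
  | succ M hM ih =>
    have h1 := fld_le n s M hy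
    rw [Finset.sum_Ico_succ_top hM]
    simp only [fld]
    rw [h M hM (by omega), Hh_of_le (by linarith), ih fun k a b => h k a (by omega)]
    ring

lemma ss_zero {n m : ℕ} {x : ℝ} (h : x ≤ XX n m + 5) : ss n m x = 0 :=
  ramp_zero (by linarith [cc_pos n m]) (by linarith)

lemma ss_one {n m : ℕ} {x : ℝ} (h : XX n m + cc n m + 8 ≤ x) : ss n m x = cc n m + 1 := by
  unfold ss
  rw [ramp_one (by linarith [cc_pos n m]) (by linarith)]; ring

lemma ff_first {n : ℕ} {x : ℝ} (hx : x ≤ 23) (y : ℝ) : ff n x y = gg n (n + 1) y := by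
  apply fld_eq_gg
  intro k hk
  apply ss_zero
  rcases Nat.lt_or_ge k n with h | h
  · have := XX_lt (n := n) h
    rw [XX_self] at this
    linarith [cc_pos n n]
  · have : k = n := by omega
    rw [this, XX_self]; linarith

lemma ff_slab {n m : ℕ} (hm : m ≤ n) : ∃ D : ℝ, ∀ x y : ℝ, XX n m - 5 ≤ x →
    x ≤ XX n m + cc n m + 19 → y ≤ 2 * cc n 0 →
    ff n x y = D - Hh (gg n m y - cc n m - ss n m x) := by
  refine ⟨cc n m - ∑ k ∈ Finset.Ico (m + 1) (n + 1), (cc n k + 1), fun x y h1 h2 hy => ?_⟩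
  unfold ff
  rw [fld_tail n _ (m + 1) (n + 1) (by omega) hy]
  · simp only [fld]
    rw [fld_eq_gg n _ m]
    · ring
    · intro k hk
      apply ss_zero
      have := XX_lt (n := n) hk
      linarith
  · intro k a b
    apply ss_one
    have := XX_lt (n := n) (m := m) (k := k) (by omega)
    linarith

noncomputable def Phi (n : ℕ) (x y : ℝ) : ℝ := ramp 1 2 x * ff n x y

lemma Phi_first {n : ℕ} {x : ℝ} (hx : x ≤ 23) (y : ℝ) : Phi n x y = ramp 1 2 x * gg n (n + 1) y := by
  unfold Phi; rw [ff_first hx]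

lemma Phi_slab {n m : ℕ} (hm : m ≤ n) : ∃ D : ℝ, ∀ x y : ℝ, XX n m - 5 ≤ x →
    x ≤ XX n m + cc n m + 19 → y ≤ 2 * cc n 0 →
    Phi n x y = D - Hh (gg n m y - cc n m - ss n m x) := by
  obtain ⟨D, h⟩ := ff_slab hm
  refine ⟨D, fun x y h1 h2 hy => ?_⟩
  have h18 : 18 ≤ XX n m := by
    rcases hm.lt_or_eq with hlt | rfl
    · have := XX_lt (n := n) hlt
      rw [XX_self] at this
      linarith [cc_pos n n]
    · exact (XX_self m).ge
  unfold Phi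
  rw [h x y h1 h2 hy, ramp_one (by norm_num) (by linarith)]
  ring

lemma gg_top_bounds (n : ℕ) {y : ℝ} (h0 : 0 ≤ y) (hy : y ≤ 2 * cc n 0) :
    0 ≤ gg n (n + 1) y ∧ gg n (n + 1) y ≤ 16 := by
  refine ⟨gg_nonneg le_rfl h0 hy, ?_⟩
  have := fld_le n (fun _ => 0) (n + 1) hy
  rw [← cc_succ] at this
  have e : cc n n = 16 := by unfold cc; field_simp
  rw [e] at this
  exact this

lemma firstH {n : ℕ} {θ x y : ℝ} (hθ : 0 < θ) (hθ2 : θ < 1.6) (hx : x ≤ 18)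
    (h0 : 0 ≤ y) (hy : y ≤ 2 * cc n 0) :
    |Phi n x y - Phi n (x - θ) y| ≤ 16 * θ ∧
    |Phi n (x - θ) y - 2 * Phi n x y + Phi n (x + θ) y| ≤ 16 * θ ^ 2 := by
  rw [Phi_first (by linarith), Phi_first (by linarith), Phi_first (by linarith)]
  obtain ⟨g0, g1⟩ := gg_top_bounds n h0 hy
  set g := gg n (n + 1) y
  have r1 := ramp_lip 1 2 (x - θ) x
  have r2 := ramp_D2 1 2 x θ
  rw [show x - (x - θ) = θ by ring, abs_of_pos hθ] at r1
  constructor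
  · rw [← sub_mul, abs_mul, abs_of_nonneg g0]
    nlinarith [abs_nonneg (ramp 1 2 x - ramp 1 2 (x - θ))]
  · rw [show ramp 1 2 (x - θ) * g - 2 * (ramp 1 2 x * g) + ramp 1 2 (x + θ) * g =
      (ramp 1 2 (x - θ) - 2 * ramp 1 2 x + ramp 1 2 (x + θ)) * g by ring, abs_mul, abs_of_nonneg g0]
    nlinarith [abs_nonneg (ramp 1 2 (x - θ) - 2 * ramp 1 2 x + ramp 1 2 (x + θ))]

lemma firstV {n : ℕ} {θ x y : ℝ} (hθ : 0 < θ) (hθ2 : θ < 1.6) (hx : x ≤ 18) :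
    |Phi n x y - Phi n x (y - θ)| ≤ 16 * θ ∧
    |Phi n x (y - θ) - 2 * Phi n x y + Phi n x (y + θ)| ≤ 16 * θ ^ 2 := by
  rw [Phi_first (by linarith), Phi_first (by linarith), Phi_first (by linarith)]
  have r0 := ramp_nonneg (A := 1) (B := 2) x (by norm_num)
  have r1 := ramp_le (A := 1) (B := 2) x (by norm_num)
  set r := ramp 1 2 x
  have g1 := gg_lip n (n + 1) (y - θ) y
  have g2 := gg_D2 (n := n) (m := n + 1) le_rfl y θ (by rw [abs_of_pos hθ]; linarith)
  rw [show y - (y - θ) = θ by ring, abs_of_pos hθ] at g1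
  constructor
  · rw [← mul_sub, abs_mul, abs_of_nonneg r0]
    nlinarith [abs_nonneg (gg n (n + 1) y - gg n (n + 1) (y - θ))]
  · rw [show r * gg n (n + 1) (y - θ) - 2 * (r * gg n (n + 1) y) + r * gg n (n + 1) (y + θ) =
      r * (gg n (n + 1) (y - θ) - 2 * gg n (n + 1) y + gg n (n + 1) (y + θ)) by ring, abs_mul,
      abs_of_nonneg r0]
    nlinarith [abs_nonneg (gg n (n + 1) (y - θ) - 2 * gg n (n + 1) y + gg n (n + 1) (y + θ))]

lemma slab_aux {θ D b0 b1 b2 : ℝ} (hθ : 0 < θ) (h0 : |b1 - b0| ≤ θ) (h2 : |b2 - b1| ≤ θ)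
    (hD : |b0 - 2 * b1 + b2| ≤ θ ^ 2) :
    |(D - Hh b1) - (D - Hh b0)| ≤ 16 * θ ∧
    |(D - Hh b0) - 2 * (D - Hh b1) + (D - Hh b2)| ≤ 16 * θ ^ 2 := by
  have k1 := Hh_lip b0 b1
  have k2 := Hh_D2 b0 b1 b2
  have e0 := pow_le_pow_left₀ (abs_nonneg _) h0 2
  have e2 := pow_le_pow_left₀ (abs_nonneg _) h2 2
  rw [sq_abs] at e0 e2
  constructor
  · rw [show (D - Hh b1) - (D - Hh b0) = -(Hh b1 - Hh b0) by ring, abs_neg]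
    linarith
  · rw [show (D - Hh b0) - 2 * (D - Hh b1) + (D - Hh b2) = -(Hh b0 - 2 * Hh b1 + Hh b2) by ring,
      abs_neg]
    nlinarith

lemma slabH {n m : ℕ} (hm : m ≤ n) {θ x y : ℝ} (hθ : 0 < θ) (hθ2 : θ < 1.6) (hx : XX n m ≤ x)
    (hx2 : x ≤ XX n m + cc n m + 14) (hy : y ≤ 2 * cc n 0) :
    |Phi n x y - Phi n (x - θ) y| ≤ 16 * θ ∧
    |Phi n (x - θ) y - 2 * Phi n x y + Phi n (x + θ) y| ≤ 16 * θ ^ 2 := by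
  obtain ⟨D, h⟩ := Phi_slab hm
  rw [h x y (by linarith) (by linarith) hy, h (x - θ) y (by linarith) (by linarith) hy,
    h (x + θ) y (by linarith) (by linarith) hy]
  have r1 := ramp_lip (XX n m + 6) (XX n m + 6 + cc n m + 1) (x - θ) x
  have r2 := ramp_lip (XX n m + 6) (XX n m + 6 + cc n m + 1) x (x + θ)
  have r3 := ramp_D2 (XX n m + 6) (XX n m + 6 + cc n m + 1) x θ
  rw [show x - (x - θ) = θ by ring, abs_of_pos hθ] at r1
  rw [show x + θ - x = θ by ring, abs_of_pos hθ] at r2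
  simp only [ss]
  rw [abs_le] at r1 r2 r3
  apply slab_aux hθ <;> rw [abs_le] <;> constructor <;> linarith

lemma slabV {n m : ℕ} (hm : m ≤ n) {θ x y : ℝ} (hθ : 0 < θ) (hθ2 : θ < 1.6) (hx : XX n m ≤ x)
    (hx2 : x ≤ XX n m + cc n m + 14) (hy : y + θ ≤ 2 * cc n 0) :
    |Phi n x y - Phi n x (y - θ)| ≤ 16 * θ ∧
    |Phi n x (y - θ) - 2 * Phi n x y + Phi n x (y + θ)| ≤ 16 * θ ^ 2 := by
  obtain ⟨D, h⟩ := Phi_slab hm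
  rw [h x y (by linarith) (by linarith) (by linarith), h x (y - θ) (by linarith) (by linarith)
    (by linarith), h x (y + θ) (by linarith) (by linarith) hy]
  have r1 := gg_lip n m (y - θ) y
  have r2 := gg_lip n m y (y + θ)
  have r3 := gg_D2 (n := n) (m := m) (by omega) y θ (by rw [abs_of_pos hθ]; linarith)
  rw [show y - (y - θ) = θ by ring, abs_of_pos hθ] at r1
  rw [show y + θ - y = θ by ring, abs_of_pos hθ] at r2
  rw [abs_le] at r1 r2 r3
  apply slab_aux hθ <;> rw [abs_le] <;> constructor <;> linarith

def Bad (n m : ℕ) (x y : ℝ) : Prop :=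
  XX n m ≤ x ∧ x ≤ XX n m + cc n m + 14 ∧ (x ≤ XX n m + 9 ∨ XX n m + cc n m + 4 ≤ x ∨
    (∃ q : ℤ, |y - 0 - 2 * cc n m * q| ≤ 5) ∨
    (∃ q : ℤ, |y - (cc n m + ss n m x) - 2 * cc n m * q| ≤ 5) ∨
    (∃ q : ℤ, |y - -(cc n m + ss n m x) - 2 * cc n m * q| ≤ 5))

/-- Good points: the phase is affine with unit slopes near the point. -/
lemma good_affine {n m : ℕ} (hm : m ≤ n) {x y : ℝ} (hx : XX n m ≤ x)
    (hx2 : x ≤ XX n m + cc n m + 14) (hB : ¬ Bad n m x y) :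
    ∃ D σ τ : ℝ, (σ = 1 ∨ σ = -1) ∧ (τ = 1 ∨ τ = -1) ∧ ∀ x' y', |x' - x| ≤ 1.6 → |y' - y| ≤ 1.6 →
      (x' = x ∨ y' = y) → y' ≤ 2 * cc n 0 → Phi n x' y' = D + σ * x' + τ * y' := by
  have hB' : XX n m + 9 < x ∧ x < XX n m + cc n m + 4 ∧ (∀ q : ℤ, 5 < |y - 0 - 2 * cc n m * q|) ∧
      (∀ q : ℤ, 5 < |y - (cc n m + ss n m x) - 2 * cc n m * q|) ∧
      (∀ q : ℤ, 5 < |y - -(cc n m + ss n m x) - 2 * cc n m * q|) := by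
    unfold Bad at hB
    push Not at hB
    exact hB hx hx2
  obtain ⟨h1, h2, h3, h4, h5⟩ := hB'
  obtain ⟨D, hD⟩ := Phi_slab hm
  have hs : ∀ x', |x' - x| ≤ 1.6 → ss n m x' = x' - (XX n m + 6) := by
    intro x' h
    rw [abs_le] at h
    exact ramp_mid (by linarith) (by linarith)
  rw [hs x (by norm_num)] at h4 h5
  rcases gg_form n m (by omega) y with ⟨σ, hσ, q, hg⟩ | ⟨q, hq, _⟩
  swap
  · have := h3 q
    rw [sub_zero] at this
    linarith
  have hv : 5 < |(σ : ℝ) * y + 2 * cc n m * q - cc n m - (x - (XX n m + 6))| := by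
    rcases hσ with rfl | rfl
    · have := h4 (-q)
      convert this using 2
      push_cast; ring
    · have := h5 q
      rw [← abs_neg] at this
      convert this using 2
      push_cast; ring
  have hσr : (σ : ℝ) = 1 ∨ (σ : ℝ) = -1 := by
    rcases hσ with rfl | rfl
    · left; norm_num
    · right; norm_num
  have hval : ∀ x' y', |x' - x| ≤ 1.6 → |y' - y| ≤ 1.6 → y' ≤ 2 * cc n 0 →
      Phi n x' y' = D - Hh (σ * y' + 2 * cc n m * q - cc n m - (x' - (XX n m + 6))) := by
    intro x' y' hx' hy' hyc
    have hxx := abs_le.1 hx'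
    rw [hD x' y' (by linarith) (by linarith) hyc, hs x' hx', hg y' (by linarith)]
  have hst : ∀ t, |t - y| ≤ 1.6 → |(σ : ℝ) * t - σ * y| ≤ 1.6 := by
    intro t ht
    rcases hσr with e | e <;> rw [e]
    · simpa using ht
    · rw [show (-1 : ℝ) * t - -1 * y = -(t - y) by ring, abs_neg]; exact ht
  rcases lt_abs.1 hv with hv | hv
  · refine ⟨D - 2 * cc n m * q + cc n m - (XX n m + 6), 1, -σ, Or.inl rfl, ?_, ?_⟩
    · rcases hσr with e | e <;> rw [e] <;> simp
    · intro x' y' hx' hy' _ hyc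
      have k1 := abs_le.1 (hst y' hy')
      have k2 := abs_le.1 hx'
      rw [hval x' y' hx' hy' hyc, Hh_of_ge (by linarith)]
      ring
  · refine ⟨D + 2 * cc n m * q - cc n m + (XX n m + 6), -1, σ, Or.inr rfl, hσr, ?_⟩
    · intro x' y' hx' hy' _ hyc
      have k1 := abs_le.1 (hst y' hy')
      have k2 := abs_le.1 hx'
      rw [hval x' y' hx' hy' hyc, Hh_of_le (by linarith)]
      ring

lemma exists_slab {n : ℕ} {x : ℝ} (h : 18 < x) (hx : x ≤ cc n 0) :
    ∃ m ≤ n, XX n m ≤ x ∧ x ≤ XX n m + cc n m + 14 := by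
  have hex : ∃ m, XX n m ≤ x := ⟨n, by rw [XX_self]; linarith⟩
  classical
  refine ⟨Nat.find hex, Nat.find_min' hex (by rw [XX_self]; linarith), Nat.find_spec hex, ?_⟩
  rcases hz : Nat.find hex with _ | k
  · have : 0 ≤ XX n 0 := by
      unfold XX; have := cc_pos n 0; push_cast; have : (0:ℝ) ≤ n := Nat.cast_nonneg n; linarith
    linarith
  · have := Nat.find_min hex (m := k) (by omega)
    rw [XX_succ] at this
    linarith

open Classical in
noncomputable def cnt (n : ℕ) (x y : ℝ) : ℝ :=
  (if x ≤ 18 then 1 else 0) + ∑ m ∈ Finset.range (n + 1), if Bad n m x y then (1 : ℝ) else 0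

lemma cnt_nonneg (n : ℕ) (x y : ℝ) : 0 ≤ cnt n x y := by
  unfold cnt
  refine add_nonneg (by split_ifs <;> norm_num) (Finset.sum_nonneg fun m _ => ?_)
  split_ifs <;> norm_num

lemma cnt_one_first {n : ℕ} {x y : ℝ} (h : x ≤ 18) : 1 ≤ cnt n x y := by
  unfold cnt
  rw [if_pos h]
  refine le_add_of_nonneg_right (Finset.sum_nonneg fun m _ => ?_)
  split_ifs <;> norm_num

lemma cnt_one_bad {n m : ℕ} (hm : m ≤ n) {x y : ℝ} (h : Bad n m x y) : 1 ≤ cnt n x y := by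
  classical
  unfold cnt
  refine le_add_of_nonneg_of_le (by split_ifs <;> norm_num) ?_
  refine le_trans ?_ (Finset.single_le_sum (f := fun m => if Bad n m x y then (1 : ℝ) else 0)
    (fun m _ => by split_ifs <;> norm_num) (Finset.mem_range.2 (by omega : m < n + 1)))
  rw [if_pos h]

lemma loc_H {n : ℕ} {θ δ x y : ℝ} (hcos : Real.cos θ = 1 - δ) (hδ : 0 < δ) (hδθ : δ ≤ θ ^ 2 / 2)
    (hθ : 0 < θ) (hθ2 : θ < 1.6) (hx : x ≤ cc n 0) (h0 : 0 ≤ y) (hy : y ≤ cc n 0) :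
    ‖ex (Phi n (x - θ) y) - ((2 * (1 - δ) : ℝ) : ℂ) * ex (Phi n x y) + ex (Phi n (x + θ) y)‖ ^ 2
      ≤ 150000 * θ ^ 4 * cnt n x y := by
  have hc := cc_pos n 0
  have hp : 0 ≤ 150000 * θ ^ 4 := by positivity
  rcases le_or_gt x 18 with h | h
  · obtain ⟨e1, e2⟩ := firstH (n := n) hθ hθ2 h h0 (by linarith : y ≤ 2 * cc n 0)
    exact (en_bound hδ hδθ _ _ _ e1 e2).trans (le_mul_of_one_le_right hp (cnt_one_first h))
  · obtain ⟨m, hm, hx1, hx2⟩ := exists_slab h hx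
    by_cases hB : Bad n m x y
    · obtain ⟨e1, e2⟩ := slabH (n := n) hm hθ hθ2 hx1 hx2 (by linarith : y ≤ 2 * cc n 0)
      exact (en_bound hδ hδθ _ _ _ e1 e2).trans (le_mul_of_one_le_right hp (cnt_one_bad hm hB))
    · obtain ⟨D, σ, τ, hσ, hτ, hv⟩ := good_affine hm hx1 hx2 hB
      have k1 : |x - θ - x| ≤ 1.6 := by
        rw [show x - θ - x = -θ by ring, abs_neg, abs_of_pos hθ]; exact hθ2.le
      have k2 : |x + θ - x| ≤ 1.6 := by
        rw [show x + θ - x = θ by ring, abs_of_pos hθ]; exact hθ2.le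
      have k0 : ∀ z : ℝ, |z - z| ≤ 1.6 := by intro z; norm_num
      rw [en_zero hcos _ _ _ σ hσ]
      · exact mul_nonneg hp (cnt_nonneg _ _ _)
      · rw [hv _ _ k1 (k0 y) (Or.inr rfl) (by linarith), hv _ _ (k0 x) (k0 y) (Or.inr rfl) (by linarith)]
        ring
      · rw [hv _ _ k2 (k0 y) (Or.inr rfl) (by linarith), hv _ _ (k0 x) (k0 y) (Or.inr rfl) (by linarith)]
        ring

lemma loc_V {n : ℕ} {θ δ x y : ℝ} (hcos : Real.cos θ = 1 - δ) (hδ : 0 < δ) (hδθ : δ ≤ θ ^ 2 / 2)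
    (hθ : 0 < θ) (hθ2 : θ < 1.6) (hx : x ≤ cc n 0) (hy : y + θ ≤ cc n 0) :
    ‖ex (Phi n x (y - θ)) - ((2 * (1 - δ) : ℝ) : ℂ) * ex (Phi n x y) + ex (Phi n x (y + θ))‖ ^ 2
      ≤ 150000 * θ ^ 4 * cnt n x y := by
  have hc := cc_pos n 0
  have hp : 0 ≤ 150000 * θ ^ 4 := by positivity
  rcases le_or_gt x 18 with h | h
  · obtain ⟨e1, e2⟩ := firstV (n := n) (y := y) hθ hθ2 h
    exact (en_bound hδ hδθ _ _ _ e1 e2).trans (le_mul_of_one_le_right hp (cnt_one_first h))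
  · obtain ⟨m, hm, hx1, hx2⟩ := exists_slab h hx
    by_cases hB : Bad n m x y
    · obtain ⟨e1, e2⟩ := slabV (n := n) hm hθ hθ2 hx1 hx2 (by linarith : y + θ ≤ 2 * cc n 0)
      exact (en_bound hδ hδθ _ _ _ e1 e2).trans (le_mul_of_one_le_right hp (cnt_one_bad hm hB))
    · obtain ⟨D, σ, τ, hσ, hτ, hv⟩ := good_affine hm hx1 hx2 hB
      have k1 : |y - θ - y| ≤ 1.6 := by
        rw [show y - θ - y = -θ by ring, abs_neg, abs_of_pos hθ]; exact hθ2.le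
      have k2 : |y + θ - y| ≤ 1.6 := by
        rw [show y + θ - y = θ by ring, abs_of_pos hθ]; exact hθ2.le
      have k0 : ∀ z : ℝ, |z - z| ≤ 1.6 := by intro z; norm_num
      rw [en_zero hcos _ _ _ τ hτ]
      · exact mul_nonneg hp (cnt_nonneg _ _ _)
      · rw [hv _ _ (k0 x) k1 (Or.inl rfl) (by linarith), hv _ _ (k0 x) (k0 y) (Or.inr rfl) (by linarith)]
        ring
      · rw [hv _ _ (k0 x) k2 (Or.inl rfl) (by linarith), hv _ _ (k0 x) (k0 y) (Or.inr rfl) (by linarith)]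
        ring

lemma card_int (S : Finset ℤ) (a b : ℝ) (hab : a ≤ b) (h : ∀ i ∈ S, a ≤ (i : ℝ) ∧ (i : ℝ) ≤ b) :
    (S.card : ℝ) ≤ b - a + 1 := by
  have h1 : S ⊆ Finset.Icc ⌈a⌉ ⌊b⌋ := by
    intro i hi
    rw [Finset.mem_Icc, Int.ceil_le, Int.le_floor]
    exact h i hi
  have h2 := Finset.card_le_card h1
  rw [Int.card_Icc] at h2
  have h2r : (S.card : ℝ) ≤ ((⌊b⌋ + 1 - ⌈a⌉).toNat : ℝ) := by exact_mod_cast h2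
  refine h2r.trans ?_
  rcases le_or_gt 0 (⌊b⌋ + 1 - ⌈a⌉) with h3 | h3
  · have : ((⌊b⌋ + 1 - ⌈a⌉).toNat : ℝ) = ((⌊b⌋ + 1 - ⌈a⌉ : ℤ) : ℝ) := by
      exact_mod_cast congrArg (Int.cast : ℤ → ℝ) (Int.toNat_of_nonneg h3)
    rw [this]
    push_cast
    linarith [Int.floor_le b, Int.le_ceil a]
  · rw [Int.toNat_of_nonpos h3.le]
    push_cast; linarith

lemma card_strip {θ : ℝ} (hθ : 0 < θ) (S : Finset ℤ) (a b : ℝ) (hab : a ≤ b)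
    (h : ∀ i ∈ S, a ≤ θ * i ∧ θ * i ≤ b) : (S.card : ℝ) ≤ (b - a) / θ + 1 := by
  have := card_int S (a / θ) (b / θ) (by gcongr) (fun i hi => by
    rw [div_le_iff₀ hθ, le_div_iff₀ hθ]
    have := h i hi
    constructor <;> linarith [this.1, this.2])
  rw [sub_div]; exact this

open Classical in
lemma card_per {θ c L v : ℝ} (hθ : 0 < θ) (hθ2 : θ < 1.6) (hc : 0 < c) (hL : 1 ≤ L) (hcL : c ≤ 32 * L)
    (S : Finset ℤ) (h0 : ∀ j ∈ S, 0 ≤ θ * j ∧ θ * j ≤ L) :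
    ((S.filter fun j : ℤ => ∃ q : ℤ, |θ * j - v - 2 * c * q| ≤ 5).card : ℝ) ≤ 500 * L / (c * θ) := by
  set a := (-v - 5) / (2 * c) with ha
  set b := (L - v + 5) / (2 * c) with hb
  have hab : a ≤ b := by rw [ha, hb]; gcongr; linarith
  have hsub : (S.filter fun j : ℤ => ∃ q : ℤ, |θ * j - v - 2 * c * q| ≤ 5) ⊆
      (Finset.Icc ⌈a⌉ ⌊b⌋).biUnion fun q => S.filter fun j : ℤ => |θ * j - v - 2 * c * q| ≤ 5 := by
    intro j hj
    rw [Finset.mem_filter] at hj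
    obtain ⟨hj, q, hq⟩ := hj
    rw [Finset.mem_biUnion]
    refine ⟨q, ?_, Finset.mem_filter.2 ⟨hj, hq⟩⟩
    have := h0 j hj
    rw [abs_le] at hq
    rw [Finset.mem_Icc, Int.ceil_le, Int.le_floor, ha, hb, div_le_iff₀ (by positivity),
      le_div_iff₀ (by positivity)]
    constructor <;> linarith [this.1, this.2]
  have h1 : ((S.filter fun j : ℤ => ∃ q : ℤ, |θ * j - v - 2 * c * q| ≤ 5).card : ℝ) ≤
      ∑ q ∈ Finset.Icc ⌈a⌉ ⌊b⌋, ((S.filter fun j : ℤ => |θ * j - v - 2 * c * q| ≤ 5).card : ℝ) := by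
    have := (Finset.card_le_card hsub).trans Finset.card_biUnion_le
    exact_mod_cast this
  have h2 : ∀ q ∈ Finset.Icc ⌈a⌉ ⌊b⌋, ((S.filter fun j : ℤ => |θ * j - v - 2 * c * q| ≤ 5).card : ℝ) ≤
      12 / θ := by
    intro q _
    have := card_strip hθ (S.filter fun j : ℤ => |θ * j - v - 2 * c * q| ≤ 5)
      (v + 2 * c * q - 5) (v + 2 * c * q + 5) (by linarith) (fun j hj => by
        have := abs_le.1 (Finset.mem_filter.1 hj).2
        constructor <;> linarith [this.1, this.2])
    refine this.trans ?_
    rw [show v + 2 * c * q + 5 - (v + 2 * c * q - 5) = 10 by ring, le_div_iff₀ hθ, add_mul,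
      div_mul_cancel₀ _ hθ.ne']
    linarith
  have h3 := card_int (Finset.Icc ⌈a⌉ ⌊b⌋) a b hab (fun q hq => by
    rwa [Finset.mem_Icc, Int.ceil_le, Int.le_floor] at hq)
  have h4 : b - a + 1 ≤ 40 * L / c := by
    rw [ha, hb, ← sub_div, show L - v + 5 - (-v - 5) = L + 10 by ring, div_add_one (by positivity),
      div_le_div_iff₀ (by positivity) hc]
    nlinarith
  calc _ ≤ _ := h1
    _ ≤ ∑ q ∈ Finset.Icc ⌈a⌉ ⌊b⌋, 12 / θ := Finset.sum_le_sum h2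
    _ = ((Finset.Icc ⌈a⌉ ⌊b⌋).card : ℝ) * (12 / θ) := by rw [Finset.sum_const, nsmul_eq_mul]
    _ ≤ (40 * L / c) * (12 / θ) := by
        apply mul_le_mul_of_nonneg_right (h3.trans h4); positivity
    _ = 480 * L / (c * θ) := by field_simp; norm_num
    _ ≤ _ := by gcongr; norm_num

open Classical in
lemma bad_sum {n m : ℕ} (hm : m ≤ n) {θ L : ℝ} (hθ : 0 < θ) (hθ2 : θ < 1.6) (hL : 1 ≤ L)
    (hcL : cc n 0 ≤ 32 * L) (S : Finset ℤ) (h0 : ∀ j ∈ S, 0 ≤ θ * j ∧ θ * j ≤ L)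
    (hS : (S.card : ℝ) ≤ 3 / 2 * L / θ) :
    ∑ i ∈ S, ∑ j ∈ S, (if Bad n m (θ * i) (θ * j) then (1 : ℝ) else 0) ≤ 10000 * L / θ ^ 2 := by
  set c := cc n m with hcdef
  have hc16 : 16 ≤ c := cc_ge hm
  have hc : 0 < c := by linarith
  have hcL2 : c ≤ 32 * L := (cc_le n m).trans hcL
  set X := XX n m with hX
  set P : ℝ → ℤ → Prop := fun v j => ∃ q : ℤ, |θ * j - v - 2 * c * q| ≤ 5 with hP
  set T1 := S.filter fun i : ℤ => X ≤ θ * i ∧ θ * i ≤ X + 9 with hT1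
  set T2 := S.filter fun i : ℤ => X + c + 4 ≤ θ * i ∧ θ * i ≤ X + c + 14 with hT2
  set T3 := S.filter fun i : ℤ => X ≤ θ * i ∧ θ * i ≤ X + c + 14 with hT3
  have hpt : ∀ i ∈ S, ∀ j ∈ S, (if Bad n m (θ * i) (θ * j) then (1 : ℝ) else 0) ≤
      (if X ≤ θ * i ∧ θ * i ≤ X + 9 then 1 else 0) +
      (if X + c + 4 ≤ θ * i ∧ θ * i ≤ X + c + 14 then 1 else 0) +
      (if X ≤ θ * i ∧ θ * i ≤ X + c + 14 then ((if P 0 j then 1 else 0) +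
        (if P (c + ss n m (θ * i)) j then 1 else 0) +
        (if P (-(c + ss n m (θ * i))) j then 1 else 0)) else 0) := by
    intro i _ j _
    have nn : ∀ (p : Prop) [Decidable p], (0 : ℝ) ≤ if p then 1 else 0 := by intro p _; split_ifs <;> norm_num
    have n1 := nn (X ≤ θ * i ∧ θ * i ≤ X + 9)
    have n2 := nn (X + c + 4 ≤ θ * i ∧ θ * i ≤ X + c + 14)
    have n3 := nn (P 0 j)
    have n4 := nn (P (c + ss n m (θ * i)) j)
    have n5 := nn (P (-(c + ss n m (θ * i))) j)
    by_cases hB : Bad n m (θ * i) (θ * j)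
    · rw [if_pos hB]
      obtain ⟨b1, b2, hB⟩ := hB
      rw [if_pos (⟨b1, b2⟩ : X ≤ θ * i ∧ θ * i ≤ X + c + 14)]
      rcases hB with h | h | h | h | h
      · rw [if_pos (⟨b1, h⟩ : X ≤ θ * i ∧ θ * i ≤ X + 9)]; linarith
      · rw [if_pos (⟨h, b2⟩ : X + c + 4 ≤ θ * i ∧ θ * i ≤ X + c + 14)]; linarith
      · rw [if_pos (show P 0 j from h)]; linarith
      · rw [if_pos (show P (c + ss n m (θ * i)) j from h)]; linarith
      · rw [if_pos (show P (-(c + ss n m (θ * i))) j from h)]; linarith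
    · rw [if_neg hB]
      split_ifs <;> norm_num
  have hper : ∀ v, ∑ j ∈ S, (if P v j then (1 : ℝ) else 0) ≤ 500 * L / (c * θ) := by
    intro v
    rw [Finset.sum_boole]
    exact card_per hθ hθ2 hc hL hcL2 S h0
  have hrow : ∀ i ∈ S, ∑ j ∈ S, (if Bad n m (θ * i) (θ * j) then (1 : ℝ) else 0) ≤
      (if X ≤ θ * i ∧ θ * i ≤ X + 9 then 1 else 0) * (3 / 2 * L / θ) +
      (if X + c + 4 ≤ θ * i ∧ θ * i ≤ X + c + 14 then 1 else 0) * (3 / 2 * L / θ) +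
      (if X ≤ θ * i ∧ θ * i ≤ X + c + 14 then 1 else 0) * (1500 * L / (c * θ)) := by
    intro i hi
    refine (Finset.sum_le_sum (hpt i hi)).trans ?_
    rw [Finset.sum_add_distrib, Finset.sum_add_distrib, Finset.sum_const, Finset.sum_const,
      nsmul_eq_mul, nsmul_eq_mul]
    have q1 := hper 0
    have q2 := hper (c + ss n m (θ * i))
    have q3 := hper (-(c + ss n m (θ * i)))
    have nn : ∀ (p : Prop) [Decidable p], (0 : ℝ) ≤ if p then 1 else 0 := by intro p _; split_ifs <;> norm_num
    refine add_le_add (add_le_add ?_ ?_) ?_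
    · rw [mul_comm]; exact mul_le_mul_of_nonneg_left hS (nn _)
    · rw [mul_comm]; exact mul_le_mul_of_nonneg_left hS (nn _)
    · split_ifs
      · rw [Finset.sum_add_distrib, Finset.sum_add_distrib, one_mul]
        have : 1500 * L / (c * θ) = 3 * (500 * L / (c * θ)) := by ring
        linarith
      · simp
  refine (Finset.sum_le_sum hrow).trans ?_
  rw [Finset.sum_add_distrib, Finset.sum_add_distrib, ← Finset.sum_mul, ← Finset.sum_mul,
    ← Finset.sum_mul, Finset.sum_boole, Finset.sum_boole, Finset.sum_boole]
  have k1 : (T1.card : ℝ) ≤ 11 / θ := by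
    have := card_strip hθ T1 X (X + 9) (by linarith) (fun i hi => (Finset.mem_filter.1 hi).2)
    refine this.trans ?_
    rw [show X + 9 - X = 9 by ring, le_div_iff₀ hθ, add_mul, div_mul_cancel₀ _ hθ.ne']
    linarith
  have k2 : (T2.card : ℝ) ≤ 12 / θ := by
    have := card_strip hθ T2 (X + c + 4) (X + c + 14) (by linarith)
      (fun i hi => (Finset.mem_filter.1 hi).2)
    refine this.trans ?_
    rw [show X + c + 14 - (X + c + 4) = 10 by ring, le_div_iff₀ hθ, add_mul,
      div_mul_cancel₀ _ hθ.ne']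
    linarith
  have k3 : (T3.card : ℝ) ≤ 2 * c / θ := by
    have := card_strip hθ T3 X (X + c + 14) (by linarith) (fun i hi => (Finset.mem_filter.1 hi).2)
    refine this.trans ?_
    rw [show X + c + 14 - X = c + 14 by ring, le_div_iff₀ hθ, add_mul, div_mul_cancel₀ _ hθ.ne']
    linarith
  have hL0 : 0 ≤ L := by linarith
  calc _ ≤ 11 / θ * (3 / 2 * L / θ) + 12 / θ * (3 / 2 * L / θ) + 2 * c / θ * (1500 * L / (c * θ)) := by
        gcongr
    _ = (33 / 2 + 18 + 3000) * L / θ ^ 2 := by field_simp; ring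
    _ ≤ _ := by gcongr; norm_num

lemma cnt_sum {n : ℕ} {θ L : ℝ} (hθ : 0 < θ) (hθ2 : θ < 1.6) (hL : 1 ≤ L)
    (hcL : cc n 0 ≤ 32 * L) (S : Finset ℤ) (h0 : ∀ j ∈ S, 0 ≤ θ * j ∧ θ * j ≤ L)
    (hS : (S.card : ℝ) ≤ 3 / 2 * L / θ) :
    ∑ i ∈ S, ∑ j ∈ S, cnt n (θ * i) (θ * j) ≤ 10000 * L / θ ^ 2 * (n + 2) := by
  classical
  unfold cnt
  simp only [Finset.sum_add_distrib]
  have hL0 : 0 ≤ L := by linarith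
  have a1 : ∑ i ∈ S, ∑ j ∈ S, (if θ * (i : ℝ) ≤ 18 then (1 : ℝ) else 0) ≤ 10000 * L / θ ^ 2 := by
    simp only [Finset.sum_const, nsmul_eq_mul]
    rw [← Finset.mul_sum, Finset.sum_boole]
    have := card_strip hθ (S.filter fun i : ℤ => θ * (i : ℝ) ≤ 18) 0 18 (by norm_num)
      (fun i hi => ⟨(h0 i (Finset.mem_filter.1 hi).1).1, (Finset.mem_filter.1 hi).2⟩)
    have k : ((S.filter fun i : ℤ => θ * (i : ℝ) ≤ 18).card : ℝ) ≤ 20 / θ := by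
      refine this.trans ?_
      rw [show (18 : ℝ) - 0 = 18 by ring, le_div_iff₀ hθ, add_mul, div_mul_cancel₀ _ hθ.ne']
      linarith
    calc _ ≤ 3 / 2 * L / θ * (20 / θ) := by gcongr
      _ = 30 * L / θ ^ 2 := by field_simp; ring
      _ ≤ _ := by gcongr; norm_num
  have a2 : ∑ i ∈ S, ∑ j ∈ S, ∑ m ∈ Finset.range (n + 1),
      (if Bad n m (θ * i) (θ * j) then (1 : ℝ) else 0) ≤ (n + 1) * (10000 * L / θ ^ 2) := by
    have e : ∑ i ∈ S, ∑ j ∈ S, ∑ m ∈ Finset.range (n + 1),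
      (if Bad n m (θ * i) (θ * j) then (1 : ℝ) else 0) = ∑ m ∈ Finset.range (n + 1),
        ∑ i ∈ S, ∑ j ∈ S, (if Bad n m (θ * i) (θ * j) then (1 : ℝ) else 0) := by
      rw [Finset.sum_comm]
      rw [Finset.sum_congr rfl fun i _ => Finset.sum_comm, Finset.sum_comm]
      exact Finset.sum_congr rfl fun i _ => Finset.sum_comm
    rw [e]
    calc _ ≤ ∑ m ∈ Finset.range (n + 1), 10000 * L / θ ^ 2 :=
          Finset.sum_le_sum fun m hm => bad_sum (by rw [Finset.mem_range] at hm; omega)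
            hθ hθ2 hL hcL S h0 hS
      _ = _ := by rw [Finset.sum_const, Finset.card_range, nsmul_eq_mul]; push_cast; ring
  linarith

lemma partB : ∃ C : ℝ, 0 < C ∧ ∀ ε δ : ℝ, 0 < ε → ε < 1 / 2 → 0 < δ → δ < 1 → ε < Real.sqrt δ →
    ∃ u, InS0 ε u ∧ E ε δ u ≤
      C * (ε * (δ * Real.sqrt δ) * (|Real.log (ε / Real.sqrt δ)| + 1)) := by
  refine ⟨150000 * 10000 * 27 * 9, by norm_num, fun ε δ hε hε2 hδ hδ1 hεδ => ?_⟩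
  obtain ⟨θ, hθ, hθ2, hcos, hδθ, hθδ⟩ := theta_facts hδ hδ1
  obtain ⟨hK, hK1, hK2⟩ := Kof_facts hε hε2
  have hs0 : 0 < Real.sqrt δ := Real.sqrt_pos.2 hδ
  have hss : Real.sqrt δ ^ 2 = δ := Real.sq_sqrt hδ.le
  have hsθ : Real.sqrt δ ≤ θ := by
    apply le_of_sq_le_sq _ hθ.le
    nlinarith
  have hθs : θ ≤ 3 * Real.sqrt δ := by
    apply le_of_sq_le_sq _ (by positivity)
    nlinarith
  set L := θ / ε with hL
  have hL1 : 1 ≤ L := by rw [hL, one_le_div hε]; linarith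
  have hL0 : 0 < L := by linarith
  have hεL : ε * L = θ := by rw [hL]; field_simp
  set M : ℕ := ⌈L⌉₊ with hM
  have hM0 : M ≠ 0 := (Nat.ceil_pos.2 hL0).ne'
  have hM1 : L ≤ M := Nat.le_ceil _
  have hM2 : (M : ℝ) < L + 1 := Nat.ceil_lt_add_one hL0.le
  set n : ℕ := Nat.log 2 M with hn
  have hn1 : (2 : ℝ) ^ n ≤ M := by exact_mod_cast Nat.pow_log_le_self 2 hM0
  have hn2 : (M : ℝ) < 2 ^ (n + 1) := by exact_mod_cast Nat.lt_pow_succ_log_self (by norm_num) M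
  have hc0 : cc n 0 = 16 * 2 ^ n := by simp [cc]
  have hcL : cc n 0 ≤ 32 * L := by rw [hc0]; linarith
  have hLc : L ≤ cc n 0 := by rw [hc0]; rw [pow_succ] at hn2; linarith
  have hKθ : θ * Kof ε ≤ L := by
    rw [hL, le_div_iff₀ hε]; nlinarith
  have hmem : ∀ j : ℤ, 0 ≤ j → j ≤ Kof ε → 0 ≤ θ * j ∧ θ * j ≤ L := by
    intro j h0 h1
    have h0r : (0 : ℝ) ≤ j := by exact_mod_cast h0
    have h1r : (j : ℝ) ≤ Kof ε := by exact_mod_cast h1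
    exact ⟨by positivity, (mul_le_mul_of_nonneg_left h1r hθ.le).trans hKθ⟩
  let w : ℤ → ℤ → ℂ := fun i j => ex (Phi n (θ * i) (θ * j))
  have hw0 : ∀ j, w 0 j = 1 := by
    intro j
    have : Phi n (θ * ((0 : ℤ) : ℝ)) (θ * j) = 0 := by
      unfold Phi
      rw [ramp_zero (by norm_num) (by simp), zero_mul]
    simp only [w, this, ex_zero]
  refine ⟨toField w, inS0_toField _ _ (fun i j => norm_ex _) hw0, ?_⟩
  have hE := E_le ε δ w (fun i j => 150000 * θ ^ 4 * cnt n (θ * i) (θ * j))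
    (fun i j => mul_nonneg (by positivity) (cnt_nonneg _ _ _)) ?_ ?_
  · refine hE.trans ?_
    have hcard := card_Icc_Kof (ε := ε) hK
    have hS : ((Finset.Icc 0 (Kof ε)).card : ℝ) ≤ 3 / 2 * L / θ := by
      rw [hcard, hL, show 3 / 2 * (θ / ε) / θ = (3 / 2) / ε by field_simp, le_div_iff₀ hε]
      exact hK2
    have hcs := cnt_sum (n := n) hθ hθ2 hL1 hcL (Finset.Icc 0 (Kof ε))
      (fun j hj => by rw [Finset.mem_Icc] at hj; exact hmem j hj.1 hj.2) hS
    simp only [← Finset.mul_sum]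
    have hlog : (n : ℝ) + 2 ≤ 9 * (|Real.log (ε / Real.sqrt δ)| + 1) := by
      have l1 : (2 : ℝ) ^ n ≤ 6 * (Real.sqrt δ / ε) := by
        have : L ≤ 3 * (Real.sqrt δ / ε) := by rw [hL, ← mul_div_assoc]; gcongr
        linarith
      have l2 := Real.log_le_log (by positivity) l1
      rw [Real.log_pow, Real.log_mul (by norm_num) (by positivity)] at l2
      have l3 : Real.log (Real.sqrt δ / ε) ≤ |Real.log (ε / Real.sqrt δ)| := by
        rw [← inv_div, Real.log_inv]
        exact neg_le_abs _
      have l4 : Real.log 6 ≤ 3 * Real.log 2 := by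
        rw [show (3 : ℝ) * Real.log 2 = Real.log (2 ^ 3) by rw [Real.log_pow]; norm_num]
        exact Real.log_le_log (by norm_num) (by norm_num)
      have l5 := Real.log_two_gt_d9
      have l6 := Real.log_two_lt_d9
      have hn0 : (0 : ℝ) ≤ n := Nat.cast_nonneg n
      have l7 : (n : ℝ) * Real.log 2 ≥ n * (1 / 2) := by
        apply mul_le_mul_of_nonneg_left _ hn0; linarith
      have := abs_nonneg (Real.log (ε / Real.sqrt δ))
      linarith
    have hθ3 : θ ^ 3 ≤ 27 * (δ * Real.sqrt δ) := by
      calc θ ^ 3 ≤ (3 * Real.sqrt δ) ^ 3 := pow_le_pow_left₀ hθ.le hθs 3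
        _ = 27 * (Real.sqrt δ ^ 2 * Real.sqrt δ) := by ring
        _ = _ := by rw [hss]
    calc _ ≤ ε ^ 2 * (150000 * θ ^ 4 * (10000 * L / θ ^ 2 * (n + 2))) := by gcongr
      _ = 150000 * 10000 * (ε * (ε * L) * θ ^ 2 * (n + 2)) := by field_simp
      _ = 150000 * 10000 * (ε * θ ^ 3 * (n + 2)) := by rw [hεL]; ring
      _ ≤ 150000 * 10000 * (ε * (27 * (δ * Real.sqrt δ)) *
          (9 * (|Real.log (ε / Real.sqrt δ)| + 1))) := by gcongr
      _ = _ := by ring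
  · intro i j h1 h2 h3 h4
    have := loc_H (n := n) (x := θ * i) (y := θ * j) hcos hδ hδθ hθ hθ2
      ((hmem i (by omega) (by omega)).2.trans hLc) (hmem j h3 h4).1 ((hmem j h3 h4).2.trans hLc)
    simp only [w]
    rw [show θ * ((i - 1 : ℤ) : ℝ) = θ * i - θ by push_cast; ring,
      show θ * ((i + 1 : ℤ) : ℝ) = θ * i + θ by push_cast; ring]
    exact this
  · intro i j h1 h2 h3 h4
    have hj := (hmem (j + 1) (by omega) (by omega)).2
    rw [show θ * ((j + 1 : ℤ) : ℝ) = θ * j + θ by push_cast; ring] at hj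
    have := loc_V (n := n) (x := θ * i) (y := θ * j) hcos hδ hδθ hθ hθ2
      ((hmem i (by omega) (by omega)).2.trans hLc) (hj.trans hLc)
    simp only [w]
    rw [show θ * ((j - 1 : ℤ) : ℝ) = θ * j - θ by push_cast; ring,
      show θ * ((j + 1 : ℤ) : ℝ) = θ * j + θ by push_cast; ring]
    exact this

/-- Theorem 2.2(i) / Proposition 5.1: upper bound of the scaling law. -/
theorem upper_bound_scaling :
    ∃ C : ℝ, 0 < C ∧ ∀ ε δ : ℝ, ε ∈ Set.Ioo (0 : ℝ) (1 / 2) → δ ∈ Set.Ioo (0 : ℝ) 1 →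
      ∃ u : ℤ × ℤ → ℝ × ℝ, InS0 ε u ∧ E ε δ u ≤ C * sfun ε δ := by
  obtain ⟨CB, hCB, hB⟩ := partB
  obtain ⟨CC, hCC, hC⟩ := partC
  refine ⟨9 + CB + CC, by positivity, fun ε δ hε hδ => ?_⟩
  obtain ⟨e0, e1⟩ := hε
  obtain ⟨d0, d1⟩ := hδ
  have hs0 : 0 < Real.sqrt δ := Real.sqrt_pos.2 d0
  have hss : Real.sqrt δ ^ 2 = δ := Real.sq_sqrt d0.le
  have hl : 0 ≤ |Real.log (ε / Real.sqrt δ)| := abs_nonneg _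
  -- the three competitors, each with its own bound
  have key : ∀ (A t : ℝ), 0 ≤ t → A ≤ 9 + CB + CC → sfun ε δ = t →
      (∃ u, InS0 ε u ∧ E ε δ u ≤ A * t) →
      ∃ u : ℤ × ℤ → ℝ × ℝ, InS0 ε u ∧ E ε δ u ≤ (9 + CB + CC) * sfun ε δ := by
    rintro A t ht hA hst ⟨u, hu, hE⟩
    refine ⟨u, hu, hE.trans ?_⟩
    rw [hst]
    exact mul_le_mul_of_nonneg_right hA ht
  rcases le_or_gt (Real.sqrt δ) ε with h | h
  · have hs1 : Real.sqrt δ ≤ 1 := by nlinarith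
    refine key 9 (δ ^ 2) (by positivity) (by linarith) ?_ (partA e0 e1)
    unfold sfun
    apply min_eq_left
    have k1 : δ ^ 2 = Real.sqrt δ * (δ * Real.sqrt δ) := by
      rw [show Real.sqrt δ * (δ * Real.sqrt δ) = δ * Real.sqrt δ ^ 2 by ring, hss]; ring
    apply le_min
    · calc δ ^ 2 = Real.sqrt δ * (δ * Real.sqrt δ) := k1
        _ ≤ ε * (δ * Real.sqrt δ) := by gcongr
        _ ≤ _ := le_mul_of_one_le_right (by positivity) (by linarith)
    · calc δ ^ 2 = Real.sqrt δ * (δ * Real.sqrt δ) := k1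
        _ ≤ ε * (1 * Real.sqrt δ) := by gcongr
        _ = _ := by ring
  · rcases min_choice (δ ^ 2) (min (ε * (δ * Real.sqrt δ) * (|Real.log (ε / Real.sqrt δ)| + 1))
      (ε * Real.sqrt δ)) with m1 | m1
    · exact key 9 _ (by positivity) (by linarith) m1 (partA e0 e1)
    · rcases min_choice (ε * (δ * Real.sqrt δ) * (|Real.log (ε / Real.sqrt δ)| + 1))
        (ε * Real.sqrt δ) with m2 | m2
      · exact key CB _ (by positivity) (by linarith) (m1.trans m2) (hB ε δ e0 e1 d0 d1 h)
      · exact key CC _ (by positivity) (by linarith) (m1.trans m2) (hC ε δ e0 e1 d0 d1 h)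
end

section
/- There exist δ̄ ∈ (0,1) and a constant c > 0 (depending only on δ̄) such that: (a) for all ε ∈ (0,1/2) and all δ ∈ [δ̄,1), every u ∈ S₀(ε) satisfies E_{ε,δ}(u) ≥ c·ε·δ^{1/2}; and (b) for all δ ∈ (0,δ̄) and all ε ∈ [δ,1/2), every u ∈ S₀(ε) satisfies E_{ε,δ}(u) ≥ c · min{δ², ε·δ^{3/2}·(|ln(ε/δ^{1/2})| + 1)} (lower bound of the scaling law, Theorem 2.2(ii)/Proposition 5.6). -/
open Real Finset

noncomputable section

namespace LB

/-- Reduced local energy in the half-angle sines. -/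
def GG (δ p q : ℝ) : ℝ := 4 * (δ - p ^ 2 - q ^ 2) ^ 2 + (q - p) ^ 2

/-- Local energy in the angles. -/
def hh (δ a b : ℝ) : ℝ :=
  (Real.cos a + Real.cos b - 2 + 2 * δ) ^ 2 + (Real.sin b - Real.sin a) ^ 2

lemma GG_nonneg (δ p q : ℝ) : 0 ≤ GG δ p q := by unfold GG; positivity

lemma hh_nonneg (δ a b : ℝ) : 0 ≤ hh δ a b := by unfold hh; positivity

lemma shift_sum_le (f : ℕ → ℝ) (hf : ∀ k, 0 ≤ f k) (k n M : ℕ) (h : k + n ≤ M) :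
    ∑ l ∈ range n, f (k + l) ≤ ∑ l ∈ range M, f l := by
  have h1 : ∑ l ∈ range n, f (k + l) = ∑ l ∈ Ico k (k + n), f l := by
    rw [Finset.sum_Ico_eq_sum_range]; simp
  rw [h1]
  apply Finset.sum_le_sum_of_subset_of_nonneg
  · intro x hx
    simp only [Finset.mem_Ico, Finset.mem_range] at *
    omega
  · intros; exact hf _

lemma oneside (δ : ℝ) (hδ : 0 < δ) (p : ℕ → ℝ) (n : ℕ) (hn : (n : ℝ) ^ 2 * δ ≤ 1)
    (h0 : p 0 ^ 2 ≤ δ / 16) :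
    n * δ ^ 2 / 16 ≤ ∑ k ∈ range n, GG δ (p k) (p (k + 1)) := by
  rcases Nat.eq_zero_or_pos n with rfl | hpos
  · simp
  have hnp : (0 : ℝ) < n := by exact_mod_cast hpos
  by_cases hall : ∀ k ≤ n, p k ^ 2 ≤ δ / 4
  · have : ∑ k ∈ range n, δ ^ 2 / 16 ≤ ∑ k ∈ range n, GG δ (p k) (p (k + 1)) := by
      apply Finset.sum_le_sum
      intro k hk
      have hk' := Finset.mem_range.1 hk
      have h1 := hall k (by omega)
      have h2 := hall (k + 1) (by omega)
      unfold GG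
      have h3 : δ / 2 ≤ δ - p k ^ 2 - p (k + 1) ^ 2 := by linarith
      have h4 : (δ / 2) ^ 2 ≤ (δ - p k ^ 2 - p (k + 1) ^ 2) ^ 2 :=
        pow_le_pow_left₀ (by linarith) h3 2
      nlinarith [sq_nonneg (p (k + 1) - p k), sq_nonneg δ]
    rw [Finset.sum_const, Finset.card_range, nsmul_eq_mul] at this
    linarith
  · push Not at hall
    obtain ⟨k, hk, hpk⟩ := hall
    have hd : δ / 16 ≤ (p k - p 0) ^ 2 := by nlinarith [sq_nonneg (p k - 2 * p 0)]
    have h1 : p k - p 0 = ∑ l ∈ range k, (p (l + 1) - p l) := (Finset.sum_range_sub p k).symm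
    have h2 : (p k - p 0) ^ 2 ≤ k * ∑ l ∈ range k, (p (l + 1) - p l) ^ 2 := by
      rw [h1]
      have := @sq_sum_le_card_mul_sum_sq ℕ ℝ _ _ _ _ (range k) (fun l => p (l + 1) - p l)
      simpa using this
    have h3 : ∑ l ∈ range k, (p (l + 1) - p l) ^ 2 ≤ ∑ l ∈ range n, GG δ (p l) (p (l + 1)) := by
      calc _ ≤ ∑ l ∈ range k, GG δ (p l) (p (l + 1)) := by
            apply Finset.sum_le_sum
            intro l _
            unfold GG
            nlinarith [sq_nonneg (δ - p l ^ 2 - p (l + 1) ^ 2)]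
        _ ≤ _ := by
            apply Finset.sum_le_sum_of_subset_of_nonneg
            · exact Finset.range_subset_range.2 hk
            · intros; exact GG_nonneg _ _ _
    set S := ∑ l ∈ range n, GG δ (p l) (p (l + 1)) with hS
    have hS0 : 0 ≤ S := Finset.sum_nonneg fun _ _ => GG_nonneg _ _ _
    have hkn : (k : ℝ) ≤ n := by exact_mod_cast hk
    have h4 : δ / 16 ≤ n * S := by
      calc δ / 16 ≤ k * ∑ l ∈ range k, (p (l + 1) - p l) ^ 2 := hd.trans h2
        _ ≤ k * S := by gcongr
        _ ≤ n * S := by gcongr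
    have h5 : (n : ℝ) * (n * δ ^ 2 / 16) ≤ n * S := by nlinarith
    exact le_of_mul_le_mul_left h5 hnp

lemma half_pos {a : ℝ} (ha : |a| ≤ 1 / 2) (hp : 0 < Real.sin (a / 2)) :
    2 * Real.sin (a / 2) ≤ a := by
  rw [abs_le] at ha
  have h0 : 0 ≤ a := by
    by_contra h
    push Not at h
    have := Real.sin_nonpos_of_nonpos_of_neg_pi_le (x := a / 2) (by linarith)
      (by linarith [Real.pi_gt_three])
    linarith
  have := Real.sin_le (x := a / 2) (by linarith)
  linarith

lemma half_neg {a : ℝ} (ha : |a| ≤ 1 / 2) (hp : Real.sin (a / 2) < 0) :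
    a ≤ 2 * Real.sin (a / 2) := by
  have h := half_pos (a := -a) (by rwa [abs_neg]) (by rw [neg_div, Real.sin_neg]; linarith)
  rw [neg_div, Real.sin_neg] at h
  linarith

lemma half_sq {a : ℝ} (ha : |a| ≤ 1 / 2) : a ^ 2 ≤ 16 * Real.sin (a / 2) ^ 2 := by
  have h1 : 2 / π * |a / 2| ≤ |Real.sin (a / 2)| := by
    apply Real.mul_abs_le_abs_sin
    rw [abs_div, abs_two]
    linarith [Real.pi_gt_three]
  have h2 : |a| ≤ 4 * |Real.sin (a / 2)| := by
    rw [abs_div, abs_two] at h1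
    have hpi := Real.pi_pos
    have h3 : |a| ≤ π * |Real.sin (a / 2)| := by
      have : 2 / π * (|a| / 2) = |a| / π := by ring
      rw [this, div_le_iff₀ hpi] at h1
      linarith
    nlinarith [Real.pi_le_four, abs_nonneg (Real.sin (a / 2))]
  have h3 := pow_le_pow_left₀ (abs_nonneg a) h2 2
  rw [mul_pow, sq_abs, sq_abs] at h3
  linarith

lemma window (δ : ℝ) (hδ : 0 < δ) (φ : ℕ → ℝ) (m n : ℕ) (hm : 1 ≤ m) (hnm : n ≤ m)
    (hn : (n : ℝ) ^ 2 * δ ≤ 1) (ha : ∀ k < m, |φ (k + 1) - φ k| ≤ 1 / 2)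
    (hφ : |φ m - φ 0| < m * Real.sqrt δ / 2) :
    n * δ ^ 2 / 16 ≤ ∑ k ∈ range (2 * m),
      GG δ (Real.sin ((φ (k + 1) - φ k) / 2)) (Real.sin ((φ (k + 1 + 1) - φ (k + 1)) / 2)) := by
  set p : ℕ → ℝ := fun k => Real.sin ((φ (k + 1) - φ k) / 2) with hp
  change n * δ ^ 2 / 16 ≤ ∑ k ∈ range (2 * m), GG δ (p k) (p (k + 1))
  by_cases h1 : ∃ k < m, p k ^ 2 ≤ δ / 16
  · obtain ⟨k, hk, hpk⟩ := h1
    have := oneside δ hδ (fun l => p (k + l)) n hn (by simpa using hpk)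
    refine this.trans ?_
    exact shift_sum_le (fun l => GG δ (p l) (p (l + 1))) (fun _ => GG_nonneg _ _ _) k n (2 * m)
      (by omega)
  push Not at h1
  by_cases h2 : ∃ k, k + 1 < m ∧ p k * p (k + 1) < 0
  · obtain ⟨k, hk, hpk⟩ := h2
    have hh1 := h1 k (by omega)
    have hh2 := h1 (k + 1) (by omega)
    have hG : δ / 8 ≤ GG δ (p k) (p (k + 1)) := by
      unfold GG
      nlinarith [sq_nonneg (δ - p k ^ 2 - p (k + 1) ^ 2)]
    have hs : GG δ (p k) (p (k + 1)) ≤ ∑ k ∈ range (2 * m), GG δ (p k) (p (k + 1)) :=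
      Finset.single_le_sum (f := fun k => GG δ (p k) (p (k + 1)))
        (fun _ _ => GG_nonneg _ _ _) (Finset.mem_range.2 (by omega))
    have hnn : (n : ℝ) ≤ (n : ℝ) ^ 2 := by
      exact_mod_cast Nat.le_self_pow (by norm_num) n
    have : (n : ℝ) * δ ≤ 1 := by nlinarith
    nlinarith
  push Not at h2
  exfalso
  have hne : ∀ k < m, p k ≠ 0 := by
    intro k hk h0
    have := h1 k hk
    rw [h0] at this
    norm_num at this
    linarith
  have hsame : ∀ k < m, 0 < p 0 * p k := by
    intro k
    induction k with
    | zero => intro h; exact mul_self_pos.2 (hne 0 h)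
    | succ k ih =>
      intro hk
      have h3 := ih (by omega)
      have h4 := h2 k hk
      have h5 : 0 < p k * p (k + 1) :=
        lt_of_le_of_ne h4 (Ne.symm (mul_ne_zero (hne k (by omega)) (hne _ hk)))
      by_contra hc
      push Not at hc
      have h6 : p k ^ 2 * (p 0 * p (k + 1)) = (p 0 * p k) * (p k * p (k + 1)) := by ring
      have h7 := mul_pos h3 h5
      nlinarith [sq_nonneg (p k)]
  have hsq : Real.sqrt δ ^ 2 = δ := Real.sq_sqrt hδ.le
  have hs0 := Real.sqrt_nonneg δ
  have hsum : φ m - φ 0 = ∑ k ∈ range m, (φ (k + 1) - φ k) := (Finset.sum_range_sub φ m).symm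
  rw [abs_lt] at hφ
  rcases lt_or_gt_of_ne (hne 0 (by omega)) with hneg | hpos
  · have : ∀ k ∈ range m, φ (k + 1) - φ k ≤ -(Real.sqrt δ / 2) := by
      intro k hk
      have hk' := Finset.mem_range.1 hk
      have h3 : p k < 0 := by
        have := hsame k hk'
        by_contra hc
        push Not at hc
        nlinarith
      have h4 := half_neg (ha k hk') h3
      have h5 := h1 k hk'
      have h6 : Real.sqrt δ / 4 ≤ -p k := by
        apply le_of_sq_le_sq _ (by linarith)
        nlinarith
      change _ ≤ 2 * p k at h4
      linarith
    have h8 := Finset.sum_le_sum this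
    rw [Finset.sum_const, Finset.card_range, nsmul_eq_mul, ← hsum] at h8
    linarith [hφ.1]
  · have : ∀ k ∈ range m, (Real.sqrt δ / 2) ≤ φ (k + 1) - φ k := by
      intro k hk
      have hk' := Finset.mem_range.1 hk
      have h3 : 0 < p k := by
        have := hsame k hk'
        by_contra hc
        push Not at hc
        nlinarith
      have h4 := half_pos (ha k hk') h3
      have h5 := h1 k hk'
      have h6 : Real.sqrt δ / 4 ≤ p k := by
        apply le_of_sq_le_sq _ (by linarith)
        nlinarith
      change 2 * p k ≤ _ at h4
      linarith
    have h8 := Finset.sum_le_sum this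
    rw [Finset.sum_const, Finset.card_range, nsmul_eq_mul, ← hsum] at h8
    linarith [hφ.2]

lemma rowb (δ : ℝ) (hδ : 0 < δ) (φ : ℕ → ℝ) (i : ℕ) (h0 : φ 0 = 0)
    (ha : ∀ k < i, |φ (k + 1) - φ k| ≤ 1 / 2) :
    δ * φ i ^ 2 ≤ 32 * (i : ℝ) ^ 2 * δ ^ 2 + i * ∑ k ∈ range i,
      GG δ (Real.sin ((φ (k + 1) - φ k) / 2)) (Real.sin ((φ (k + 1 + 1) - φ (k + 1)) / 2)) := by
  set p : ℕ → ℝ := fun k => Real.sin ((φ (k + 1) - φ k) / 2) with hp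
  change _ ≤ 32 * (i : ℝ) ^ 2 * δ ^ 2 + i * ∑ k ∈ range i, GG δ (p k) (p (k + 1))
  have hsum : φ i = ∑ k ∈ range i, (φ (k + 1) - φ k) := by
    rw [Finset.sum_range_sub φ i, h0, sub_zero]
  have h2 : φ i ^ 2 ≤ i * ∑ k ∈ range i, (φ (k + 1) - φ k) ^ 2 := by
    have := @sq_sum_le_card_mul_sum_sq ℕ ℝ _ _ _ _ (range i) (fun k => φ (k + 1) - φ k)
    rw [← hsum] at this
    simpa using this
  have h3 : δ * ∑ k ∈ range i, (φ (k + 1) - φ k) ^ 2 ≤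
      ∑ k ∈ range i, (32 * δ ^ 2 + GG δ (p k) (p (k + 1))) := by
    rw [Finset.mul_sum]
    apply Finset.sum_le_sum
    intro k hk
    have h4 := half_sq (ha k (Finset.mem_range.1 hk))
    change _ ≤ 16 * p k ^ 2 at h4
    have h5 : δ * (16 * p k ^ 2) ≤ 32 * δ ^ 2 + GG δ (p k) (p (k + 1)) := by
      unfold GG
      nlinarith [sq_nonneg (p k ^ 2 + p (k + 1) ^ 2 - δ - 2 * δ), sq_nonneg (p (k + 1) - p k),
        mul_nonneg hδ.le (sq_nonneg (p (k + 1)))]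
    nlinarith
  rw [Finset.sum_add_distrib, Finset.sum_const, Finset.card_range, nsmul_eq_mul] at h3
  have hi : (0 : ℝ) ≤ i := Nat.cast_nonneg i
  calc δ * φ i ^ 2 ≤ δ * (i * ∑ k ∈ range i, (φ (k + 1) - φ k) ^ 2) := by gcongr
    _ = i * (δ * ∑ k ∈ range i, (φ (k + 1) - φ k) ^ 2) := by ring
    _ ≤ i * (i * (32 * δ ^ 2) + ∑ k ∈ range i, GG δ (p k) (p (k + 1))) := by gcongr
    _ = _ := by ring

/-- horizontal local energy -/
def Hh (δ : ℝ) (φ : ℕ → ℕ → ℝ) (i j : ℕ) : ℝ :=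
  GG δ (Real.sin ((φ (i + 1) j - φ i j) / 2)) (Real.sin ((φ (i + 1 + 1) j - φ (i + 1) j) / 2))

/-- vertical local energy -/
def Vv (δ : ℝ) (φ : ℕ → ℕ → ℝ) (i j : ℕ) : ℝ :=
  GG δ (Real.sin ((φ i (j + 1) - φ i j) / 2)) (Real.sin ((φ i (j + 1 + 1) - φ i (j + 1)) / 2))

lemma Hh_nonneg (δ : ℝ) (φ : ℕ → ℕ → ℝ) (i j : ℕ) : 0 ≤ Hh δ φ i j := GG_nonneg _ _ _
lemma Vv_nonneg (δ : ℝ) (φ : ℕ → ℕ → ℝ) (i j : ℕ) : 0 ≤ Vv δ φ i j := GG_nonneg _ _ _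

lemma star (δ : ℝ) (hδ : 0 < δ) (N : ℕ) (φ : ℕ → ℕ → ℝ) (h0 : ∀ j ≤ N, φ 0 j = 0)
    (hH : ∀ i j, i + 1 ≤ N → j ≤ N → |φ (i + 1) j - φ i j| ≤ 1 / 2)
    (hV : ∀ i j, i ≤ N → j + 1 ≤ N → |φ i (j + 1) - φ i j| ≤ 1 / 2)
    (i m n : ℕ) (him : 32 * i ≤ m) (hm : 1 ≤ m) (hnm : n ≤ m) (hn : (n : ℝ) ^ 2 * δ ≤ 1)
    (hmN : 4 * m ≤ N) :
    (N : ℝ) * n * m * δ ^ 2 / 32 ≤ 2 * (m : ℝ) ^ 2 * (∑ j ∈ range (N - 1), Vv δ φ i j)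
      + 2 * n * ∑ j ∈ range (N + 1), ∑ i ∈ range (N - 1), Hh δ φ i j := by
  set R : ℕ → ℝ := fun j => ∑ i ∈ range (N - 1), Hh δ φ i j with hR
  have hRn : ∀ j, 0 ≤ R j := fun j => Finset.sum_nonneg fun _ _ => Hh_nonneg _ _ _ _
  set W : ℕ → ℝ := fun j => ∑ k ∈ range (2 * m), Vv δ φ i (j + k) with hW
  have hWn : ∀ j, 0 ≤ W j := fun j => Finset.sum_nonneg fun _ _ => Vv_nonneg _ _ _ _
  have hm1 : (1 : ℝ) ≤ m := by exact_mod_cast hm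
  have hm0 : (0 : ℝ) < m := by linarith
  have hn0 : (0 : ℝ) ≤ n := Nat.cast_nonneg n
  have hi0 : (0 : ℝ) ≤ i := Nat.cast_nonneg i
  have himr : 32 * (i : ℝ) ≤ m := by exact_mod_cast him
  have hsq : Real.sqrt δ ^ 2 = δ := Real.sq_sqrt hδ.le
  have hs0 := Real.sqrt_nonneg δ
  -- large angle forces large row energy
  have hrow : ∀ j ≤ N, m * Real.sqrt δ / 4 ≤ |φ i j| → m * δ ^ 2 ≤ R j := by
    intro j hj hlarge
    have h1 := rowb δ hδ (fun k => φ k j) i (h0 j hj) (fun k hk => hH k j (by omega) hj)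
    have h2 : ∑ k ∈ range i, Hh δ φ k j ≤ R j := by
      apply Finset.sum_le_sum_of_subset_of_nonneg
      · exact Finset.range_subset_range.2 (by omega)
      · intros; exact Hh_nonneg _ _ _ _
    change δ * φ i j ^ 2 ≤ 32 * (i : ℝ) ^ 2 * δ ^ 2 + i * ∑ k ∈ range i, Hh δ φ k j at h1
    have h3 : (m : ℝ) ^ 2 * δ / 16 ≤ φ i j ^ 2 := by
      have := pow_le_pow_left₀ (by positivity) hlarge 2
      rw [sq_abs] at this
      calc (m : ℝ) ^ 2 * δ / 16 = (m : ℝ) ^ 2 * (Real.sqrt δ ^ 2) / 16 := by rw [hsq]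
        _ = (m * Real.sqrt δ / 4) ^ 2 := by ring
        _ ≤ _ := this
    have h4 : (i : ℝ) * ∑ k ∈ range i, Hh δ φ k j ≤ i * R j := by gcongr
    have h5 : (m : ℝ) ^ 2 * δ ^ 2 / 16 ≤ 32 * (i : ℝ) ^ 2 * δ ^ 2 + i * R j := by nlinarith
    have h6 : 32 * (i : ℝ) ^ 2 * δ ^ 2 ≤ (m : ℝ) ^ 2 * δ ^ 2 / 32 := by
      have : 1024 * (i : ℝ) ^ 2 ≤ (m : ℝ) ^ 2 := by nlinarith
      nlinarith [sq_nonneg δ]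
    have h7 : (i : ℝ) * R j ≤ m / 32 * R j := by
      apply mul_le_mul_of_nonneg_right _ (hRn j)
      linarith
    have h8 : (m : ℝ) * (m * δ ^ 2) ≤ m * R j := by nlinarith
    exact le_of_mul_le_mul_left h8 hm0
  have hper : ∀ j ∈ range (N - 2 * m),
      (n : ℝ) * m * δ ^ 2 / 16 ≤ m * W j + n * (R j + R (m + j)) := by
    intro j hj
    have hj' := Finset.mem_range.1 hj
    by_cases hg : |φ i (j + m) - φ i (j + 0)| < m * Real.sqrt δ / 2
    · have := window δ hδ (fun k => φ i (j + k)) m n hm hnm hn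
        (fun k hk => hV i (j + k) (by omega) (by omega)) hg
      change n * δ ^ 2 / 16 ≤ W j at this
      have h1 : 0 ≤ (n : ℝ) * (R j + R (m + j)) :=
        mul_nonneg hn0 (add_nonneg (hRn _) (hRn _))
      nlinarith
    · push Not at hg
      have h2 : m * δ ^ 2 ≤ R j + R (m + j) := by
        have habs : |φ i (j + m) - φ i (j + 0)| ≤ |φ i (j + m)| + |φ i (j + 0)| := abs_sub _ _
        rw [add_zero] at habs hg
        rcases le_total (m * Real.sqrt δ / 4) |φ i j| with h | h
        · have := hrow j (by omega) h
          linarith [hRn (m + j)]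
        · have := hrow (m + j) (by omega) (by rw [add_comm m j]; linarith)
          linarith [hRn j]
      have h3 : (n : ℝ) * (m * δ ^ 2) ≤ n * (R j + R (m + j)) := by gcongr
      have h4 : 0 ≤ (m : ℝ) * W j := mul_nonneg hm0.le (hWn j)
      have h5 : 0 ≤ (n : ℝ) * (m * δ ^ 2) := by positivity
      linarith
  have hsum := Finset.sum_le_sum hper
  rw [Finset.sum_const, Finset.card_range, nsmul_eq_mul, Finset.sum_add_distrib,
    ← Finset.mul_sum, ← Finset.mul_sum, Finset.sum_add_distrib] at hsum
  have hWs : ∑ j ∈ range (N - 2 * m), W j ≤ 2 * m * ∑ j ∈ range (N - 1), Vv δ φ i j := by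
    rw [hW, Finset.sum_comm]
    have : ∀ k ∈ range (2 * m), ∑ j ∈ range (N - 2 * m), Vv δ φ i (j + k) ≤
        ∑ j ∈ range (N - 1), Vv δ φ i j := by
      intro k hk
      have hk' := Finset.mem_range.1 hk
      have := shift_sum_le (fun j => Vv δ φ i j) (fun _ => Vv_nonneg _ _ _ _) k (N - 2 * m)
        (N - 1) (by omega)
      simpa only [add_comm k] using this
    have h := Finset.sum_le_sum this
    rw [Finset.sum_const, Finset.card_range, nsmul_eq_mul] at h
    push_cast at h
    exact h
  have hR1 : ∑ j ∈ range (N - 2 * m), R j ≤ ∑ j ∈ range (N + 1), R j := by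
    have := shift_sum_le R hRn 0 (N - 2 * m) (N + 1) (by omega)
    simpa only [zero_add] using this
  have hR2 : ∑ j ∈ range (N - 2 * m), R (m + j) ≤ ∑ j ∈ range (N + 1), R j :=
    shift_sum_le R hRn m (N - 2 * m) (N + 1) (by omega)
  have hcard : (N : ℝ) / 2 ≤ ((N - 2 * m : ℕ) : ℝ) := by
    rw [Nat.cast_sub (by omega)]
    push_cast
    have : 4 * (m : ℝ) ≤ N := by exact_mod_cast hmN
    linarith
  have h1 : (N : ℝ) / 2 * ((n : ℝ) * m * δ ^ 2 / 16) ≤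
      ((N - 2 * m : ℕ) : ℝ) * ((n : ℝ) * m * δ ^ 2 / 16) := by gcongr
  have h2 : (m : ℝ) * ∑ j ∈ range (N - 2 * m), W j ≤
      m * (2 * m * ∑ j ∈ range (N - 1), Vv δ φ i j) := by gcongr
  have h3 : (n : ℝ) * (∑ j ∈ range (N - 2 * m), R j + ∑ j ∈ range (N - 2 * m), R (m + j)) ≤
      n * (∑ j ∈ range (N + 1), R j + ∑ j ∈ range (N + 1), R j) := by gcongr
  linarith


/-- total vertical -/
def Vtot (δ : ℝ) (N : ℕ) (φ : ℕ → ℕ → ℝ) : ℝ :=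
  ∑ i ∈ range (N + 1), ∑ j ∈ range (N - 1), Vv δ φ i j

/-- total horizontal -/
def Rtot (δ : ℝ) (N : ℕ) (φ : ℕ → ℕ → ℝ) : ℝ :=
  ∑ j ∈ range (N + 1), ∑ i ∈ range (N - 1), Hh δ φ i j

lemma Rtot_nonneg (δ : ℝ) (N : ℕ) (φ : ℕ → ℕ → ℝ) : 0 ≤ Rtot δ N φ :=
  Finset.sum_nonneg fun _ _ => Finset.sum_nonneg fun _ _ => Hh_nonneg _ _ _ _

lemma Vcol_nonneg (δ : ℝ) (N : ℕ) (φ : ℕ → ℕ → ℝ) (i : ℕ) :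
    0 ≤ ∑ j ∈ range (N - 1), Vv δ φ i j :=
  Finset.sum_nonneg fun _ _ => Vv_nonneg _ _ _ _

lemma Vtot_nonneg (δ : ℝ) (N : ℕ) (φ : ℕ → ℕ → ℝ) : 0 ≤ Vtot δ N φ :=
  Finset.sum_nonneg fun _ _ => Vcol_nonneg _ _ _ _

lemma partA (δ : ℝ) (hδ : 0 < δ) (N : ℕ) (φ : ℕ → ℕ → ℝ) (h0 : ∀ j ≤ N, φ 0 j = 0)
    (hH : ∀ i j, i + 1 ≤ N → j ≤ N → |φ (i + 1) j - φ i j| ≤ 1 / 2)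
    (hV : ∀ i j, i ≤ N → j + 1 ≤ N → |φ i (j + 1) - φ i j| ≤ 1 / 2)
    (m : ℕ) (hm : 1 ≤ m) (hmδ : (m : ℝ) ^ 2 * δ ≤ 1) (hmN : 4 * m ≤ N) :
    (N : ℝ) * m * δ ^ 2 / 4096 ≤ Vtot δ N φ + Rtot δ N φ := by
  have hm1 : (1 : ℝ) ≤ m := by exact_mod_cast hm
  have hm0 : (0 : ℝ) < m := by linarith
  have hRn := Rtot_nonneg δ N φ
  set q : ℕ := m / 32 + 1 with hq
  have hq1 : (m : ℝ) ≤ 32 * q := by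
    have : m ≤ 32 * q := by omega
    exact_mod_cast this
  have hq2 : (q : ℝ) ≤ 2 * m := by
    have : q ≤ 2 * m := by omega
    exact_mod_cast this
  have h1 : ∀ i ∈ range q, (N : ℝ) * δ ^ 2 / 32 * (m : ℝ) ≤
      2 * m * (∑ j ∈ range (N - 1), Vv δ φ i j) + 2 * Rtot δ N φ := by
    intro i hi
    have hi' := Finset.mem_range.1 hi
    have h := star δ hδ N φ h0 hH hV i m m (by omega) hm le_rfl hmδ hmN
    change _ ≤ _ + 2 * (m : ℝ) * Rtot δ N φ at h
    apply le_of_mul_le_mul_left _ hm0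
    linarith
  have h2 := Finset.sum_le_sum h1
  rw [Finset.sum_const, Finset.card_range, nsmul_eq_mul, Finset.sum_add_distrib,
    ← Finset.mul_sum, Finset.sum_const, Finset.card_range, nsmul_eq_mul] at h2
  have h3 : ∑ i ∈ range q, ∑ j ∈ range (N - 1), Vv δ φ i j ≤ Vtot δ N φ := by
    apply Finset.sum_le_sum_of_subset_of_nonneg
    · exact Finset.range_subset_range.2 (by omega)
    · intros; exact Vcol_nonneg _ _ _ _
  have h4 : (m : ℝ) / 32 * ((N : ℝ) * δ ^ 2 / 32 * m) ≤ q * ((N : ℝ) * δ ^ 2 / 32 * m) := by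
    apply mul_le_mul_of_nonneg_right _ (by positivity)
    linarith
  have h5 : (q : ℝ) * (2 * Rtot δ N φ) ≤ 2 * m * (2 * Rtot δ N φ) := by gcongr
  have h6 : 2 * m * ∑ i ∈ range q, ∑ j ∈ range (N - 1), Vv δ φ i j ≤ 2 * m * Vtot δ N φ := by
    gcongr
  have h7 : 0 ≤ (m : ℝ) * Vtot δ N φ := mul_nonneg hm0.le (Vtot_nonneg _ _ _)
  apply le_of_mul_le_mul_left _ hm0
  linarith

lemma sum_inv_sq (D M : ℕ) (hD : 1 ≤ D) (hM : D ≤ M) :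
    ∑ i ∈ Ico D M, 1 / (i : ℝ) ^ 2 ≤ 2 / (D : ℝ) - 2 / (M : ℝ) := by
  induction M, hM using Nat.le_induction with
  | base => simp
  | succ M hM ih =>
    rw [Finset.sum_Ico_succ_top hM]
    have hM1 : (1 : ℝ) ≤ M := by exact_mod_cast hD.trans hM
    have : 1 / (M : ℝ) ^ 2 ≤ 2 / M - 2 / ((M + 1 : ℕ) : ℝ) := by
      push_cast
      rw [div_sub_div _ _ (by positivity) (by positivity), div_le_div_iff₀ (by positivity)
        (by positivity)]
      nlinarith [sq_nonneg (M : ℝ)]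
    linarith

lemma log_le_sum (D M : ℕ) (hD : 1 ≤ D) (hM : D ≤ M) :
    Real.log (M / D) ≤ ∑ i ∈ Ico D M, 1 / (i : ℝ) := by
  have hD0 : (0 : ℝ) < D := by exact_mod_cast hD
  induction M, hM using Nat.le_induction with
  | base => simp [div_self hD0.ne']
  | succ M hM ih =>
    rw [Finset.sum_Ico_succ_top hM]
    have hM1 : (1 : ℝ) ≤ M := by exact_mod_cast hD.trans hM
    have hM0 : (0 : ℝ) < M := by linarith
    have h1 : Real.log (((M + 1 : ℕ) : ℝ) / D) = Real.log (M / D) + Real.log (1 + 1 / M) := by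
      rw [← Real.log_mul (by positivity) (by positivity)]
      congr 1
      push_cast
      field_simp
    have h2 := Real.log_le_sub_one_of_pos (x := 1 + 1 / (M : ℝ)) (by positivity)
    rw [h1]
    linarith

lemma partB (δ : ℝ) (hδ : 0 < δ) (N : ℕ) (φ : ℕ → ℕ → ℝ) (h0 : ∀ j ≤ N, φ 0 j = 0)
    (hH : ∀ i j, i + 1 ≤ N → j ≤ N → |φ (i + 1) j - φ i j| ≤ 1 / 2)
    (hV : ∀ i j, i ≤ N → j + 1 ≤ N → |φ i (j + 1) - φ i j| ≤ 1 / 2)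
    (D : ℕ) (hD : 1 ≤ D) (hDδ : (D : ℝ) ^ 2 * δ ≤ 1) :
    (N : ℝ) * D * δ ^ 2 / 2048 * Real.log (((N / 128 + 1 : ℕ) : ℝ) / D) ≤
      Vtot δ N φ + Rtot δ N φ := by
  have hD0 : (0 : ℝ) < D := by exact_mod_cast hD
  have hRn := Rtot_nonneg δ N φ
  have hVn := Vtot_nonneg δ N φ
  set M := N / 128 + 1 with hM
  rcases le_total M D with hMD | hMD
  · have : Real.log ((M : ℝ) / D) ≤ 0 := by
      apply Real.log_nonpos (by positivity)
      rw [div_le_one hD0]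
      exact_mod_cast hMD
    have h1 : (N : ℝ) * D * δ ^ 2 / 2048 * Real.log ((M : ℝ) / D) ≤ 0 :=
      mul_nonpos_of_nonneg_of_nonpos (by positivity) this
    linarith
  have h1 : ∀ i ∈ Ico D M, (N : ℝ) * D * δ ^ 2 / 2048 * (1 / (i : ℝ)) ≤
      (∑ j ∈ range (N - 1), Vv δ φ i j) + D / 1024 * Rtot δ N φ * (1 / (i : ℝ) ^ 2) := by
    intro i hi
    have hi' := Finset.mem_Ico.1 hi
    have hi0 : (0 : ℝ) < i := by exact_mod_cast (lt_of_lt_of_le hD hi'.1)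
    have h := star δ hδ N φ h0 hH hV i (32 * i) D le_rfl (by omega) (by omega) hDδ (by omega)
    change _ ≤ _ + 2 * (D : ℝ) * Rtot δ N φ at h
    push_cast at h
    have e1 : (N : ℝ) * D * δ ^ 2 / 2048 * (1 / (i : ℝ)) =
        ((N : ℝ) * D * (32 * i) * δ ^ 2 / 32) / (2048 * (i : ℝ) ^ 2) := by
      field_simp
    have e2 : (∑ j ∈ range (N - 1), Vv δ φ i j) + D / 1024 * Rtot δ N φ * (1 / (i : ℝ) ^ 2) =
        (2 * (32 * (i : ℝ)) ^ 2 * (∑ j ∈ range (N - 1), Vv δ φ i j) + 2 * D * Rtot δ N φ) /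
          (2048 * (i : ℝ) ^ 2) := by
      field_simp
      ring
    rw [e1, e2]
    gcongr
  have h2 := Finset.sum_le_sum h1
  rw [← Finset.mul_sum, Finset.sum_add_distrib, ← Finset.mul_sum] at h2
  have h3 : ∑ i ∈ Ico D M, ∑ j ∈ range (N - 1), Vv δ φ i j ≤ Vtot δ N φ := by
    apply Finset.sum_le_sum_of_subset_of_nonneg
    · intro x hx
      simp only [Finset.mem_Ico, Finset.mem_range] at *
      omega
    · intros; exact Vcol_nonneg _ _ _ _
  have h4 := log_le_sum D M hD hMD
  have h5 : ∑ i ∈ Ico D M, 1 / (i : ℝ) ^ 2 ≤ 2 / (D : ℝ) := by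
    have := sum_inv_sq D M hD hMD
    have h : (0 : ℝ) ≤ 2 / M := by positivity
    linarith
  have h6 : D / 1024 * Rtot δ N φ * ∑ i ∈ Ico D M, 1 / (i : ℝ) ^ 2 ≤
      D / 1024 * Rtot δ N φ * (2 / D) := by gcongr
  have h7 : D / 1024 * Rtot δ N φ * (2 / D) = Rtot δ N φ / 512 := by
    field_simp; ring
  have h8 : (N : ℝ) * D * δ ^ 2 / 2048 * Real.log ((M : ℝ) / D) ≤
      (N : ℝ) * D * δ ^ 2 / 2048 * ∑ i ∈ Ico D M, 1 / (i : ℝ) := by gcongr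
  linarith

lemma GG_le_hh (δ a b : ℝ) (ha : |a| ≤ 1 / 2) (hb : |b| ≤ 1 / 2) :
    GG δ (Real.sin (a / 2)) (Real.sin (b / 2)) ≤ hh δ a b := by
  rw [abs_le] at ha hb
  unfold GG hh
  have ca : Real.cos a = 1 - 2 * Real.sin (a / 2) ^ 2 := by
    have := Real.cos_two_mul (a / 2)
    rw [show 2 * (a / 2) = a by ring] at this
    linarith [Real.sin_sq_add_cos_sq (a / 2)]
  have cb : Real.cos b = 1 - 2 * Real.sin (b / 2) ^ 2 := by
    have := Real.cos_two_mul (b / 2)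
    rw [show 2 * (b / 2) = b by ring] at this
    linarith [Real.sin_sq_add_cos_sq (b / 2)]
  have e1 : Real.sin b - Real.sin a =
      4 * Real.sin ((b - a) / 4) * Real.cos ((b - a) / 4) * Real.cos ((b + a) / 2) := by
    rw [Real.sin_sub_sin]
    have := Real.sin_two_mul ((b - a) / 4)
    rw [show 2 * ((b - a) / 4) = (b - a) / 2 by ring] at this
    rw [this]; ring
  have e2 : Real.sin (b / 2) - Real.sin (a / 2) =
      2 * Real.sin ((b - a) / 4) * Real.cos ((b + a) / 4) := by
    rw [Real.sin_sub_sin]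
    ring_nf
  have c1 : 3 / 4 ≤ Real.cos ((b - a) / 4) := by
    have := Real.one_sub_sq_div_two_le_cos (x := (b - a) / 4)
    nlinarith
  have c2 : 3 / 4 ≤ Real.cos ((b + a) / 2) := by
    have := Real.one_sub_sq_div_two_le_cos (x := (b + a) / 2)
    nlinarith
  have c3 := Real.cos_sq_le_one ((b + a) / 4)
  rw [ca, cb, e1, e2]
  set t := Real.sin ((b - a) / 4)
  set C1 := Real.cos ((b - a) / 4)
  set C2 := Real.cos ((b + a) / 2)
  set C3 := Real.cos ((b + a) / 4)
  have h1 : (2 * t * C3) ^ 2 ≤ (4 * t * C1 * C2) ^ 2 := by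
    have h2 : 9 / 16 ≤ C1 * C2 := by nlinarith
    have h3 : 1 ≤ 4 * (C1 * C2) ^ 2 := by nlinarith
    calc (2 * t * C3) ^ 2 = 4 * t ^ 2 * C3 ^ 2 := by ring
      _ ≤ 4 * t ^ 2 * (4 * (C1 * C2) ^ 2) := by
          apply mul_le_mul_of_nonneg_left (by linarith) (by positivity)
      _ = _ := by ring
  nlinarith

lemma cos_small {d : ℝ} (hd : |d| ≤ π) (hc : 97 / 100 ≤ Real.cos d) : |d| ≤ 1 / 2 := by
  by_contra h
  push Not at h
  have h1 : Real.cos |d| < Real.cos (1 / 2) :=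
    Real.cos_lt_cos_of_nonneg_of_le_pi (by norm_num) hd h
  rw [Real.cos_abs] at h1
  have h2 : Real.cos (1 / 2) = 1 - 2 * Real.sin (1 / 4) ^ 2 := by
    have := Real.cos_two_mul (1 / 4)
    rw [show (2 : ℝ) * (1 / 4) = 1 / 2 by norm_num] at this
    linarith [Real.sin_sq_add_cos_sq (1 / 4)]
  have h3 := Real.sin_gt_sub_cube (x := 1 / 4) (by norm_num)
  nlinarith

lemma angle_step (φ : ℝ) (v : ℝ × ℝ) : ∃ φ' : ℝ, sqnorm v = 1 →
    v = (Real.sin φ', Real.cos φ') ∧ |φ' - φ| ≤ π := by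
  by_cases hv : sqnorm v = 1
  swap
  · exact ⟨0, fun h => absurd h hv⟩
  unfold sqnorm at hv
  set z : ℂ := ⟨v.2, v.1⟩ with hz
  have hn : ‖z‖ = 1 := by
    rw [← sq_eq_sq₀ (norm_nonneg _) (by norm_num), ← Complex.normSq_eq_norm_sq, Complex.normSq_apply]
    simp only [hz]
    linarith
  have hc := Complex.norm_mul_cos_arg z
  have hs := Complex.norm_mul_sin_arg z
  rw [hn, one_mul] at hc hs
  refine ⟨toIocMod Real.two_pi_pos (φ - π) z.arg, fun _ => ⟨?_, ?_⟩⟩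
  · have e : toIocMod Real.two_pi_pos (φ - π) z.arg =
        z.arg - (toIocDiv Real.two_pi_pos (φ - π) z.arg : ℤ) * (2 * π) := by
      rw [toIocMod, zsmul_eq_mul]
    rw [e, Real.sin_sub_int_mul_two_pi, Real.cos_sub_int_mul_two_pi, hc, hs]
  · have := toIocMod_mem_Ioc Real.two_pi_pos (φ - π) z.arg
    rw [Set.mem_Ioc] at this
    rw [abs_le]
    constructor <;> linarith [this.1, this.2]

lemma lift_row (N : ℕ) (w : ℕ → ℝ × ℝ) (h0 : w 0 = (0, 1)) (hw : ∀ k ≤ N, sqnorm (w k) = 1) :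
    ∃ φ : ℕ → ℝ, φ 0 = 0 ∧ (∀ k ≤ N, w k = (Real.sin (φ k), Real.cos (φ k))) ∧
      ∀ k, k + 1 ≤ N → |φ (k + 1) - φ k| ≤ π := by
  choose f hf using angle_step
  let φ : ℕ → ℝ := fun k => Nat.rec 0 (fun k r => f r (w (k + 1))) k
  have hs : ∀ k, φ (k + 1) = f (φ k) (w (k + 1)) := fun k => rfl
  refine ⟨φ, rfl, ?_, ?_⟩
  · intro k hk
    cases k with
    | zero => rw [h0]; simp [φ]
    | succ k => rw [hs]; exact (hf _ _ (hw _ hk)).1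
  · intro k hk
    rw [hs]; exact (hf _ _ (hw _ hk)).2

lemma term_eq (δ x y z : ℝ) :
    sqnorm ((Real.sin x, Real.cos x) - (2 * (1 - δ)) • (Real.sin y, Real.cos y)
      + (Real.sin z, Real.cos z)) = hh δ (y - x) (z - y) := by
  unfold sqnorm hh
  obtain ⟨a, rfl⟩ : ∃ a, x = y - a := ⟨y - x, by ring⟩
  obtain ⟨b, rfl⟩ : ∃ b, z = y + b := ⟨z - y, by ring⟩
  rw [show y - (y - a) = a by ring, show y + b - y = b by ring]
  simp only [Prod.fst_add, Prod.fst_sub, Prod.smul_fst, Prod.snd_add, Prod.snd_sub,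
    Prod.smul_snd, smul_eq_mul]
  rw [Real.sin_sub, Real.cos_sub, Real.sin_add, Real.cos_add]
  linear_combination ((Real.cos a + Real.cos b - 2 + 2 * δ) ^ 2 +
    (Real.sin b - Real.sin a) ^ 2) * Real.sin_sq_add_cos_sq y

lemma sum_Icc_int (k : ℤ) (n : ℕ) (h : k + 1 = n) (f : ℤ → ℝ) :
    ∑ i ∈ Icc (0 : ℤ) k, f i = ∑ i ∈ range n, f i := by
  symm
  apply Finset.sum_bij (fun (i : ℕ) _ => (i : ℤ))
  · intro a ha
    simp only [Finset.mem_range, Finset.mem_Icc] at *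
    omega
  · intro a _ b _ hab
    exact_mod_cast hab
  · intro b hb
    simp only [Finset.mem_Icc] at hb
    exact ⟨b.toNat, by simp only [Finset.mem_range]; omega, by simp [hb.1]⟩
  · intros; rfl

lemma Ehor_eq (ε δ : ℝ) (u : ℤ × ℤ → ℝ × ℝ) (N : ℕ) (hN : Kof ε = N) (h2 : 2 ≤ N) :
    Ehor ε δ u = ε ^ 2 / 2 * ∑ j ∈ range (N + 1), ∑ i ∈ range (N - 1),
      sqnorm (u ((i : ℤ), (j : ℤ)) - (2 * (1 - δ)) • u (((i + 1 : ℕ) : ℤ), (j : ℤ))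
        + u (((i + 1 + 1 : ℕ) : ℤ), (j : ℤ))) := by
  unfold Ehor IdxH
  rw [Finset.sum_product, hN, Finset.sum_comm, sum_Icc_int (N : ℤ) (N + 1) (by push_cast; ring)]
  congr 1
  apply Finset.sum_congr rfl
  intro j _
  rw [sum_Icc_int ((N : ℤ) - 2) (N - 1) (by omega)]
  apply Finset.sum_congr rfl
  intro i _
  push_cast
  rw [add_assoc]
  norm_num

lemma Ever_eq (ε δ : ℝ) (u : ℤ × ℤ → ℝ × ℝ) (N : ℕ) (hN : Kof ε = N) (h2 : 2 ≤ N) :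
    Ever ε δ u = ε ^ 2 / 2 * ∑ i ∈ range (N + 1), ∑ j ∈ range (N - 1),
      sqnorm (u ((i : ℤ), (j : ℤ)) - (2 * (1 - δ)) • u ((i : ℤ), ((j + 1 : ℕ) : ℤ))
        + u ((i : ℤ), ((j + 1 + 1 : ℕ) : ℤ))) := by
  unfold Ever IdxV
  rw [Finset.sum_product, hN, sum_Icc_int (N : ℤ) (N + 1) (by push_cast; ring)]
  congr 1
  apply Finset.sum_congr rfl
  intro j _
  rw [sum_Icc_int ((N : ℤ) - 2) (N - 1) (by omega)]
  apply Finset.sum_congr rfl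
  intro i _
  push_cast
  rw [add_assoc]
  norm_num

lemma Kof_facts (ε : ℝ) (h0 : 0 < ε) (h1 : ε < 1 / 2) :
    ∃ N : ℕ, Kof ε = N ∧ 2 ≤ N ∧ 1 ≤ ε * (N + 1) ∧ 1 / 2 ≤ ε * N := by
  have hinv : 2 < 1 / ε := by rw [lt_div_iff₀ h0]; linarith
  have hc : (3 : ℤ) ≤ ⌈1 / ε⌉ := by
    have : (2 : ℤ) < ⌈1 / ε⌉ := by rw [Int.lt_ceil]; exact_mod_cast hinv
    omega
  have hle := Int.le_ceil (1 / ε)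
  refine ⟨(Kof ε).toNat, ?_, ?_⟩
  · unfold Kof; omega
  have hK : ((Kof ε).toNat : ℝ) = (⌈1 / ε⌉ : ℝ) - 1 := by
    have : (((Kof ε).toNat : ℤ) : ℝ) = ((⌈1 / ε⌉ - 1 : ℤ) : ℝ) := by
      congr 1
      unfold Kof; omega
    push_cast at this
    simpa using this
  have hm : 1 ≤ ε * (⌈1 / ε⌉ : ℝ) := by
    rw [div_le_iff₀ h0] at hle
    linarith
  refine ⟨by unfold Kof; omega, ?_, ?_⟩
  · rw [hK]; linarith
  · rw [hK]; linarith

lemma sqnorm_nonneg (v : ℝ × ℝ) : 0 ≤ sqnorm v := by unfold sqnorm; positivity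

lemma col_bound (ε δ : ℝ) (h0 : 0 < ε) (h1 : ε < 1 / 2) (u : ℤ × ℤ → ℝ × ℝ) (hu : InS0 ε u) :
    2 / 3 * ε * δ ^ 2 ≤ E ε δ u := by
  obtain ⟨N, hN, hN2, hNε, -⟩ := Kof_facts ε h0 h1
  unfold E
  have hhor : 0 ≤ Ehor ε δ u := by
    unfold Ehor
    exact mul_nonneg (by positivity) (Finset.sum_nonneg fun _ _ => sqnorm_nonneg _)
  rw [Ever_eq ε δ u N hN hN2]
  have hb : ∀ j : ℕ, j ≤ N → u (((0 : ℕ) : ℤ), (j : ℤ)) = (0, 1) := by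
    intro j hj
    apply hu.2
    rw [Finset.mem_Icc, hN]
    omega
  have hcol : ∑ j ∈ range (N - 1), sqnorm (u (((0 : ℕ) : ℤ), (j : ℤ)) -
      (2 * (1 - δ)) • u (((0 : ℕ) : ℤ), ((j + 1 : ℕ) : ℤ))
        + u (((0 : ℕ) : ℤ), ((j + 1 + 1 : ℕ) : ℤ))) = ((N : ℝ) - 1) * (4 * δ ^ 2) := by
    rw [Finset.sum_congr rfl (g := fun _ => 4 * δ ^ 2)]
    · rw [Finset.sum_const, Finset.card_range, nsmul_eq_mul, Nat.cast_sub (by omega)]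
      simp
    · intro j hj
      have := Finset.mem_range.1 hj
      rw [hb j (by omega), hb (j + 1) (by omega), hb (j + 1 + 1) (by omega)]
      simp [sqnorm]
      ring
  have hle := Finset.single_le_sum (s := range (N + 1)) (a := 0)
    (f := fun i : ℕ => ∑ j ∈ range (N - 1), sqnorm (u ((i : ℤ), (j : ℤ)) -
      (2 * (1 - δ)) • u ((i : ℤ), ((j + 1 : ℕ) : ℤ)) + u ((i : ℤ), ((j + 1 + 1 : ℕ) : ℤ))))
    (fun _ _ => Finset.sum_nonneg fun _ _ => sqnorm_nonneg _) (Finset.mem_range.2 (by omega))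
  rw [hcol] at hle
  have hN2' : (2 : ℝ) ≤ N := by exact_mod_cast hN2
  have h3 : 1 / 3 ≤ ε * ((N : ℝ) - 1) := by nlinarith
  have h4 : ε ^ 2 / 2 * (((N : ℝ) - 1) * (4 * δ ^ 2)) ≤ ε ^ 2 / 2 * ∑ i ∈ range (N + 1),
      ∑ j ∈ range (N - 1), sqnorm (u ((i : ℤ), (j : ℤ)) -
      (2 * (1 - δ)) • u ((i : ℤ), ((j + 1 : ℕ) : ℤ)) + u ((i : ℤ), ((j + 1 + 1 : ℕ) : ℤ))) := by
    gcongr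
  have h5 : 2 / 3 * ε * δ ^ 2 ≤ ε ^ 2 / 2 * (((N : ℝ) - 1) * (4 * δ ^ 2)) := by
    calc 2 / 3 * ε * δ ^ 2 = (1 / 3) * (2 * ε * δ ^ 2) := by ring
      _ ≤ (ε * ((N : ℝ) - 1)) * (2 * ε * δ ^ 2) := by gcongr
      _ = _ := by ring
  linarith

lemma cos_of_hh {δ a b : ℝ} (hδ : δ < 1 / 100) (h : hh δ a b ≤ 1 / 10000) :
    97 / 100 ≤ Real.cos a ∧ 97 / 100 ≤ Real.cos b := by
  unfold hh at h
  have h1 : (Real.cos a + Real.cos b - 2 + 2 * δ) ^ 2 ≤ (1 / 100) ^ 2 := by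
    nlinarith [sq_nonneg (Real.sin b - Real.sin a)]
  have h2 := (abs_le.1 (abs_le_of_sq_le_sq h1 (by norm_num))).1
  have h3 := Real.cos_le_one a
  have h4 := Real.cos_le_one b
  constructor <;> linarith

lemma reduce (ε δ : ℝ) (hδ : 0 < δ) (hδ1 : δ < 1 / 100) (hδε : δ ≤ ε)
    (u : ℤ × ℤ → ℝ × ℝ) (hu : InS0 ε u) (N : ℕ) (hN : Kof ε = N) (hN2 : 2 ≤ N)
    (hE : E ε δ u < δ ^ 2 / 20000) :
    ∃ φ : ℕ → ℕ → ℝ, (∀ j ≤ N, φ 0 j = 0) ∧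
    (∀ i j, i + 1 ≤ N → j ≤ N → |φ (i + 1) j - φ i j| ≤ 1 / 2) ∧
    (∀ i j, i ≤ N → j + 1 ≤ N → |φ i (j + 1) - φ i j| ≤ 1 / 2) ∧
    ε ^ 2 / 2 * (Vtot δ N φ + Rtot δ N φ) ≤ E ε δ u := by
  have hε : 0 < ε := by linarith
  have hex : ∀ j : ℕ, ∃ ψ : ℕ → ℝ, j ≤ N → (ψ 0 = 0 ∧
      (∀ k ≤ N, u ((k : ℤ), (j : ℤ)) = (Real.sin (ψ k), Real.cos (ψ k))) ∧
      ∀ k, k + 1 ≤ N → |ψ (k + 1) - ψ k| ≤ π) := by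
    intro j
    by_cases hj : j ≤ N
    · obtain ⟨ψ, h⟩ := lift_row N (fun k => u ((k : ℤ), (j : ℤ)))
        (hu.2 _ (by rw [Finset.mem_Icc, hN]; omega))
        (fun k hk => hu.1 _ (by
          rw [Idx, Finset.mem_product, Finset.mem_Icc, Finset.mem_Icc, hN]
          simp only
          omega))
      exact ⟨ψ, fun _ => h⟩
    · exact ⟨0, fun h => absurd h hj⟩
  choose ψ hψ using hex
  set φ : ℕ → ℕ → ℝ := fun i j => ψ j i with hφ
  have hu' : ∀ i j, i ≤ N → j ≤ N →
      u ((i : ℤ), (j : ℤ)) = (Real.sin (φ i j), Real.cos (φ i j)) :=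
    fun i j hi hj => (hψ j hj).2.1 i hi
  have hEh : Ehor ε δ u = ε ^ 2 / 2 * ∑ j ∈ range (N + 1), ∑ i ∈ range (N - 1),
      hh δ (φ (i + 1) j - φ i j) (φ (i + 1 + 1) j - φ (i + 1) j) := by
    rw [Ehor_eq ε δ u N hN hN2]
    congr 1
    refine Finset.sum_congr rfl fun j hj => Finset.sum_congr rfl fun i hi => ?_
    rw [Finset.mem_range] at hi hj
    rw [hu' i j (by omega) (by omega), hu' (i + 1) j (by omega) (by omega),
      hu' (i + 1 + 1) j (by omega) (by omega), term_eq]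
  have hEv : Ever ε δ u = ε ^ 2 / 2 * ∑ i ∈ range (N + 1), ∑ j ∈ range (N - 1),
      hh δ (φ i (j + 1) - φ i j) (φ i (j + 1 + 1) - φ i (j + 1)) := by
    rw [Ever_eq ε δ u N hN hN2]
    congr 1
    refine Finset.sum_congr rfl fun i hi => Finset.sum_congr rfl fun j hj => ?_
    rw [Finset.mem_range] at hi hj
    rw [hu' i j (by omega) (by omega), hu' i (j + 1) (by omega) (by omega),
      hu' i (j + 1 + 1) (by omega) (by omega), term_eq]
  have hEh0 : 0 ≤ Ehor ε δ u := by
    rw [hEh]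
    exact mul_nonneg (by positivity)
      (Finset.sum_nonneg fun _ _ => Finset.sum_nonneg fun _ _ => hh_nonneg _ _ _)
  have hEv0 : 0 ≤ Ever ε δ u := by
    rw [hEv]
    exact mul_nonneg (by positivity)
      (Finset.sum_nonneg fun _ _ => Finset.sum_nonneg fun _ _ => hh_nonneg _ _ _)
  have hsmall : ∀ x : ℝ, ε ^ 2 / 2 * x ≤ E ε δ u → x ≤ 1 / 10000 := by
    intro x hx
    have h1 : δ ^ 2 ≤ ε ^ 2 := pow_le_pow_left₀ hδ.le hδε 2
    have h2 : ε ^ 2 * x ≤ ε ^ 2 * (1 / 10000) := by linarith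
    exact le_of_mul_le_mul_left h2 (by positivity)
  have hhor : ∀ i j, i + 2 ≤ N → j ≤ N →
      hh δ (φ (i + 1) j - φ i j) (φ (i + 1 + 1) j - φ (i + 1) j) ≤ 1 / 10000 := by
    intro i j hi hj
    apply hsmall
    have h1 := Finset.single_le_sum (s := range (N - 1)) (a := i)
      (f := fun i => hh δ (φ (i + 1) j - φ i j) (φ (i + 1 + 1) j - φ (i + 1) j))
      (fun _ _ => hh_nonneg _ _ _) (Finset.mem_range.2 (by omega))
    have h2 := Finset.single_le_sum (s := range (N + 1)) (a := j)
      (f := fun j => ∑ i ∈ range (N - 1),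
        hh δ (φ (i + 1) j - φ i j) (φ (i + 1 + 1) j - φ (i + 1) j))
      (fun _ _ => Finset.sum_nonneg fun _ _ => hh_nonneg _ _ _) (Finset.mem_range.2 (by omega))
    have h3 := mul_le_mul_of_nonneg_left (h1.trans h2) (show 0 ≤ ε ^ 2 / 2 by positivity)
    rw [← hEh] at h3
    unfold E
    linarith
  have hver : ∀ i j, i ≤ N → j + 2 ≤ N →
      hh δ (φ i (j + 1) - φ i j) (φ i (j + 1 + 1) - φ i (j + 1)) ≤ 1 / 10000 := by
    intro i j hi hj
    apply hsmall
    have h1 := Finset.single_le_sum (s := range (N - 1)) (a := j)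
      (f := fun j => hh δ (φ i (j + 1) - φ i j) (φ i (j + 1 + 1) - φ i (j + 1)))
      (fun _ _ => hh_nonneg _ _ _) (Finset.mem_range.2 (by omega))
    have h2 := Finset.single_le_sum (s := range (N + 1)) (a := i)
      (f := fun i => ∑ j ∈ range (N - 1),
        hh δ (φ i (j + 1) - φ i j) (φ i (j + 1 + 1) - φ i (j + 1)))
      (fun _ _ => Finset.sum_nonneg fun _ _ => hh_nonneg _ _ _) (Finset.mem_range.2 (by omega))
    have h3 := mul_le_mul_of_nonneg_left (h1.trans h2) (show 0 ≤ ε ^ 2 / 2 by positivity)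
    rw [← hEv] at h3
    unfold E
    linarith
  have hcosH : ∀ i j, i + 1 ≤ N → j ≤ N → 97 / 100 ≤ Real.cos (φ (i + 1) j - φ i j) := by
    intro i j hi hj
    rcases Nat.lt_or_ge (i + 1) N with h | h
    · exact (cos_of_hh hδ1 (hhor i j (by omega) hj)).1
    · obtain ⟨k, rfl⟩ : ∃ k, i = k + 1 := ⟨i - 1, by omega⟩
      exact (cos_of_hh hδ1 (hhor k j (by omega) hj)).2
  have hcosV : ∀ i j, i ≤ N → j + 1 ≤ N → 97 / 100 ≤ Real.cos (φ i (j + 1) - φ i j) := by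
    intro i j hi hj
    rcases Nat.lt_or_ge (j + 1) N with h | h
    · exact (cos_of_hh hδ1 (hver i j hi (by omega))).1
    · obtain ⟨k, rfl⟩ : ∃ k, j = k + 1 := ⟨j - 1, by omega⟩
      exact (cos_of_hh hδ1 (hver i k hi (by omega))).2
  have h0 : ∀ j ≤ N, φ 0 j = 0 := fun j hj => (hψ j hj).1
  have hH : ∀ i j, i + 1 ≤ N → j ≤ N → |φ (i + 1) j - φ i j| ≤ 1 / 2 :=
    fun i j hi hj => cos_small ((hψ j hj).2.2 i hi) (hcosH i j hi hj)
  have hV : ∀ i j, i ≤ N → j + 1 ≤ N → |φ i (j + 1) - φ i j| ≤ 1 / 2 := by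
    intro i
    induction i with
    | zero =>
      intro j _ hj
      rw [h0 (j + 1) hj, h0 j (by omega)]
      norm_num
    | succ i ih =>
      intro j hi hj
      apply cos_small _ (hcosV (i + 1) j hi hj)
      have h1 := abs_le.1 (ih j (by omega) hj)
      have h2 := abs_le.1 (hH i j hi (by omega))
      have h3 := abs_le.1 (hH i (j + 1) hi hj)
      have := Real.pi_gt_three
      rw [abs_le]
      constructor <;> linarith [h1.1, h1.2, h2.1, h2.2, h3.1, h3.2]
  refine ⟨φ, h0, hH, hV, ?_⟩
  unfold E
  rw [hEh, hEv]
  have hR : Rtot δ N φ ≤ ∑ j ∈ range (N + 1), ∑ i ∈ range (N - 1),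
      hh δ (φ (i + 1) j - φ i j) (φ (i + 1 + 1) j - φ (i + 1) j) := by
    refine Finset.sum_le_sum fun j hj => Finset.sum_le_sum fun i hi => ?_
    rw [Finset.mem_range] at hi hj
    exact GG_le_hh _ _ _ (hH i j (by omega) (by omega)) (hH (i + 1) j (by omega) (by omega))
  have hVt : Vtot δ N φ ≤ ∑ i ∈ range (N + 1), ∑ j ∈ range (N - 1),
      hh δ (φ i (j + 1) - φ i j) (φ i (j + 1 + 1) - φ i (j + 1)) := by
    refine Finset.sum_le_sum fun i hi => Finset.sum_le_sum fun j hj => ?_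
    rw [Finset.mem_range] at hi hj
    exact GG_le_hh _ _ _ (hV i j (by omega) (by omega)) (hV i (j + 1) (by omega) (by omega))
  rw [← mul_add]
  apply mul_le_mul_of_nonneg_left _ (by positivity)
  linarith

lemma log256 : Real.log 256 ≤ 6 := by
  rw [show (256 : ℝ) = 2 ^ 8 by norm_num, Real.log_pow]
  have := Real.log_two_lt_d9
  push_cast
  linarith

/-- both lower bounds in the small-energy regime -/
lemma two_bounds (ε δ : ℝ) (hδ : 0 < δ) (hδ1 : δ < 1 / 100) (hδε : δ ≤ ε) (hε2 : ε < 1 / 2)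
    (u : ℤ × ℤ → ℝ × ℝ) (hu : InS0 ε u) (hE : E ε δ u < δ ^ 2 / 20000) :
    min (δ ^ 2) (ε * (δ * Real.sqrt δ)) / 262144 ≤ E ε δ u ∧
    (ε < Real.sqrt δ → ε * (δ * Real.sqrt δ) / 16384 * (Real.log (Real.sqrt δ / ε) - 6) ≤
      E ε δ u) := by
  have hε : 0 < ε := by linarith
  obtain ⟨N, hN, hN2, hN1, hNh⟩ := Kof_facts ε hε hε2
  obtain ⟨φ, h0, hH, hV, hen⟩ := reduce ε δ hδ hδ1 hδε u hu N hN hN2 hE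
  set s := Real.sqrt δ with hs
  have hs0 : 0 < s := Real.sqrt_pos.2 hδ
  have hsq : s ^ 2 = δ := Real.sq_sqrt hδ.le
  have hs1 : s < 1 := by nlinarith
  set D : ℕ := ⌊1 / s⌋₊ with hD
  have hDle : (D : ℝ) ≤ 1 / s := Nat.floor_le (by positivity)
  have hDs : (D : ℝ) * s ≤ 1 := by rwa [le_div_iff₀ hs0] at hDle
  have hD1 : 1 ≤ D := by
    apply Nat.le_floor
    rw [le_div_iff₀ hs0]
    push_cast
    linarith
  have hD1r : (1 : ℝ) ≤ D := by exact_mod_cast hD1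
  have hDgt : 1 / s < D + 1 := Nat.lt_floor_add_one _
  have hDs2 : 1 / 2 ≤ D * s := by
    rw [div_lt_iff₀ hs0] at hDgt
    nlinarith
  have hDδ : (D : ℝ) ^ 2 * δ ≤ 1 := by
    rw [← hsq, ← mul_pow]
    exact pow_le_one₀ (by positivity) hDs
  have hNr : (2 : ℝ) ≤ N := by exact_mod_cast hN2
  have hE0 : 0 ≤ E ε δ u := le_trans (mul_nonneg (by positivity)
    (add_nonneg (Vtot_nonneg _ _ _) (Rtot_nonneg _ _ _))) hen
  -- the key quantity
  have hkey : ε * (δ * s) / 4 ≤ ε ^ 2 * (N * D * δ ^ 2) := by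
    have h1 : (1 / 2) * (1 / 2) ≤ (ε * N) * (D * s) := by gcongr
    calc ε * (δ * s) / 4 = (1 / 2) * (1 / 2) * (ε * (δ * s)) := by ring
      _ ≤ (ε * N) * (D * s) * (ε * (δ * s)) := by gcongr
      _ = ε ^ 2 * (N * D * (δ * s ^ 2)) := by ring
      _ = _ := by rw [hsq]; ring
  constructor
  · rcases Nat.lt_or_ge N 4 with h4 | h4
    · have hc := col_bound ε δ hε hε2 u hu
      have hN3 : (N : ℝ) ≤ 3 := by
        have : N ≤ 3 := by omega
        exact_mod_cast this
      have he : 1 / 4 ≤ ε := by nlinarith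
      have : min (δ ^ 2) (ε * (δ * s)) ≤ δ ^ 2 := min_le_left _ _
      nlinarith [sq_nonneg δ]
    · rcases le_total (N / 4) D with hm | hm
      · have hmD : ((N / 4 : ℕ) : ℝ) ≤ D := by exact_mod_cast hm
        have hA := partA δ hδ N φ h0 hH hV (N / 4) (by omega) (by
          refine le_trans ?_ hDδ
          gcongr) (by omega)
        have hm8 : (N : ℝ) / 8 ≤ ((N / 4 : ℕ) : ℝ) := by
          have : N ≤ 8 * (N / 4) := by omega
          have : (N : ℝ) ≤ 8 * ((N / 4 : ℕ) : ℝ) := by exact_mod_cast this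
          linarith
        have h1 : (N : ℝ) * (N / 8) * δ ^ 2 / 4096 ≤ N * ((N / 4 : ℕ) : ℝ) * δ ^ 2 / 4096 := by
          gcongr
        have h2 : ε ^ 2 / 2 * ((N : ℝ) * (N / 8) * δ ^ 2 / 4096) ≤ E ε δ u :=
          le_trans (by gcongr; exact h1.trans hA) hen
        have h3 : (1 / 2 : ℝ) ^ 2 ≤ (ε * N) ^ 2 := by gcongr
        have h5 : (1 / 2 : ℝ) ^ 2 * (δ ^ 2 / 65536) ≤ (ε * N) ^ 2 * (δ ^ 2 / 65536) := by gcongr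
        have h6 : min (δ ^ 2) (ε * (δ * s)) ≤ δ ^ 2 := min_le_left _ _
        have h7 : (ε * N) ^ 2 * (δ ^ 2 / 65536) =
          ε ^ 2 / 2 * ((N : ℝ) * (N / 8) * δ ^ 2 / 4096) := by ring
        linarith
      · have hA := partA δ hδ N φ h0 hH hV D hD1 hDδ (by omega)
        have h2 : ε ^ 2 / 2 * ((N : ℝ) * D * δ ^ 2 / 4096) ≤ E ε δ u :=
          le_trans (by gcongr) hen
        have h6 : min (δ ^ 2) (ε * (δ * s)) ≤ ε * (δ * s) := min_le_right _ _
        have h7 : 0 ≤ ε * (δ * s) := by positivity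
        linarith
  · intro hεs
    by_cases hlog : Real.log (s / ε) - 6 ≤ 0
    · refine le_trans ?_ hE0
      exact mul_nonpos_of_nonneg_of_nonpos (by positivity) hlog
    push Not at hlog
    have hB := partB δ hδ N φ h0 hH hV D hD1 hDδ
    set L := Real.log (((N / 128 + 1 : ℕ) : ℝ) / D) with hL
    have hLL : Real.log (s / ε) - 6 ≤ L := by
      have h1 : Real.log (s / ε) - Real.log 256 = Real.log (s / ε / 256) :=
        (Real.log_div (by positivity) (by norm_num)).symm
      have h2 : Real.log (s / ε / 256) ≤ L := by
        apply Real.log_le_log (by positivity)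
        have h3 : (N : ℝ) / 128 ≤ ((N / 128 + 1 : ℕ) : ℝ) := by
          have : N ≤ 128 * (N / 128 + 1) := by omega
          have : (N : ℝ) ≤ 128 * ((N / 128 + 1 : ℕ) : ℝ) := by exact_mod_cast this
          linarith
        rw [div_div, div_le_div_iff₀ (by positivity) (by positivity)]
        have h4 : (1 : ℝ) ≤ ((N / 128 + 1 : ℕ) : ℝ) * (ε * 256) := by nlinarith
        linarith
      linarith [log256]
    have h2 : ε ^ 2 / 2 * ((N : ℝ) * D * δ ^ 2 / 2048 * L) ≤ E ε δ u :=
      le_trans (by gcongr) hen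
    have hL0 : 0 ≤ L := by linarith
    calc ε * (δ * s) / 16384 * (Real.log (s / ε) - 6) ≤ ε * (δ * s) / 16384 * L := by gcongr
      _ = ε * (δ * s) / 4 * (L / 4096) := by ring
      _ ≤ ε ^ 2 * (N * D * δ ^ 2) * (L / 4096) := by gcongr
      _ = ε ^ 2 / 2 * ((N : ℝ) * D * δ ^ 2 / 2048 * L) := by ring
      _ ≤ _ := h2

end LB

end

/-- Theorem 2.2(ii) / Proposition 5.6: lower bound of the scaling law. -/
theorem lower_bound_scaling :
    ∃ δbar ∈ Set.Ioo (0 : ℝ) 1, ∃ c : ℝ, 0 < c ∧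
      (∀ ε ∈ Set.Ioo (0 : ℝ) (1 / 2), ∀ δ ∈ Set.Ico δbar 1,
        ∀ u : ℤ × ℤ → ℝ × ℝ, InS0 ε u → c * (ε * Real.sqrt δ) ≤ E ε δ u) ∧
      (∀ δ ∈ Set.Ioo (0 : ℝ) δbar, ∀ ε ∈ Set.Ico δ (1 / 2),
        ∀ u : ℤ × ℤ → ℝ × ℝ, InS0 ε u →
          c * min (δ ^ 2) (ε * (δ * Real.sqrt δ) * (|Real.log (ε / Real.sqrt δ)| + 1))
            ≤ E ε δ u) := by
  refine ⟨1 / 100, ⟨by norm_num, by norm_num⟩, 1 / 2000000, by norm_num, ?_, ?_⟩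
  · rintro ε ⟨hε, hε2⟩ δ ⟨hδ, hδ1⟩ u hu
    have h := LB.col_bound ε δ hε hε2 u hu
    have hs : Real.sqrt δ ≤ 1 := Real.sqrt_le_one.2 hδ1.le
    have h1 : ε * Real.sqrt δ ≤ ε := by nlinarith
    have h2 : (1 / 100 : ℝ) ^ 2 ≤ δ ^ 2 := pow_le_pow_left₀ (by norm_num) hδ 2
    have h3 : ε * (1 / 100 : ℝ) ^ 2 ≤ ε * δ ^ 2 := by gcongr
    linarith
  · rintro δ ⟨hδ, hδ1⟩ ε ⟨hδε, hε2⟩ u hu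
    have hε : 0 < ε := by linarith
    by_cases hE : E ε δ u < δ ^ 2 / 20000
    swap
    · push Not at hE
      have : min (δ ^ 2) (ε * (δ * Real.sqrt δ) * (|Real.log (ε / Real.sqrt δ)| + 1)) ≤ δ ^ 2 :=
        min_le_left _ _
      nlinarith [sq_nonneg δ]
    obtain ⟨hA, hB⟩ := LB.two_bounds ε δ hδ hδ1 hδε hε2 u hu hE
    have hs0 : 0 < Real.sqrt δ := Real.sqrt_pos.2 hδ
    have hsq : Real.sqrt δ ^ 2 = δ := Real.sq_sqrt hδ.le
    rcases lt_or_ge ε (Real.sqrt δ) with h | h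
    · have hB' := hB h
      have hF : min (δ ^ 2) (ε * (δ * Real.sqrt δ)) = ε * (δ * Real.sqrt δ) := by
        apply min_eq_right
        have : ε * Real.sqrt δ ≤ δ := by nlinarith
        nlinarith
      rw [hF] at hA
      have hlog : |Real.log (ε / Real.sqrt δ)| = Real.log (Real.sqrt δ / ε) := by
        rw [← inv_div, Real.log_inv, abs_neg, abs_of_nonneg]
        apply Real.log_nonneg
        rw [le_div_iff₀ hε]
        linarith
      have hmin : min (δ ^ 2) (ε * (δ * Real.sqrt δ) * (|Real.log (ε / Real.sqrt δ)| + 1)) ≤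
          ε * (δ * Real.sqrt δ) * (|Real.log (ε / Real.sqrt δ)| + 1) := min_le_right _ _
      rw [hlog] at hmin ⊢
      have hF0 : 0 ≤ ε * (δ * Real.sqrt δ) := by positivity
      nlinarith
    · have hF : min (δ ^ 2) (ε * (δ * Real.sqrt δ)) = δ ^ 2 := by
        apply min_eq_left
        have : δ ≤ ε * Real.sqrt δ := by nlinarith
        nlinarith
      rw [hF] at hA
      have : min (δ ^ 2) (ε * (δ * Real.sqrt δ) * (|Real.log (ε / Real.sqrt δ)| + 1)) ≤ δ ^ 2 :=
        min_le_left _ _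
      nlinarith [sq_nonneg δ]
end
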